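/- arXiv:1612.08100 — 2 statements merged into one kernel-verified Lean document; each statement's English description precedes it below -/
import Mathlib

section
/- Let U be an N × N random unitary matrix distributed according to Haar measure on U(N). For every θ ∈ [0, 2π], the variance of the eigenvalue counting function satisfies Var(𝒩_θ) ≤ log(eN). -/
open MeasureTheory Real Filter

noncomputable section

/-- The Borel σ-algebra on the unitary group `U(N)`. -/
instance (N : ℕ) : MeasurableSpace (Matrix.unitaryGroup (Fin N) ℂ) := borel _

instance (N : ℕ) : BorelSpace (Matrix.unitaryGroup (Fin N) ℂ) := ⟨rfl⟩

/-- The eigenvalue angles (in `[0, 2π)`, with multiplicity) of a unitary matrix `U`: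
the arguments of the roots of the characteristic polynomial, shifted to lie in `[0, 2π)`. -/
def eigenAngles (N : ℕ) (U : Matrix.unitaryGroup (Fin N) ℂ) : Multiset ℝ :=
  ((U : Matrix (Fin N) (Fin N) ℂ).charpoly.roots).map
    (fun z => if 0 ≤ Complex.arg z then Complex.arg z else Complex.arg z + 2 * π)

open Classical in
/-- `𝒩_A`: the number of eigenvalue angles of `U` lying in the set `A`. -/
def countAngles (N : ℕ) (U : Matrix.unitaryGroup (Fin N) ℂ) (A : Set ℝ) : ℕ :=
  Multiset.card ((eigenAngles N U).filter (· ∈ A))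

/-- `𝒩_θ`: the number of eigenvalue angles of `U` in `[0, θ]`. -/
def countFun (N : ℕ) (U : Matrix.unitaryGroup (Fin N) ℂ) (θ : ℝ) : ℕ :=
  countAngles N U (Set.Icc 0 θ)

/-- The Kolmogorov distance between the empirical spectral measure of `U` and the
uniform measure on the circle: `sup_{0 ≤ θ < 2π} |𝒩_θ/N - θ/(2π)|`. -/
def dK (N : ℕ) (U : Matrix.unitaryGroup (Fin N) ℂ) : ℝ :=
  ⨆ θ : Set.Ico (0:ℝ) (2 * π), |(countFun N U θ : ℝ) / N - (θ : ℝ) / (2 * π)|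

/-- `max_{1 ≤ k ≤ N} |𝒩_{2πk/N} - k|`. -/
def maxDev (N : ℕ) (U : Matrix.unitaryGroup (Fin N) ℂ) : ℝ :=
  ⨆ k : (Finset.Icc 1 N : Finset ℕ), |(countFun N U (2 * π * (k : ℕ) / N) : ℝ) - ((k : ℕ) : ℝ)|

end

/-!
Off its endpoints, the indicator function of the arc `[0, θ]`, minus its mean, is `1 / π` times the
imaginary part of `∑ m ≥ 1, (1 - exp (-i m θ)) / m * z ^ m`. By rotation invariance all points of
the unit circle are eigenvalues of `U` with the same probability, which is `0` since `U` has
finitely many eigenvalues; so `𝒩_θ - N θ / (2 π)` is almost surely `1 / π` times the imaginary part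
of `∑ m ≥ 1, (1 - exp (-i m θ)) / m * trace (U ^ m)`. Invariance under scalar matrices makes the
traces of different powers orthogonal, and Fatou's lemma bounds the variance by
`2 / π ^ 2 * ∑ m ≥ 1, 𝔼 |trace (U ^ m)| ^ 2 / m ^ 2`.

In place of `𝔼 |trace (U ^ m)| ^ 2 = min m N`, which takes the orthonormality of Schur functions,
the estimate `(|N - m| + 1) * 𝔼 |trace (U ^ m)| ^ 2 ≤ m * N` is enough. Here `trace (U ^ m)` is an
alternating sum of the Schur functions of the hooks `(m - r, 1 ^ r)` with `r < min m N`. They are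
eigenfunctions of the Laplacian of the unitary group with the distinct eigenvalues
`m * (N + m - 1 - 2 * r)`, hence orthogonal, and these eigenvalues are at least
`m * (|N - m| + 1)`. On the other hand the gradient of `trace (U ^ m)` is `m * U ^ m`, so that its
Dirichlet energy is `m ^ 2 * N`, and the Dirichlet energy is also the sum of the squared norms of
the hook components weighted by their eigenvalues. Finally
`∑ m ≥ 1, N / (m * (|N - m| + 1)) ≤ 3 * H N` for the harmonic numbers `H N ≤ 1 + log N`, and
`6 ≤ π ^ 2`.
-/

noncomputable section

section NewtonSeries

open PowerSeries

variable {𝕜 : Type*} [Field 𝕜]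

/-- The coefficients `y 0 = 1`, `(k + 1) * y (k + 1) = ε * ∑ j ≤ k, y j * p (k + 1 - j)` determined
by a sequence `p` of power sums through Newton's identities. For `ε = 1` they are the complete
homogeneous symmetric functions `h k`, for `ε = -1` the signed elementary ones `(-1) ^ k * e k`. -/
def newtonCoeff (ε : 𝕜) (p : ℕ → 𝕜) : ℕ → 𝕜
  | 0 => 1
  | k + 1 => ε / (k + 1) * ∑ j : Fin (k + 1), newtonCoeff ε p j * p (k + 1 - j)

/-- The generating function of `newtonCoeff ε p`. -/
def newtonSeries (ε : 𝕜) (p : ℕ → 𝕜) : 𝕜⟦X⟧ :=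
  mk (newtonCoeff ε p)

/-- The generating function of the power sums `p k` with `k ≥ 1`; the value `p 0` is discarded. -/
def powerSumSeries (p : ℕ → 𝕜) : 𝕜⟦X⟧ :=
  X * mk fun k => p (k + 1)

@[simp]
lemma coeff_newtonSeries (ε : 𝕜) (p : ℕ → 𝕜) (k : ℕ) :
    coeff k (newtonSeries ε p) = newtonCoeff ε p k :=
  coeff_mk _ _

@[simp]
lemma newtonCoeff_zero (ε : 𝕜) (p : ℕ → 𝕜) : newtonCoeff ε p 0 = 1 := by
  rw [newtonCoeff]

@[simp]
lemma constantCoeff_newtonSeries (ε : 𝕜) (p : ℕ → 𝕜) : constantCoeff (newtonSeries ε p) = 1 := by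
  rw [← coeff_zero_eq_constantCoeff_apply, coeff_newtonSeries, newtonCoeff_zero]

lemma coeff_X_mul_derivative {R : Type*} [CommSemiring R] (F : R⟦X⟧) (k : ℕ) :
    coeff k (X * d⁄dX R F) = k * coeff k F := by
  cases k with
  | zero => simp
  | succ k => simp [coeff_succ_X_mul, coeff_derivative, mul_comm]

lemma coeff_mul_powerSumSeries (F : 𝕜⟦X⟧) (p : ℕ → 𝕜) (k : ℕ) :
    coeff k (F * powerSumSeries p) = ∑ j ∈ Finset.range k, coeff j F * p (k - j) := by
  cases k with
  | zero => simp [powerSumSeries]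
  | succ k =>
    rw [powerSumSeries, mul_left_comm, coeff_succ_X_mul, coeff_mul,
      Finset.Nat.sum_antidiagonal_eq_sum_range_succ_mk]
    refine Finset.sum_congr rfl fun j hj => ?_
    rw [coeff_mk, Nat.sub_add_comm (Finset.mem_range_succ_iff.1 hj)]

lemma coeff_powerSumSeries {p : ℕ → 𝕜} (hp : p 0 = 0) (k : ℕ) :
    coeff k (powerSumSeries p) = p k := by
  cases k with
  | zero => simp [powerSumSeries, hp]
  | succ k => rw [powerSumSeries, coeff_succ_X_mul, coeff_mk]

variable [CharZero 𝕜]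

lemma X_mul_derivative_newtonSeries (ε : 𝕜) (p : ℕ → 𝕜) :
    X * d⁄dX 𝕜 (newtonSeries ε p) = C ε * (newtonSeries ε p * powerSumSeries p) := by
  ext k
  rw [coeff_X_mul_derivative, coeff_newtonSeries, coeff_C_mul, coeff_mul_powerSumSeries]
  cases k with
  | zero => simp
  | succ k =>
    simp only [coeff_newtonSeries, newtonCoeff, Finset.sum_range]
    push_cast
    field_simp

lemma eq_newtonSeries {ε : 𝕜} {p : ℕ → 𝕜} {F : 𝕜⟦X⟧} (hF₀ : constantCoeff F = 1)
    (hF : X * d⁄dX 𝕜 F = C ε * (F * powerSumSeries p)) : F = newtonSeries ε p := by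
  ext k
  induction k using Nat.strong_induction_on with
  | h k ih =>
    rcases Nat.eq_zero_or_pos k with rfl | hk
    · simpa using hF₀
    · have hF' := congrArg (coeff k) hF
      have hy := congrArg (coeff k) (X_mul_derivative_newtonSeries ε p)
      rw [coeff_X_mul_derivative, coeff_C_mul, coeff_mul_powerSumSeries] at hF' hy
      rw [Finset.sum_congr rfl fun j hj => by rw [ih j (Finset.mem_range.1 hj)], ← hy] at hF'
      exact mul_left_cancel₀ (Nat.cast_ne_zero.2 hk.ne') hF'

lemma newtonSeries_add (ε : 𝕜) (p q : ℕ → 𝕜) :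
    newtonSeries ε (p + q) = newtonSeries ε p * newtonSeries ε q := by
  have hadd : powerSumSeries (p + q) = powerSumSeries p + powerSumSeries q := by
    rw [powerSumSeries, powerSumSeries, powerSumSeries, ← mul_add]
    rfl
  refine (eq_newtonSeries ?_ ?_).symm
  · simp
  · rw [Derivation.leibniz, hadd, smul_eq_mul, smul_eq_mul]
    linear_combination newtonSeries ε p * X_mul_derivative_newtonSeries ε q +
      newtonSeries ε q * X_mul_derivative_newtonSeries ε p

lemma newtonSeries_neg_one_pow (z : 𝕜) :
    newtonSeries (-1) (fun k => z ^ k) = 1 - C z * X := by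
  refine (eq_newtonSeries (by simp) ?_).symm
  have hgeom : PowerSeries.mk (fun k => z ^ (k + 1)) * (1 - C z * X) = C z := by
    ext k
    cases k with
    | zero => simp [mul_sub]
    | succ k => simp [mul_sub, ← mul_assoc, coeff_succ_mul_X, pow_succ]
  rw [powerSumSeries]
  simp only [map_sub, Derivation.leibniz, derivative_X, derivative_C, derivative_one, smul_eq_mul,
    map_neg, map_one]
  linear_combination X * hgeom

lemma newtonSeries_neg_one_multiset (s : Multiset 𝕜) :
    newtonSeries (-1) (fun k => (s.map (· ^ k)).sum) = (s.map fun z => 1 - C z * X).prod := by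
  induction s using Multiset.induction_on with
  | empty =>
    refine (eq_newtonSeries (by simp) ?_).symm
    have hzero : powerSumSeries (fun _ => (0 : 𝕜)) = 0 := mul_zero X
    simp [hzero]
  | cons z s ih =>
    rw [Multiset.map_cons, Multiset.prod_cons, ← ih, ← newtonSeries_neg_one_pow, ← newtonSeries_add]
    simp [Pi.add_def]

lemma coeff_prod_one_sub_C_mul_X_eq_zero {R : Type*} [CommRing R] (s : Multiset R) {k : ℕ}
    (hk : s.card < k) : coeff k (s.map fun z => 1 - C z * X).prod = 0 := by
  induction s using Multiset.induction_on generalizing k with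
  | empty => simp [coeff_one, (show k ≠ 0 by simpa using hk.ne')]
  | cons z s ih =>
    rw [Multiset.card_cons] at hk
    obtain ⟨k, rfl⟩ := Nat.exists_eq_add_one_of_ne_zero (Nat.ne_zero_of_lt hk)
    rw [Multiset.map_cons, Multiset.prod_cons, sub_mul, one_mul, mul_assoc, map_sub, coeff_C_mul,
      coeff_succ_X_mul, ih (by omega), ih (by omega), mul_zero, sub_zero]

lemma newtonCoeff_neg_one_multiset_eq_zero (s : Multiset 𝕜) {k : ℕ} (hk : s.card < k) :
    newtonCoeff (-1) (fun k => (s.map (· ^ k)).sum) k = 0 := by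
  rw [← coeff_newtonSeries, newtonSeries_neg_one_multiset, coeff_prod_one_sub_C_mul_X_eq_zero s hk]

end NewtonSeries

section TracePow

open Matrix Polynomial

variable {n K : Type*} [Fintype n] [DecidableEq n] [Field K] [IsAlgClosed K]

lemma charpoly_eq_prod_roots (M : Matrix n n K) :
    M.charpoly = (M.charpoly.roots.map fun z => X - C z).prod :=
  (IsAlgClosed.splits M.charpoly).eq_prod_roots_of_monic M.charpoly_monic

lemma card_roots_charpoly (M : Matrix n n K) : M.charpoly.roots.card = Fintype.card n := by
  rw [← (IsAlgClosed.splits M.charpoly).natDegree_eq_card_roots, charpoly_natDegree_eq_dim]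

lemma det_scalar_sub_eq_prod_roots (M : Matrix n n K) (μ : K) :
    (scalar n μ - M).det = (M.charpoly.roots.map fun z => μ - z).prod := by
  rw [← eval_charpoly, charpoly_eq_prod_roots, eval_multiset_prod, Multiset.map_map,
    ← charpoly_eq_prod_roots]
  simp

lemma det_aeval_eq_prod_roots (M : Matrix n n K) (q : K[X]) :
    (aeval M q).det = (M.charpoly.roots.map fun z => q.eval z).prod := by
  have hlin (μ : K) : (aeval M (C μ - X)).det =
      (M.charpoly.roots.map fun z => (C μ - X).eval z).prod := by
    simpa [algebraMap_eq_diagonal, Pi.algebraMap_def] using det_scalar_sub_eq_prod_roots M μ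
  have hconst (a : K) :
      (aeval M (C a)).det = (M.charpoly.roots.map fun z => (C a).eval z).prod := by
    simp [algebraMap_eq_diagonal, card_roots_charpoly]
  have hprod (s : Multiset K) : (aeval M (s.map fun μ => X - C μ).prod).det =
      (M.charpoly.roots.map fun z => (s.map fun μ => X - C μ).prod.eval z).prod := by
    induction s using Multiset.induction_on with
    | empty => simp
    | cons μ s ih =>
      have hneg : X - C μ = C (-1) * (C μ - X) := by simp
      simp only [Multiset.map_cons, Multiset.prod_cons, hneg, map_mul, det_mul, hlin, hconst, ih,
        eval_mul, Multiset.prod_map_mul]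
  rw [(IsAlgClosed.splits q).eq_prod_roots]
  simp only [map_mul, det_mul, hprod, hconst, eval_mul, Multiset.prod_map_mul]

lemma charpoly_pow_eq_prod_roots (M : Matrix n n K) (k : ℕ) :
    (M ^ k).charpoly = ((M.charpoly.roots.map (· ^ k)).map fun z => X - C z).prod := by
  refine Polynomial.funext fun μ => ?_
  have hdet := det_aeval_eq_prod_roots M (C μ - X ^ k)
  simp only [map_sub, aeval_C, map_pow, aeval_X, eval_sub, eval_C, eval_pow, eval_X] at hdet
  rw [eval_charpoly, eval_multiset_prod, Multiset.map_map, Multiset.map_map]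
  simpa [algebraMap_eq_diagonal, Pi.algebraMap_def] using hdet

lemma trace_pow_eq_sum_roots (M : Matrix n n K) (k : ℕ) :
    (M ^ k).trace = (M.charpoly.roots.map (· ^ k)).sum := by
  rw [trace_eq_sum_roots_charpoly, charpoly_pow_eq_prod_roots, roots_multiset_prod_X_sub_C]

end TracePow

section MatrixNewton

open Matrix PowerSeries

lemma trace_mul_eq_sum {n R : Type*} [Fintype n] [NonUnitalNonAssocSemiring R]
    (A B : Matrix n n R) : (A * B).trace = ∑ i, ∑ j, A i j * B j i :=
  rfl

variable {n 𝕜 : Type*} [Fintype n] [DecidableEq n] [Field 𝕜]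

/-- The function `newtonCoeff ε` evaluated on the power sums `trace (M ^ j)`: the complete
homogeneous (`ε = 1`) or signed elementary (`ε = -1`) symmetric function of degree `k` of the
eigenvalues of `M`. -/
def newtonTrace (ε : 𝕜) (k : ℕ) (M : Matrix n n 𝕜) : 𝕜 :=
  newtonCoeff ε (fun j => (M ^ j).trace) k

/-- The matrices produced by the Faddeev–LeVerrier recursion. Up to the factor `ε` this is the
gradient of `newtonTrace ε k` in the sense of `HasLeftGradient`. -/
def newtonMatrix (ε : 𝕜) (k : ℕ) (M : Matrix n n 𝕜) : Matrix n n 𝕜 :=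
  ∑ j ∈ Finset.range k, newtonTrace ε j M • M ^ (k - j)

/-- The matrix `∑ k ≥ 1, M ^ k * X ^ k` with power series entries. -/
def powSeries (M : Matrix n n 𝕜) : Matrix n n 𝕜⟦X⟧ :=
  of fun i j => powerSumSeries fun k => (M ^ k) i j

lemma powSeries_apply (M : Matrix n n 𝕜) (i j : n) :
    powSeries M i j = powerSumSeries fun k => (M ^ k) i j :=
  rfl

lemma newtonTrace_zero (ε : 𝕜) (M : Matrix n n 𝕜) : newtonTrace ε 0 M = 1 :=
  newtonCoeff_zero _ _

lemma newtonMatrix_zero (ε : 𝕜) (M : Matrix n n 𝕜) : newtonMatrix ε 0 M = 0 :=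
  Finset.sum_range_zero _

lemma newtonMatrix_succ (ε : 𝕜) (k : ℕ) (M : Matrix n n 𝕜) :
    newtonMatrix ε (k + 1) M = M * newtonMatrix ε k M + newtonTrace ε k M • M := by
  rw [newtonMatrix, Finset.sum_range_succ, newtonMatrix, Finset.mul_sum, Nat.add_sub_cancel_left,
    pow_one]
  congr 1
  refine Finset.sum_congr rfl fun j hj => ?_
  rw [Nat.sub_add_comm (Finset.mem_range.1 hj).le, pow_succ', mul_smul_comm]

lemma commute_newtonMatrix (ε : 𝕜) (k : ℕ) (M : Matrix n n 𝕜) :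
    Commute M (newtonMatrix ε k M) :=
  Commute.sum_right _ _ _ fun _ _ => ((Commute.refl M).pow_right _).smul_right _

lemma trace_newtonMatrix (ε : 𝕜) (k : ℕ) (M : Matrix n n 𝕜) :
    (newtonMatrix ε k M).trace =
      ∑ j ∈ Finset.range k, newtonTrace ε j M * (M ^ (k - j)).trace := by
  simp [newtonMatrix, trace_sum, trace_smul]

lemma coeff_newtonSeries_trace (ε : 𝕜) (k : ℕ) (M : Matrix n n 𝕜) :
    coeff k (newtonSeries ε fun l => (M ^ l).trace) = newtonTrace ε k M :=
  coeff_newtonSeries _ _ _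

lemma coeff_newtonSeries_mul_powSeries (ε : 𝕜) (k : ℕ) (M : Matrix n n 𝕜) (i j : n) :
    coeff k (newtonSeries ε (fun l => (M ^ l).trace) * powSeries M i j) =
      newtonMatrix ε k M i j := by
  simp only [powSeries, of_apply, coeff_mul_powerSumSeries, coeff_newtonSeries_trace, newtonMatrix,
    Matrix.sum_apply, Matrix.smul_apply, smul_eq_mul]

lemma coeff_newtonSeries_mul_powerSumSeries (ε : 𝕜) (k : ℕ) (M : Matrix n n 𝕜) :
    coeff k (newtonSeries ε (fun l => (M ^ l).trace) * powerSumSeries fun l => (M ^ l).trace) =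
      (newtonMatrix ε k M).trace := by
  simp only [coeff_mul_powerSumSeries, coeff_newtonSeries_trace, trace_newtonMatrix]

lemma trace_powSeries (M : Matrix n n 𝕜) :
    (powSeries M).trace = powerSumSeries fun k => (M ^ k).trace := by
  ext k
  cases k <;> simp [powSeries, trace, powerSumSeries, coeff_succ_X_mul]

lemma X_mul_derivative_powSeries (M : Matrix n n 𝕜) (i j : n) :
    X * d⁄dX 𝕜 (powSeries M i j) = powSeries M i j + (powSeries M * powSeries M) i j := by
  ext k
  cases k with
  | zero => simp [powSeries, powerSumSeries, mul_apply]
  | succ k =>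
    have hsq : coeff (k + 1) ((powSeries M * powSeries M) i j) = k * (M ^ (k + 1)) i j := by
      simp only [mul_apply, map_sum, powSeries, of_apply, coeff_mul_powerSumSeries]
      rw [Finset.sum_comm, Finset.sum_range_succ']
      simp only [powerSumSeries, coeff_succ_X_mul, coeff_mk, coeff_zero_X_mul, zero_mul,
        Finset.sum_const_zero, add_zero, ← mul_apply]
      rw [Finset.sum_congr rfl fun l hl => by
        rw [← pow_add, Nat.add_sub_cancel' (Nat.succ_le_succ (Finset.mem_range.1 hl).le)]]
      simp
    rw [coeff_X_mul_derivative, map_add, hsq, powSeries, of_apply, powerSumSeries,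
      coeff_succ_X_mul, coeff_mk]
    push_cast
    ring

lemma trace_powSeries_mul_self (M : Matrix n n 𝕜) :
    (powSeries M * powSeries M).trace =
      X * d⁄dX 𝕜 (powerSumSeries fun k => (M ^ k).trace) -
        powerSumSeries fun k => (M ^ k).trace := by
  rw [← trace_powSeries, trace, trace, map_sum, Finset.mul_sum, ← Finset.sum_sub_distrib]
  exact Finset.sum_congr rfl fun i _ =>
    eq_sub_of_add_eq' (X_mul_derivative_powSeries M i i).symm

lemma sum_trace_newtonMatrix_mul_pow (ε : 𝕜) (k : ℕ) (M : Matrix n n 𝕜) :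
    ∑ j ∈ Finset.range k, (newtonMatrix ε j M * M ^ (k - j)).trace =
      coeff k (newtonSeries ε (fun j => (M ^ j).trace) * (powSeries M * powSeries M).trace) := by
  simp only [trace_mul_eq_sum, Finset.mul_sum, map_sum, ← mul_assoc]
  rw [Finset.sum_comm]
  refine Finset.sum_congr rfl fun a _ => ?_
  rw [Finset.sum_comm]
  refine Finset.sum_congr rfl fun b _ => ?_
  rw [powSeries_apply M b a, coeff_mul_powerSumSeries]
  exact Finset.sum_congr rfl fun j _ => by rw [coeff_newtonSeries_mul_powSeries]

lemma sum_newtonTrace_mul_sum_trace (ε : 𝕜) (k : ℕ) (M : Matrix n n 𝕜) :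
    ∑ j ∈ Finset.range k, newtonTrace ε j M *
        ∑ l ∈ Finset.range (k - j), (M ^ l).trace * (M ^ (k - j - l)).trace =
      coeff k (newtonSeries ε (fun j => (M ^ j).trace) *
        ((C (Fintype.card n : 𝕜) + powerSumSeries fun j => (M ^ j).trace) *
          powerSumSeries fun j => (M ^ j).trace)) := by
  have htrace (l : ℕ) :
      coeff l (C (Fintype.card n : 𝕜) + powerSumSeries fun j => (M ^ j).trace) = (M ^ l).trace := by
    rw [map_add, coeff_C]
    cases l <;> simp [powerSumSeries, coeff_succ_X_mul]
  have hconv : (C (Fintype.card n : 𝕜) + powerSumSeries fun j => (M ^ j).trace) *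
        powerSumSeries (fun j => (M ^ j).trace) =
      powerSumSeries fun k => ∑ l ∈ Finset.range k, (M ^ l).trace * (M ^ (k - l)).trace := by
    ext k
    rw [coeff_powerSumSeries (Finset.sum_range_zero _), coeff_mul_powerSumSeries]
    simp only [htrace]
  rw [hconv, coeff_mul_powerSumSeries]
  simp only [coeff_newtonSeries_trace]

variable [CharZero 𝕜]

lemma mul_newtonTrace (ε : 𝕜) (k : ℕ) (M : Matrix n n 𝕜) :
    k * newtonTrace ε k M = ε * (newtonMatrix ε k M).trace := by
  have h := congrArg (coeff k) (X_mul_derivative_newtonSeries ε fun j => (M ^ j).trace)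
  rwa [coeff_X_mul_derivative, coeff_C_mul, coeff_newtonSeries_mul_powerSumSeries,
    coeff_newtonSeries_trace] at h

lemma smul_newtonMatrix (ε : 𝕜) (k : ℕ) (M : Matrix n n 𝕜) :
    (k : 𝕜) • newtonMatrix ε k M = ∑ j ∈ Finset.range k,
      (newtonTrace ε j M • ((k - j : ℕ) : 𝕜) • M ^ (k - j) +
        (M ^ (k - j)).trace • ε • newtonMatrix ε j M) := by
  ext a b
  set Y := newtonSeries ε fun j => (M ^ j).trace with hY
  have hpow : X * d⁄dX 𝕜 (powSeries M a b) = powerSumSeries fun j => j * (M ^ j) a b := by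
    ext j
    rw [coeff_powerSumSeries (by simp), coeff_X_mul_derivative]
    cases j <;> simp [powSeries, powerSumSeries, coeff_succ_X_mul]
  have hprod : X * d⁄dX 𝕜 (Y * powSeries M a b) =
      Y * (powerSumSeries fun j => j * (M ^ j) a b) +
        C ε * (Y * powSeries M a b * powerSumSeries fun j => (M ^ j).trace) := by
    rw [Derivation.leibniz, smul_eq_mul, smul_eq_mul]
    linear_combination Y * hpow +
      powSeries M a b * X_mul_derivative_newtonSeries ε fun j => (M ^ j).trace
  have hcoeff := congrArg (coeff k) hprod
  simp only [coeff_X_mul_derivative, map_add, coeff_C_mul, coeff_mul_powerSumSeries, hY,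
    coeff_newtonSeries_mul_powSeries, coeff_newtonSeries_trace] at hcoeff
  simp only [Matrix.smul_apply, Matrix.sum_apply, Matrix.add_apply, smul_eq_mul, hcoeff,
    Finset.sum_add_distrib, Finset.mul_sum]
  congr 1
  exact Finset.sum_congr rfl fun j _ => by ring

/-- The left-hand side is the divergence of `newtonMatrix ε k`. -/
lemma divergence_newtonMatrix {ε : 𝕜} (hε : ε * ε = 1) (k : ℕ) (M : Matrix n n 𝕜) :
    ∑ j ∈ Finset.range k,
        (newtonTrace ε j M * ∑ l ∈ Finset.range (k - j), (M ^ l).trace * (M ^ (k - j - l)).trace +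
          ε * (newtonMatrix ε j M * M ^ (k - j)).trace) =
      (Fintype.card n + ε * (k - 1)) * (newtonMatrix ε k M).trace := by
  set P := powerSumSeries fun j => (M ^ j).trace
  set Y := newtonSeries ε fun j => (M ^ j).trace
  have hε' : C ε * C ε = (1 : 𝕜⟦X⟧) := by rw [← map_mul, hε, map_one]
  have hseries : Y * ((C (Fintype.card n : 𝕜) + P) * P) + C ε * (Y * (X * d⁄dX 𝕜 P - P)) =
      C (Fintype.card n : 𝕜) * (Y * P) + C ε * (X * d⁄dX 𝕜 (Y * P) - Y * P) := by
    rw [Derivation.leibniz, smul_eq_mul, smul_eq_mul]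
    linear_combination -Y * P * P * hε' -
      C ε * P * X_mul_derivative_newtonSeries ε fun j => (M ^ j).trace
  rw [Finset.sum_add_distrib, ← Finset.mul_sum, sum_newtonTrace_mul_sum_trace,
    sum_trace_newtonMatrix_mul_pow, trace_powSeries_mul_self, ← coeff_C_mul, ← map_add, hseries]
  simp only [map_add, map_sub, coeff_C_mul, coeff_X_mul_derivative, Y, P,
    coeff_newtonSeries_mul_powerSumSeries]
  ring

end MatrixNewton

section Hook

open Matrix PowerSeries

variable {n 𝕜 : Type*} [Fintype n] [DecidableEq n] [Field 𝕜]

/-- The product `(-1) ^ j * e j * h (m - j)` of symmetric functions of the eigenvalues of `M`. -/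
def hookTerm (m j : ℕ) (M : Matrix n n 𝕜) : 𝕜 :=
  newtonTrace (-1) j M * newtonTrace 1 (m - j) M

/-- `(-1) ^ r` times the Schur function of the hook partition `(m - r, 1 ^ r)`, evaluated at the
eigenvalues of `M`. -/
def hookSchur (m r : ℕ) (M : Matrix n n 𝕜) : 𝕜 :=
  ∑ j ∈ Finset.range (r + 1), hookTerm m j M

lemma hookSchur_zero (m : ℕ) (M : Matrix n n 𝕜) : hookSchur m 0 M = hookTerm m 0 M :=
  Finset.sum_range_one _

lemma hookSchur_succ (m r : ℕ) (M : Matrix n n 𝕜) :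
    hookSchur m (r + 1) M = hookSchur m r M + hookTerm m (r + 1) M :=
  Finset.sum_range_succ _ _

lemma sum_hookSchur_eq_sum_hookTerm (m k : ℕ) (M : Matrix n n 𝕜) :
    ∑ r ∈ Finset.range k, hookSchur m r M =
      ∑ j ∈ Finset.range k, ((k : 𝕜) - j) * hookTerm m j M := by
  induction k with
  | zero => simp
  | succ k ih =>
    rw [Finset.sum_range_succ, ih, Finset.sum_range_succ, hookSchur, Finset.sum_range_succ,
      ← add_assoc, ← Finset.sum_add_distrib]
    push_cast
    congr 1
    · exact Finset.sum_congr rfl fun j _ => by ring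
    · ring

variable [CharZero 𝕜]

lemma newtonSeries_neg_one_mul_newtonSeries_one (p : ℕ → 𝕜) :
    newtonSeries (-1) p * newtonSeries 1 p = 1 := by
  have hzero : (1 : 𝕜⟦X⟧) = newtonSeries 0 p := eq_newtonSeries (by simp) (by simp)
  rw [hzero]
  have hC : C (1 : 𝕜) + C (-1) = 0 := by rw [← map_add, add_neg_cancel, map_zero]
  refine eq_newtonSeries (by simp) ?_
  rw [Derivation.leibniz, smul_eq_mul, smul_eq_mul, map_zero, zero_mul]
  linear_combination newtonSeries (-1) p * X_mul_derivative_newtonSeries 1 p +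
    newtonSeries 1 p * X_mul_derivative_newtonSeries (-1) p +
    newtonSeries (-1) p * newtonSeries 1 p * powerSumSeries p * hC

lemma hookSchur_self_eq_zero {m : ℕ} (hm : m ≠ 0) (M : Matrix n n 𝕜) : hookSchur m m M = 0 := by
  have h := congrArg (coeff m) (newtonSeries_neg_one_mul_newtonSeries_one fun j => (M ^ j).trace)
  rw [coeff_mul, Finset.Nat.sum_antidiagonal_eq_sum_range_succ_mk, coeff_one, if_neg hm] at h
  simpa only [coeff_newtonSeries_trace, hookSchur, hookTerm] using h

lemma trace_pow_eq_sum_hookSchur {m : ℕ} (hm : m ≠ 0) (M : Matrix n n 𝕜) :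
    (M ^ m).trace = ∑ r ∈ Finset.range m, hookSchur m r M := by
  set p : ℕ → 𝕜 := fun j => (M ^ j).trace with hp
  have hseries : newtonSeries (-1) p * (X * d⁄dX 𝕜 (newtonSeries 1 p)) = powerSumSeries p := by
    rw [X_mul_derivative_newtonSeries, map_one, one_mul, ← mul_assoc,
      newtonSeries_neg_one_mul_newtonSeries_one, one_mul]
  have hcoeff : coeff m (powerSumSeries p) = (M ^ m).trace := by
    obtain ⟨m, rfl⟩ := Nat.exists_eq_succ_of_ne_zero hm
    simp [powerSumSeries, coeff_succ_X_mul, hp]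
  rw [← hcoeff, ← hseries, sum_hookSchur_eq_sum_hookTerm, coeff_mul,
    Finset.Nat.sum_antidiagonal_eq_sum_range_succ_mk, Finset.sum_range_succ]
  simp only [coeff_X_mul_derivative, Nat.sub_self, Nat.cast_zero, zero_mul, mul_zero, add_zero]
  refine Finset.sum_congr rfl fun j hj => ?_
  rw [hookTerm, coeff_newtonSeries_trace, coeff_newtonSeries_trace,
    Nat.cast_sub (Finset.mem_range.1 hj).le]
  ring

lemma hookSchur_eq_zero [IsAlgClosed 𝕜] {m r : ℕ} (hm : m ≠ 0) (hr : Fintype.card n ≤ r)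
    (hrm : r ≤ m) (M : Matrix n n 𝕜) : hookSchur m r M = 0 := by
  have hterm {j : ℕ} (hj : r < j) : hookTerm m j M = 0 := by
    rw [hookTerm, newtonTrace, funext (trace_pow_eq_sum_roots M),
      newtonCoeff_neg_one_multiset_eq_zero _ (by rw [card_roots_charpoly]; omega), zero_mul]
  rw [← hookSchur_self_eq_zero hm M, hookSchur, hookSchur]
  exact Finset.sum_subset (Finset.range_mono (by omega)) fun j _ hj =>
    hterm (by simpa using hj)

lemma trace_pow_eq_sum_hookSchur_min [IsAlgClosed 𝕜] {m : ℕ} (hm : m ≠ 0) (M : Matrix n n 𝕜) :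
    (M ^ m).trace = ∑ r ∈ Finset.range (min m (Fintype.card n)), hookSchur m r M := by
  rw [trace_pow_eq_sum_hookSchur hm]
  refine (Finset.sum_subset (Finset.range_mono (min_le_left _ _)) fun r hr hr' => ?_).symm
  rw [Finset.mem_range] at hr hr'
  exact hookSchur_eq_zero hm (by omega) hr.le M

lemma trace_newtonMatrix_mul_newtonMatrix_succ (r s : ℕ) (M : Matrix n n 𝕜) :
    (newtonMatrix (-1) (r + 1) M * newtonMatrix 1 s M).trace =
      (newtonMatrix (-1) r M * newtonMatrix 1 (s + 1) M).trace +
        (s + 1) * (newtonTrace (-1) r M * newtonTrace 1 (s + 1) M) +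
        (r + 1) * (newtonTrace (-1) (r + 1) M * newtonTrace 1 s M) := by
  have htel : newtonMatrix (-1) (r + 1) M * newtonMatrix 1 s M =
      newtonMatrix (-1) r M * newtonMatrix 1 (s + 1) M +
        newtonTrace (-1) r M • newtonMatrix 1 (s + 1) M -
        newtonTrace 1 s M • newtonMatrix (-1) (r + 1) M := by
    simp only [newtonMatrix_succ, smul_add, smul_smul, add_mul, mul_add, smul_mul_assoc,
      mul_smul_comm]
    rw [← mul_assoc (newtonMatrix (-1) r M), ← (commute_newtonMatrix (-1) r M).eq,
      mul_comm (newtonTrace 1 s M)]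
    abel
  have h₁ := mul_newtonTrace 1 (s + 1) M
  have h₂ := mul_newtonTrace (-1) (r + 1) M
  rw [htel, trace_sub, trace_add, trace_smul, trace_smul, smul_eq_mul, smul_eq_mul]
  push_cast at h₁ h₂
  linear_combination (-newtonTrace (-1) r M) * h₁ - newtonTrace 1 s M * h₂

lemma trace_newtonMatrix_mul_newtonMatrix {m r : ℕ} (hr : r ≤ m) (M : Matrix n n 𝕜) :
    (newtonMatrix (-1) r M * newtonMatrix 1 (m - r) M).trace =
      m * hookSchur m r M - (m - r) * hookTerm m r M := by
  induction r with
  | zero => simp [newtonMatrix_zero, hookSchur_zero]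
  | succ r ih =>
    obtain ⟨s, rfl⟩ := Nat.exists_eq_add_of_le hr
    have hs : r + 1 + s - r = s + 1 := by omega
    have ih := ih (by omega)
    rw [hs] at ih
    rw [Nat.add_sub_cancel_left, trace_newtonMatrix_mul_newtonMatrix_succ, ih, hookSchur_succ,
      hookTerm, hookTerm, hs, Nat.add_sub_cancel_left]
    push_cast
    ring

end Hook

section LeftGradient

open Matrix

variable {n : Type*} [Fintype n] [DecidableEq n]

/-- `A` is the gradient of `f` for left translations: along the curve `t ↦ exp (t X) M` the function
`f` has initial velocity `trace (X * A M)`, for every direction `X`. -/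
structure HasLeftGradient (f : Matrix n n ℂ → ℂ) (A : Matrix n n ℂ → Matrix n n ℂ) : Prop where
  continuous : Continuous f
  continuous_gradient : Continuous A
  hasDerivAt (X M : Matrix n n ℂ) :
    HasDerivAt (fun t : ℝ => f (NormedSpace.exp (t • X) * M)) (X * A M).trace 0

/-- `A` is the gradient of `f` for left translations and `L` is the divergence of `A`, so that `L`
is `∑ i j, E i j (E j i f)` in terms of the derivatives along the matrix units. On unitary matrices
this is the Laplace–Beltrami operator up to sign and normalisation. -/
structure HasLeftLaplacian (f : Matrix n n ℂ → ℂ) (A : Matrix n n ℂ → Matrix n n ℂ)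
    (L : Matrix n n ℂ → ℂ) : Prop where
  hasLeftGradient : HasLeftGradient f A
  exists_divergence : ∃ B : n → n → Matrix n n ℂ → Matrix n n ℂ,
    (∀ i j, HasLeftGradient (fun M => A M i j) (B i j)) ∧ ∀ M, L M = ∑ i, ∑ j, B i j M j i

variable {f g : Matrix n n ℂ → ℂ} {A B : Matrix n n ℂ → Matrix n n ℂ} {L K : Matrix n n ℂ → ℂ}

namespace HasLeftGradient

lemma const (c : ℂ) : HasLeftGradient (n := n) (fun _ => c) (fun _ => 0) :=
  ⟨continuous_const, continuous_const, fun _ _ => by simpa using hasDerivAt_const 0 c⟩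

lemma add (hf : HasLeftGradient f A) (hg : HasLeftGradient g B) :
    HasLeftGradient (fun M => f M + g M) (fun M => A M + B M) :=
  ⟨hf.continuous.add hg.continuous, hf.continuous_gradient.add hg.continuous_gradient,
    fun X M => by
      rw [mul_add, trace_add]
      exact (hf.hasDerivAt X M).add (hg.hasDerivAt X M)⟩

lemma mul (hf : HasLeftGradient f A) (hg : HasLeftGradient g B) :
    HasLeftGradient (fun M => f M * g M) (fun M => f M • B M + g M • A M) :=
  ⟨hf.continuous.mul hg.continuous,
    (hf.continuous.smul hg.continuous_gradient).add (hg.continuous.smul hf.continuous_gradient),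
    fun X M => by
      have h := (hf.hasDerivAt X M).mul (hg.hasDerivAt X M)
      simp only [zero_smul, NormedSpace.exp_zero, one_mul] at h
      convert! h using 1
      simp [mul_add, mul_comm, add_comm]⟩

lemma const_mul (c : ℂ) (hf : HasLeftGradient f A) :
    HasLeftGradient (fun M => c * f M) (fun M => c • A M) := by
  simpa using (const c).mul hf

lemma sum {ι : Type*} (s : Finset ι) {f : ι → Matrix n n ℂ → ℂ}
    {A : ι → Matrix n n ℂ → Matrix n n ℂ} (h : ∀ i ∈ s, HasLeftGradient (f i) (A i)) :
    HasLeftGradient (fun M => ∑ i ∈ s, f i M) (fun M => ∑ i ∈ s, A i M) := by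
  classical
  induction s using Finset.induction_on with
  | empty => simpa using const 0
  | insert i s hi ih =>
    simp only [Finset.sum_insert hi]
    exact (h i (Finset.mem_insert_self i s)).add
      (ih fun j hj => h j (Finset.mem_insert_of_mem hj))

lemma unique (hA : HasLeftGradient f A) (hB : HasLeftGradient f B) : A = B :=
  funext fun M => ext_iff_trace_mul_left.mpr fun X =>
    (hA.hasDerivAt X M).unique (hB.hasDerivAt X M)

end HasLeftGradient

section TracePowGradient

open scoped Matrix.Norms.Operator in
lemma hasDerivAt_trace_mul_exp_smul_mul_pow (C X M : Matrix n n ℂ) (k : ℕ) :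
    HasDerivAt (fun t : ℝ => (C * (NormedSpace.exp (t • X) * M) ^ k).trace)
      (X * ∑ l ∈ Finset.range k, M ^ (k - l) * C * M ^ l).trace 0 := by
  have hexp : HasDerivAt (fun t : ℝ => NormedSpace.exp (t • X) * M) (X * M) 0 := by
    have h := (hasDerivAt_exp_smul_const' (𝕂 := ℝ) X 0).mul_const M
    rwa [zero_smul, NormedSpace.exp_zero, mul_one] at h
  have hpow := hexp.fun_pow' k
  simp only [zero_smul, NormedSpace.exp_zero, one_mul] at hpow
  refine ((traceLinearMap n ℝ ℂ).toContinuousLinearMap.hasFDerivAt.comp_hasDerivAt 0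
    (hpow.const_mul C)).congr_deriv ?_
  change (C * ∑ l ∈ Finset.range k, M ^ (k.pred - l) * (X * M) * M ^ l).trace = _
  rw [← Finset.sum_range_reflect, Finset.mul_sum, Finset.mul_sum, trace_sum, trace_sum]
  refine Finset.sum_congr rfl fun l hl => ?_
  have hlk := Finset.mem_range.mp hl
  have hpred : k.pred - (k - 1 - l) = l := by rw [Nat.pred_eq_sub_one]; omega
  have hsub : k - l = 1 + (k - 1 - l) := by omega
  rw [hpred, hsub, pow_add, pow_one, ← mul_assoc, ← mul_assoc, mul_assoc (C * M ^ l), mul_assoc X,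
    trace_mul_comm (C * M ^ l)]
  simp only [mul_assoc]

lemma HasLeftGradient.trace_mul_pow (C : Matrix n n ℂ) (k : ℕ) :
    HasLeftGradient (fun M => (C * M ^ k).trace)
      (fun M => ∑ l ∈ Finset.range k, M ^ (k - l) * C * M ^ l) :=
  ⟨by fun_prop, by fun_prop, fun X M => hasDerivAt_trace_mul_exp_smul_mul_pow C X M k⟩

lemma HasLeftGradient.trace_pow (k : ℕ) :
    HasLeftGradient (n := n) (fun M => (M ^ k).trace) (fun M => (k : ℂ) • M ^ k) := by
  convert! trace_mul_pow (1 : Matrix n n ℂ) k using 2 with M M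
  · rw [one_mul]
  · rw [Finset.sum_congr rfl fun l hl => ?_, Finset.sum_const, Finset.card_range,
      ← Nat.cast_smul_eq_nsmul ℂ]
    rw [mul_one, ← pow_add, Nat.sub_add_cancel (Finset.mem_range.mp hl).le]

lemma HasLeftGradient.pow_apply (k : ℕ) (i j : n) :
    HasLeftGradient (fun M => (M ^ k) i j)
      (fun M => ∑ l ∈ Finset.range k, M ^ (k - l) * single j i 1 * M ^ l) := by
  convert! trace_mul_pow (single j i (1 : ℂ)) k using 2 with M
  simp [trace_single_mul]

lemma sum_mul_single_mul_apply (P Q : Matrix n n ℂ) :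
    ∑ i, ∑ j, (P * single j i 1 * Q : Matrix n n ℂ) j i = Q.trace * P.trace := by
  have h (i j : n) : (P * single j i 1 * Q : Matrix n n ℂ) j i = Q i i * P j j := by
    rw [mul_assoc, mul_apply, Finset.sum_eq_single j] <;> simp +contextual [mul_comm]
  simp only [h, ← Finset.sum_mul_sum, trace, diag_apply]

lemma sum_divergence_pow (k : ℕ) (M : Matrix n n ℂ) :
    ∑ i, ∑ j, (∑ l ∈ Finset.range k, M ^ (k - l) * single j i 1 * M ^ l : Matrix n n ℂ) j i =
      ∑ l ∈ Finset.range k, (M ^ l).trace * (M ^ (k - l)).trace := by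
  simp only [Matrix.sum_apply]
  rw [Finset.sum_congr rfl fun i _ => Finset.sum_comm, Finset.sum_comm]
  exact Finset.sum_congr rfl fun l _ => sum_mul_single_mul_apply _ _

end TracePowGradient

lemma HasLeftGradient.newtonTrace {ε : ℂ} (k : ℕ) :
    HasLeftGradient (n := n) (newtonTrace ε k) (fun M => ε • newtonMatrix ε k M) := by
  induction k using Nat.strong_induction_on with
  | _ k ih =>
    rcases eq_or_ne k 0 with rfl | hk
    · convert! const (n := n) 1 using 1
      · exact funext (newtonTrace_zero ε)
      · simp only [newtonMatrix_zero, smul_zero]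
    have hk' : (k : ℂ) ≠ 0 := Nat.cast_ne_zero.mpr hk
    have h := (HasLeftGradient.sum (Finset.range k) fun j hj =>
      (ih j (Finset.mem_range.mp hj)).mul (trace_pow (k - j))).const_mul (ε / k)
    convert! h using 1
    · ext M
      rw [← trace_newtonMatrix, div_mul_eq_mul_div, ← mul_newtonTrace, mul_div_cancel_left₀ _ hk']
    · ext1 M
      rw [← smul_newtonMatrix, smul_smul, div_mul_cancel₀ _ hk']

/-- The eigenvalue at `hookSchur m r` of the Laplacian of `HasLeftLaplacian` on `N × N` matrices:
`m` times the sum of `N`, the content of the box ending the arm and that of the box ending the leg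
of the hook `(m - r, 1 ^ r)`. -/
def hookEigenvalue (N m r : ℕ) : ℝ :=
  m * (N + (m - 1 - r) - r)

namespace HasLeftLaplacian

lemma add (hf : HasLeftLaplacian f A L) (hg : HasLeftLaplacian g B K) :
    HasLeftLaplacian (fun M => f M + g M) (fun M => A M + B M) (fun M => L M + K M) := by
  obtain ⟨hfA, C, hC, hL⟩ := hf
  obtain ⟨hgB, D, hD, hK⟩ := hg
  refine ⟨hfA.add hgB, fun i j M => C i j M + D i j M, fun i j => (hC i j).add (hD i j), ?_⟩
  simp [hL, hK, Finset.sum_add_distrib]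

lemma sum {ι : Type*} (s : Finset ι) {f L : ι → Matrix n n ℂ → ℂ}
    {A : ι → Matrix n n ℂ → Matrix n n ℂ} (h : ∀ i ∈ s, HasLeftLaplacian (f i) (A i) (L i)) :
    HasLeftLaplacian (fun M => ∑ i ∈ s, f i M) (fun M => ∑ i ∈ s, A i M)
      (fun M => ∑ i ∈ s, L i M) := by
  classical
  induction s using Finset.induction_on with
  | empty => exact ⟨.const 0, fun _ _ _ => 0, fun _ _ => .const 0, by simp⟩
  | insert i s hi ih =>
    simp only [Finset.sum_insert hi]
    exact (h i (Finset.mem_insert_self i s)).add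
      (ih fun j hj => h j (Finset.mem_insert_of_mem hj))

lemma mul (hf : HasLeftLaplacian f A L) (hg : HasLeftLaplacian g B K) :
    HasLeftLaplacian (fun M => f M * g M) (fun M => f M • B M + g M • A M)
      (fun M => f M * K M + g M * L M + 2 * (A M * B M).trace) := by
  obtain ⟨hfA, C, hC, hL⟩ := hf
  obtain ⟨hgB, D, hD, hK⟩ := hg
  refine ⟨hfA.mul hgB, fun i j M => f M • D i j M + B M i j • A M + (g M • C i j M + A M i j • B M),
    fun i j => (hfA.mul (hD i j)).add (hgB.mul (hC i j)), fun M => ?_⟩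
  rw [two_mul]
  nth_rw 1 [trace_mul_eq_sum]
  rw [trace_mul_comm, trace_mul_eq_sum, hL, hK]
  simp only [Matrix.add_apply, Matrix.smul_apply, smul_eq_mul, Finset.sum_add_distrib,
    Finset.mul_sum]
  ring

lemma newtonTrace {ε : ℂ} (hε : ε * ε = 1) (k : ℕ) :
    HasLeftLaplacian (n := n) (newtonTrace ε k) (fun M => ε • newtonMatrix ε k M)
      (fun M => (Fintype.card n + ε * (k - 1)) * (k * newtonTrace ε k M)) := by
  refine ⟨.newtonTrace k, fun i j M => ε • ∑ l ∈ Finset.range k,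
    (_root_.newtonTrace ε l M •
      (∑ p ∈ Finset.range (k - l), M ^ (k - l - p) * single j i 1 * M ^ p) +
        (M ^ (k - l)) i j • ε • newtonMatrix ε l M), fun i j => ?_, fun M => ?_⟩
  · convert! (HasLeftGradient.sum (Finset.range k) fun l _ =>
      (HasLeftGradient.newtonTrace l).mul (.pow_apply (k - l) i j)).const_mul ε using 2 with M
    simp [newtonMatrix, Matrix.sum_apply]
  · rw [mul_newtonTrace, mul_left_comm, ← divergence_newtonMatrix hε]
    simp only [Matrix.smul_apply, Matrix.sum_apply (s := Finset.range k), Matrix.add_apply,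
      smul_eq_mul, ← Finset.mul_sum]
    congr 1
    rw [Finset.sum_congr rfl fun i _ => Finset.sum_comm, Finset.sum_comm]
    refine Finset.sum_congr rfl fun l _ => ?_
    simp only [Finset.sum_add_distrib, ← Finset.mul_sum]
    rw [sum_divergence_pow, trace_mul_comm, trace_mul_eq_sum, Finset.mul_sum]
    simp only [Finset.mul_sum, mul_left_comm ε]

lemma hookTerm {m r : ℕ} (hr : r ≤ m) :
    ∃ A, HasLeftLaplacian (n := n) (hookTerm m r) A (fun M =>
      (r * (Fintype.card n - r + 1) + (m - r) * (Fintype.card n + (m - r) + 1)) *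
        _root_.hookTerm m r M - 2 * m * hookSchur m r M) := by
  have h := (newtonTrace (n := n) (ε := -1) (by ring) r).mul
    (newtonTrace (n := n) (ε := 1) (by ring) (m - r))
  refine ⟨fun M => _root_.newtonTrace (-1) r M • (1 : ℂ) • newtonMatrix 1 (m - r) M +
    _root_.newtonTrace 1 (m - r) M • (-1 : ℂ) • newtonMatrix (-1) r M, ?_⟩
  convert! h using 2 with M
  simp only [one_smul, neg_smul, Matrix.neg_mul, trace_neg, Nat.cast_sub hr,
    trace_newtonMatrix_mul_newtonMatrix hr, _root_.hookTerm]
  ring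

lemma hookSchur {m r : ℕ} (hr : r ≤ m) :
    ∃ A, HasLeftLaplacian (n := n) (hookSchur m r) A
      (fun M => hookEigenvalue (Fintype.card n) m r * _root_.hookSchur m r M) := by
  induction r with
  | zero =>
    obtain ⟨A, hA⟩ := hookTerm (n := n) (Nat.zero_le m)
    have hzero : _root_.hookSchur (n := n) (𝕜 := ℂ) m 0 = _root_.hookTerm m 0 :=
      funext (hookSchur_zero m)
    refine ⟨A, ?_⟩
    simp only [hzero] at hA ⊢
    convert! hA using 2 with M
    rw [hookEigenvalue]
    push_cast
    ring
  | succ r ih =>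
    obtain ⟨A, hA⟩ := ih (by omega)
    obtain ⟨B, hB⟩ := hookTerm (n := n) hr
    refine ⟨fun M => A M + B M, ?_⟩
    convert! hA.add hB using 2 with M M
    · exact hookSchur_succ m r M
    · rw [hookSchur_succ, hookEigenvalue, hookEigenvalue]
      push_cast
      ring

lemma trace_pow {m : ℕ} (hm : m ≠ 0) :
    HasLeftLaplacian (n := n) (fun M => (M ^ m).trace) (fun M => (m : ℂ) • M ^ m)
      (fun M => ∑ r ∈ Finset.range (min m (Fintype.card n)),
        hookEigenvalue (Fintype.card n) m r * _root_.hookSchur m r M) := by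
  have hook (r) (hr : r ∈ Finset.range (min m (Fintype.card n))) :=
    hookSchur (n := n) (lt_min_iff.mp (Finset.mem_range.mp hr)).1.le
  choose! A hA using hook
  have hsum := sum _ hA
  simp only [← trace_pow_eq_sum_hookSchur_min hm] at hsum
  rwa [hsum.hasLeftGradient.unique (.trace_pow m)] at hsum

end HasLeftLaplacian

end LeftGradient

section InvariantIntegral

variable {G E : Type*} [TopologicalSpace G] [CompactSpace G] [MeasurableSpace G] [BorelSpace G]
  {μ : Measure G} [IsFiniteMeasure μ] [NormedAddCommGroup E]

lemma integrable_of_continuous {f : G → E} (hf : Continuous f) : Integrable f μ :=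
  hf.integrable_of_hasCompactSupport (.of_compactSpace f)

lemma integral_eq_zero_of_hasDerivAt_mul_left [Group G] [ContinuousMul G]
    [μ.IsMulLeftInvariant] [NormedSpace ℝ E] {γ : ℝ → G}
    (hγ : ∀ s t, γ (s + t) = γ s * γ t) {f f' : G → E} (hf : Continuous f) (hf' : Continuous f')
    (h : ∀ g, HasDerivAt (fun t => f (γ t * g)) (f' g) 0) :
    ∫ g, f' g ∂μ = 0 := by
  have hderiv (g : G) (t : ℝ) : HasDerivAt (fun s => f (γ s * g)) (f' (γ t * g)) t := by
    have hshift := HasDerivAt.comp_sub_const t t ((sub_self t).symm ▸ h (γ t * g))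
    simpa only [← mul_assoc, ← hγ, sub_add_cancel] using hshift
  obtain ⟨C, hC⟩ := isCompact_univ.exists_bound_of_continuousOn hf'.continuousOn
  have hint := (hasDerivAt_integral_of_dominated_loc_of_deriv_le (μ := μ) (x₀ := (0 : ℝ))
    (F := fun t g => f (γ t * g)) (F' := fun t g => f' (γ t * g)) (bound := fun _ => C)
    univ_mem (.of_forall fun t => (integrable_of_continuous (by fun_prop)).aestronglyMeasurable)
    (integrable_of_continuous (by fun_prop))
    (integrable_of_continuous (by fun_prop)).aestronglyMeasurable
    (.of_forall fun g t _ => hC _ (Set.mem_univ _)) (integrable_const C)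
    (.of_forall fun g t _ => hderiv g t)).2
  simp only [integral_mul_left_eq_self] at hint
  exact hint.unique (hasDerivAt_const _ _)

end InvariantIntegral

section UnitaryGroup

open Matrix ComplexConjugate

variable {n : Type*} [Fintype n] [DecidableEq n]

instance {𝕜 : Type*} [RCLike 𝕜] : CompactSpace (unitaryGroup n 𝕜) := by
  refine isCompact_iff_compactSpace.mp (IsCompact.of_isClosed_subset
    (isCompact_univ_pi fun _ => isCompact_univ_pi fun _ => isCompact_closedBall (0 : 𝕜) 1) ?_ ?_)
  · have hset : (unitaryGroup n 𝕜 : Set (Matrix n n 𝕜)) = {M | M * star M = 1} :=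
      Set.ext fun M => mem_unitaryGroup_iff
    rw [hset]
    exact isClosed_eq (by fun_prop) continuous_const
  · intro U hU i _ j _
    simpa using entry_norm_bound_of_unitary hU i j

lemma exp_smul_mem_unitaryGroup {X : Matrix n n ℂ} (hX : star X = -X) (t : ℝ) :
    NormedSpace.exp (t • X) ∈ unitaryGroup n ℂ := by
  have hstar : (t • X)ᴴ = -(t • X) := by
    rw [← star_eq_conjTranspose, star_smul, hX, smul_neg, star_trivial]
  rw [mem_unitaryGroup_iff', star_eq_conjTranspose, ← exp_conjTranspose, hstar, Matrix.exp_neg]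
  exact nonsing_inv_mul _ ((isUnit_iff_isUnit_det _).mp (isUnit_exp _))

variable [MeasurableSpace (unitaryGroup n ℂ)] [BorelSpace (unitaryGroup n ℂ)]
  {μ : Measure (unitaryGroup n ℂ)} [IsFiniteMeasure μ] [μ.IsMulLeftInvariant]
  {f g : Matrix n n ℂ → ℂ} {A B : Matrix n n ℂ → Matrix n n ℂ} {L K : Matrix n n ℂ → ℂ}

namespace HasLeftGradient

lemma integral_trace_mul_of_skew (hf : HasLeftGradient f A) (hg : HasLeftGradient g B)
    {X : Matrix n n ℂ} (hX : star X = -X) :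
    ∫ U : unitaryGroup n ℂ, (X * A U).trace * conj (g U) ∂μ =
      -∫ U : unitaryGroup n ℂ, f U * conj ((X * B U).trace) ∂μ := by
  have := hf.continuous
  have := hg.continuous
  have := hf.continuous_gradient
  have := hg.continuous_gradient
  let γ (t : ℝ) : unitaryGroup n ℂ := ⟨NormedSpace.exp (t • X), exp_smul_mem_unitaryGroup hX t⟩
  have hγ (s t : ℝ) : γ (s + t) = γ s * γ t := Subtype.ext <| by
    change NormedSpace.exp ((s + t) • X) = _
    rw [add_smul]
    exact exp_add_of_commute _ _ (((Commute.refl X).smul_left s).smul_right t)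
  have hzero := integral_eq_zero_of_hasDerivAt_mul_left (μ := μ) hγ
    (f := fun U => f U * conj (g U))
    (f' := fun U => (X * A U).trace * conj (g U) + f U * conj ((X * B U).trace))
    (by fun_prop) (by fun_prop) fun U => by
      convert! (hf.hasDerivAt X U).mul (hg.hasDerivAt X U).star using 1
      simp
  rw [integral_add (integrable_of_continuous (by fun_prop))
    (integrable_of_continuous (by fun_prop))] at hzero
  exact eq_neg_of_add_eq_zero_left hzero

lemma integral_trace_mul_of_isSelfAdjoint (hf : HasLeftGradient f A) (hg : HasLeftGradient g B)
    {X : Matrix n n ℂ} (hX : IsSelfAdjoint X) :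
    ∫ U : unitaryGroup n ℂ, (X * A U).trace * conj (g U) ∂μ =
      ∫ U : unitaryGroup n ℂ, f U * conj ((X * B U).trace) ∂μ := by
  have hskew : star (Complex.I • X) = -(Complex.I • X) := by
    rw [star_smul, hX.star_eq, Complex.star_def, Complex.conj_I, neg_smul]
  have h := hf.integral_trace_mul_of_skew (μ := μ) hg hskew
  simp only [smul_mul, trace_smul, smul_eq_mul, map_mul, Complex.conj_I, mul_assoc,
    mul_left_comm (f _), integral_const_mul, neg_mul, mul_neg, integral_neg, neg_neg] at h
  exact mul_left_cancel₀ Complex.I_ne_zero h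

lemma integral_trace_mul (hf : HasLeftGradient f A) (hg : HasLeftGradient g B)
    (X : Matrix n n ℂ) :
    ∫ U : unitaryGroup n ℂ, (X * A U).trace * conj (g U) ∂μ =
      ∫ U : unitaryGroup n ℂ, f U * conj ((star X * B U).trace) ∂μ := by
  have := hf.continuous
  have := hg.continuous
  have := hf.continuous_gradient
  have := hg.continuous_gradient
  obtain ⟨S, T, hS, hT, rfl⟩ : ∃ S T : Matrix n n ℂ,
      IsSelfAdjoint S ∧ IsSelfAdjoint T ∧ S + Complex.I • T = X :=
    ⟨_, _, (realPart X).2, (imaginaryPart X).2, realPart_add_I_smul_imaginaryPart X⟩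
  have hSint := hf.integral_trace_mul_of_isSelfAdjoint (μ := μ) hg hS
  have hTint := hf.integral_trace_mul_of_isSelfAdjoint (μ := μ) hg hT
  simp only [star_add, star_smul, hS.star_eq, hT.star_eq, add_mul, smul_mul, trace_add, trace_smul,
    map_add, smul_eq_mul, map_mul, Complex.star_def, Complex.conj_conj, mul_add, mul_assoc,
    mul_left_comm _ Complex.I]
  rw [integral_add, integral_add, integral_const_mul, integral_const_mul, hSint, hTint] <;>
    exact integrable_of_continuous (by fun_prop)

end HasLeftGradient

namespace HasLeftLaplacian

lemma integral_mul_conj (hf : HasLeftLaplacian f A L) (hg : HasLeftGradient g B) :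
    ∫ U : unitaryGroup n ℂ, L U * conj (g U) ∂μ =
      ∑ i, ∑ j, ∫ U : unitaryGroup n ℂ, A U i j * conj (B U i j) ∂μ := by
  obtain ⟨-, C, hC, hL⟩ := hf
  have := hg.continuous
  have := fun i j => (hC i j).continuous_gradient
  simp only [hL, Finset.sum_mul]
  rw [integral_finsetSum _ fun i _ => integrable_of_continuous (by fun_prop)]
  refine Finset.sum_congr rfl fun i _ => ?_
  rw [integral_finsetSum _ fun j _ => integrable_of_continuous (by fun_prop)]
  refine Finset.sum_congr rfl fun j _ => ?_
  simpa [star_eq_conjTranspose, trace_single_mul] using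
    (hC i j).integral_trace_mul (μ := μ) hg (single i j 1)

lemma integral_mul_conj_comm (hf : HasLeftLaplacian f A L) (hg : HasLeftLaplacian g B K) :
    ∫ U : unitaryGroup n ℂ, L U * conj (g U) ∂μ = ∫ U : unitaryGroup n ℂ, f U * conj (K U) ∂μ := by
  have h := congrArg conj (hg.integral_mul_conj (μ := μ) hf.hasLeftGradient)
  simp only [map_sum, ← integral_conj, map_mul, Complex.conj_conj] at h
  rw [hf.integral_mul_conj hg.hasLeftGradient]
  simpa only [mul_comm] using h.symm

end HasLeftLaplacian

end UnitaryGroup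

section TraceMoments

open Matrix ComplexConjugate

lemma integral_sum_mul_mul_conj_sum {G ι : Type*} [TopologicalSpace G] [CompactSpace G]
    [MeasurableSpace G] [BorelSpace G] {μ : Measure G} [IsFiniteMeasure μ] {s : Finset ι}
    {f : ι → G → ℂ} (hf : ∀ i ∈ s, Continuous (f i))
    (horth : (s : Set ι).Pairwise fun i j => ∫ x, f i x * conj (f j x) ∂μ = 0) (c : ι → ℝ) :
    ∫ x, (∑ i ∈ s, c i * f i x) * conj (∑ i ∈ s, f i x) ∂μ =
      (∑ i ∈ s, c i * ∫ x, ‖f i x‖ ^ 2 ∂μ : ℝ) := by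
  have hint (i) (hi : i ∈ s) (j) (hj : j ∈ s) :
      Integrable (fun x => c i * f i x * conj (f j x)) μ := by
    have := hf i hi
    have := hf j hj
    exact integrable_of_continuous (by fun_prop)
  simp only [map_sum, Finset.sum_mul_sum]
  rw [integral_finsetSum _ fun i hi => integrable_finsetSum _ (hint i hi)]
  push_cast
  refine Finset.sum_congr rfl fun i hi => ?_
  rw [integral_finsetSum _ (hint i hi), Finset.sum_eq_single_of_mem i hi fun j hj hji => ?_]
  · simp only [mul_assoc, Complex.mul_conj', integral_const_mul, ← integral_complex_ofReal,
      Complex.ofReal_pow]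
  · simp only [mul_assoc, integral_const_mul, horth hi hj hji.symm, mul_zero]

variable {n : Type*} [Fintype n] [DecidableEq n]

lemma sum_sum_mul_conj_eq_card {V : Matrix n n ℂ} (hV : V ∈ unitaryGroup n ℂ) :
    ∑ i, ∑ j, V i j * conj (V i j) = Fintype.card n := by
  have h := trace_mul_eq_sum V (star V)
  rw [mem_unitaryGroup_iff.mp hV, trace_one] at h
  exact h.symm

variable [MeasurableSpace (unitaryGroup n ℂ)] [BorelSpace (unitaryGroup n ℂ)]
  {μ : Measure (unitaryGroup n ℂ)}

lemma mul_abs_sub_add_one_le_hookEigenvalue {N m r : ℕ} (hr : r < min m N) :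
    m * (|(N : ℝ) - m| + 1) ≤ hookEigenvalue N m r := by
  obtain ⟨hm, hN⟩ := lt_min_iff.mp hr
  have hm : (r : ℝ) + 1 ≤ m := by exact_mod_cast hm
  have hN : (r : ℝ) + 1 ≤ N := by exact_mod_cast hN
  refine mul_le_mul_of_nonneg_left ?_ (Nat.cast_nonneg m)
  rcases abs_cases ((N : ℝ) - m) with h | h <;> linarith

section

variable [IsFiniteMeasure μ] [μ.IsMulLeftInvariant]

lemma integral_trace_pow_mul_conj_trace_pow {j k : ℕ} (hjk : j ≠ k) :
    ∫ U : unitaryGroup n ℂ, ((U : Matrix n n ℂ) ^ j).trace * conj ((U : Matrix n n ℂ) ^ k).trace ∂μ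
      = 0 := by
  have h := (HasLeftGradient.trace_pow (n := n) j).integral_trace_mul (μ := μ) (.trace_pow k) 1
  simp only [star_one, one_mul, trace_smul, smul_eq_mul, map_mul, Complex.conj_natCast, mul_assoc,
    mul_left_comm _ (k : ℂ), integral_const_mul] at h
  exact (mul_eq_mul_right_iff.mp h).resolve_left (Nat.cast_injective.ne hjk)

lemma integral_trace_pow_mul_trace_pow {j k : ℕ} (hjk : j + k ≠ 0) :
    ∫ U : unitaryGroup n ℂ, ((U : Matrix n n ℂ) ^ j).trace * ((U : Matrix n n ℂ) ^ k).trace ∂μ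
      = 0 := by
  have h := ((HasLeftGradient.trace_pow (n := n) j).mul (.trace_pow k)).integral_trace_mul
    (μ := μ) (.const 1) 1
  simp only [star_one, one_mul, trace_add, trace_smul, smul_eq_mul, map_one, mul_one, trace_zero,
    map_zero, mul_zero, integral_zero, mul_left_comm _ (k : ℂ), mul_left_comm _ (j : ℂ)] at h
  have hsum : ((j + k : ℕ) : ℂ) * ∫ U : unitaryGroup n ℂ,
      ((U : Matrix n n ℂ) ^ j).trace * ((U : Matrix n n ℂ) ^ k).trace ∂μ = 0 := by
    rw [← integral_const_mul, ← h]
    congr with U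
    push_cast
    ring
  exact (mul_eq_zero.mp hsum).resolve_left (Nat.cast_ne_zero.mpr hjk)

lemma integral_hookSchur_mul_conj_hookSchur {m r q : ℕ} (hm : m ≠ 0) (hr : r ≤ m) (hq : q ≤ m)
    (hrq : r ≠ q) :
    ∫ U : unitaryGroup n ℂ, hookSchur m r (U : Matrix n n ℂ) * conj (hookSchur m q U.1) ∂μ = 0 := by
  obtain ⟨A, hA⟩ := HasLeftLaplacian.hookSchur (n := n) hr
  obtain ⟨B, hB⟩ := HasLeftLaplacian.hookSchur (n := n) hq
  have h := hA.integral_mul_conj_comm (μ := μ) hB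
  simp only [map_mul, Complex.conj_ofReal, mul_assoc,
    mul_left_comm _ (hookEigenvalue _ m q : ℂ), integral_const_mul] at h
  refine (mul_eq_mul_right_iff.mp h).resolve_left fun heq => hrq ?_
  have heq := mul_left_cancel₀ (Nat.cast_ne_zero.mpr hm) (Complex.ofReal_injective heq)
  have : (r : ℝ) = q := by linarith
  exact_mod_cast this

lemma integral_sum_hookSchur_mul_conj_trace_pow {m : ℕ} (hm : m ≠ 0) (c : ℕ → ℝ) :
    ∫ U : unitaryGroup n ℂ, (∑ r ∈ Finset.range (min m (Fintype.card n)),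
        c r * hookSchur m r (U : Matrix n n ℂ)) * conj ((U : Matrix n n ℂ) ^ m).trace ∂μ =
      (∑ r ∈ Finset.range (min m (Fintype.card n)),
        c r * ∫ U : unitaryGroup n ℂ, ‖hookSchur m r (U : Matrix n n ℂ)‖ ^ 2 ∂μ : ℝ) := by
  have hle (r) (hr : r ∈ Finset.range (min m (Fintype.card n))) : r ≤ m :=
    (lt_min_iff.mp (Finset.mem_range.mp hr)).1.le
  simp only [trace_pow_eq_sum_hookSchur_min hm]
  refine integral_sum_mul_mul_conj_sum
    (f := fun r (U : unitaryGroup n ℂ) => hookSchur m r (U : Matrix n n ℂ)) (fun r hr => ?_)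
    (fun r hr q hq => integral_hookSchur_mul_conj_hookSchur hm (hle r hr) (hle q hq)) c
  obtain ⟨A, hA⟩ := HasLeftLaplacian.hookSchur (n := n) (hle r hr)
  exact hA.hasLeftGradient.continuous.comp continuous_subtype_val

end

variable [IsProbabilityMeasure μ] [μ.IsMulLeftInvariant]

lemma sum_hookEigenvalue_mul_integral {m : ℕ} (hm : m ≠ 0) :
    ∑ r ∈ Finset.range (min m (Fintype.card n)), hookEigenvalue (Fintype.card n) m r *
        ∫ U : unitaryGroup n ℂ, ‖hookSchur m r (U : Matrix n n ℂ)‖ ^ 2 ∂μ =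
      m ^ 2 * Fintype.card n := by
  have hdirichlet := (HasLeftLaplacian.trace_pow (n := n) hm).integral_mul_conj (μ := μ)
    (.trace_pow m)
  rw [integral_sum_hookSchur_mul_conj_trace_pow hm] at hdirichlet
  have hgradient (U : unitaryGroup n ℂ) : ∑ i, ∑ j, ((m : ℂ) • (U : Matrix n n ℂ) ^ m) i j *
      conj (((m : ℂ) • (U : Matrix n n ℂ) ^ m) i j) = m ^ 2 * Fintype.card n := by
    rw [← sum_sum_mul_conj_eq_card (pow_mem U.2 m)]
    simp only [Matrix.smul_apply, smul_eq_mul, map_mul, Complex.conj_natCast,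
      Finset.mul_sum]
    exact Finset.sum_congr rfl fun i _ => Finset.sum_congr rfl fun j _ => by ring
  rw [Finset.sum_congr rfl fun i _ => (integral_finsetSum _ fun j _ =>
      integrable_of_continuous (by fun_prop)).symm,
    ← integral_finsetSum _ fun i _ => integrable_of_continuous (by fun_prop)] at hdirichlet
  simp only [hgradient, integral_const, probReal_univ, one_smul] at hdirichlet
  exact_mod_cast hdirichlet

lemma integral_norm_trace_pow_sq_le {m : ℕ} (hm : m ≠ 0) :
    (|(Fintype.card n : ℝ) - m| + 1) *
        ∫ U : unitaryGroup n ℂ, ‖((U : Matrix n n ℂ) ^ m).trace‖ ^ 2 ∂μ ≤ m * Fintype.card n := by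
  have hparseval : ∫ U : unitaryGroup n ℂ, ‖((U : Matrix n n ℂ) ^ m).trace‖ ^ 2 ∂μ =
      ∑ r ∈ Finset.range (min m (Fintype.card n)),
        ∫ U : unitaryGroup n ℂ, ‖hookSchur m r (U : Matrix n n ℂ)‖ ^ 2 ∂μ := by
    have h := integral_sum_hookSchur_mul_conj_trace_pow (n := n) (μ := μ) hm 1
    simp only [Pi.one_apply, Complex.ofReal_one, one_mul, ← trace_pow_eq_sum_hookSchur_min hm,
      Complex.mul_conj', ← Complex.ofReal_pow, integral_complex_ofReal] at h
    exact_mod_cast h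
  have hm0 : (0 : ℝ) < m := by positivity
  refine le_of_mul_le_mul_left ?_ hm0
  calc _ = ∑ r ∈ Finset.range (min m (Fintype.card n)),
          m * (|(Fintype.card n : ℝ) - m| + 1) *
            ∫ U : unitaryGroup n ℂ, ‖hookSchur m r (U : Matrix n n ℂ)‖ ^ 2 ∂μ := by
        rw [hparseval, ← Finset.mul_sum, mul_assoc]
    _ ≤ ∑ r ∈ Finset.range (min m (Fintype.card n)), hookEigenvalue (Fintype.card n) m r *
            ∫ U : unitaryGroup n ℂ, ‖hookSchur m r (U : Matrix n n ℂ)‖ ^ 2 ∂μ :=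
        Finset.sum_le_sum fun r hr => mul_le_mul_of_nonneg_right
          (mul_abs_sub_add_one_le_hookEigenvalue (Finset.mem_range.mp hr))
          (integral_nonneg fun U => by positivity)
    _ = m * (m * Fintype.card n) := by rw [sum_hookEigenvalue_mul_integral hm]; ring

end TraceMoments

section HarmonicBound

lemma harmonic_eq_sum_inv_add_one (N : ℕ) :
    (harmonic N : ℝ) = ∑ i ∈ Finset.range N, ((i : ℝ) + 1)⁻¹ := by
  simp [harmonic]

lemma cast_harmonic_nonneg (N : ℕ) : (0 : ℝ) ≤ harmonic N := by
  rw [harmonic_eq_sum_inv_add_one]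
  positivity

lemma harmonic_eq_sum_inv_sub (N : ℕ) :
    (harmonic N : ℝ) = ∑ i ∈ Finset.range N, ((N : ℝ) - i)⁻¹ := by
  rw [harmonic_eq_sum_inv_add_one, ← Finset.sum_range_reflect]
  refine Finset.sum_congr rfl fun i hi => ?_
  have hi := Finset.mem_range.mp hi
  rw [Nat.sub_sub, Nat.cast_sub (by omega)]
  push_cast
  ring

lemma sum_div_mul_abs_sub_add_one_le_two_mul_harmonic (N : ℕ) :
    ∑ i ∈ Finset.range N, (N : ℝ) / ((i + 1) * (|(N : ℝ) - (i + 1)| + 1)) ≤ 2 * harmonic N := by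
  rw [two_mul]
  nth_rw 1 [harmonic_eq_sum_inv_add_one]
  rw [harmonic_eq_sum_inv_sub, ← Finset.sum_add_distrib]
  refine Finset.sum_le_sum fun i hi => ?_
  have hi : (i : ℝ) + 1 ≤ N := by exact_mod_cast Finset.mem_range.mp hi
  have hpos : (0 : ℝ) < N - i := by linarith
  rw [abs_of_nonneg (by linarith), inv_add_inv (by positivity) hpos.ne', sub_add_eq_sub_sub,
    sub_add_cancel]
  gcongr
  linarith

lemma sum_div_add_mul_abs_sub_add_one_le_harmonic (N K : ℕ) :
    ∑ j ∈ Finset.range K, (N : ℝ) / ((N + j + 1) * (|(N : ℝ) - (N + j + 1)| + 1)) ≤ harmonic N := by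
  have hterm (j : ℕ) : (N : ℝ) / ((N + j + 1) * (|(N : ℝ) - (N + j + 1)| + 1)) ≤
      ((j : ℝ) + 1)⁻¹ - (N + j + 1 : ℝ)⁻¹ := by
    have hdist : |(N : ℝ) - (N + j + 1)| = j + 1 := by
      rw [abs_of_nonpos (by linarith)]
      ring
    rw [hdist, inv_sub_inv (by positivity) (by positivity), add_assoc, add_sub_cancel_right,
      mul_comm]
    gcongr
    linarith
  have hsplit (a b : ℕ) : (harmonic (a + b) : ℝ) =
      harmonic a + ∑ j ∈ Finset.range b, (a + j + 1 : ℝ)⁻¹ := by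
    simp only [harmonic_eq_sum_inv_add_one, Finset.sum_range_add, Nat.cast_add]
  have hmono : (harmonic K : ℝ) ≤ harmonic (N + K) := by
    rw [add_comm, hsplit]
    exact le_add_of_nonneg_right (Finset.sum_nonneg fun j _ => by positivity)
  calc _ ≤ ∑ j ∈ Finset.range K, (((j : ℝ) + 1)⁻¹ - (N + j + 1 : ℝ)⁻¹) :=
        Finset.sum_le_sum fun j _ => hterm j
    _ = harmonic K + harmonic N - harmonic (N + K) := by
        rw [Finset.sum_sub_distrib, ← harmonic_eq_sum_inv_add_one, hsplit]
        ring
    _ ≤ harmonic N := by linarith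

lemma sum_div_mul_abs_sub_add_one_le_three_mul_harmonic (N K : ℕ) :
    ∑ m ∈ Finset.range K, (N : ℝ) / (m * (|(N : ℝ) - m| + 1)) ≤ 3 * harmonic N :=
  calc _ ≤ ∑ m ∈ Finset.range (N + K + 1), (N : ℝ) / (m * (|(N : ℝ) - m| + 1)) :=
        Finset.sum_le_sum_of_subset_of_nonneg
          (Finset.range_mono (by omega)) fun m _ _ => by positivity
    _ ≤ 2 * harmonic N + harmonic N := by
        rw [Finset.sum_range_succ', Finset.sum_range_add]
        push_cast
        rw [zero_mul, div_zero, add_zero]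
        exact add_le_add (sum_div_mul_abs_sub_add_one_le_two_mul_harmonic N)
          (sum_div_add_mul_abs_sub_add_one_le_harmonic N K)
    _ = 3 * harmonic N := by ring

end HarmonicBound

section ArcSum

open Matrix ComplexConjugate

variable {n : Type*} [Fintype n] [DecidableEq n]

/-- The coefficients of the power series `∑ m ≥ 1, arcCoeff θ m * z ^ m` whose imaginary part at
`z = exp (i φ)`, for `0 < φ < 2 π`, is `π - θ / 2` on the arc `φ < θ` and `-θ / 2` on the arc
`θ < φ`. -/
def arcCoeff (θ : ℝ) (m : ℕ) : ℂ :=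
  (1 - Complex.exp (-(m * θ) * Complex.I)) / m

/-- The sum over the eigenvalues `z` of `M` of the partial sums of
`∑ m ≥ 1, arcCoeff θ m * z ^ m`; the summand `m = 0` vanishes. -/
def arcSum (θ : ℝ) (K : ℕ) (M : Matrix n n ℂ) : ℂ :=
  ∑ m ∈ Finset.range K, arcCoeff θ m * (M ^ m).trace

lemma arcCoeff_zero (θ : ℝ) : arcCoeff θ 0 = 0 := by
  simp [arcCoeff]

lemma norm_arcCoeff_le (θ : ℝ) (m : ℕ) : ‖arcCoeff θ m‖ ≤ 2 / m := by
  have hexp : ‖Complex.exp (-(m * θ) * Complex.I)‖ = 1 := by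
    exact_mod_cast Complex.norm_exp_ofReal_mul_I (-(m * θ))
  rw [arcCoeff, norm_div, Complex.norm_natCast]
  gcongr
  linarith [norm_sub_le 1 (Complex.exp (-(m * θ) * Complex.I)), norm_one (α := ℂ)]

variable [MeasurableSpace (unitaryGroup n ℂ)] [BorelSpace (unitaryGroup n ℂ)]
  {μ : Measure (unitaryGroup n ℂ)} [μ.IsMulLeftInvariant]

section

variable [IsFiniteMeasure μ]

lemma integral_norm_sum_mul_trace_pow_sq (a : ℕ → ℂ) (s : Finset ℕ) :
    ∫ U : unitaryGroup n ℂ, ‖∑ k ∈ s, a k * ((U : Matrix n n ℂ) ^ k).trace‖ ^ 2 ∂μ =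
      ∑ k ∈ s, ‖a k‖ ^ 2 * ∫ U : unitaryGroup n ℂ, ‖((U : Matrix n n ℂ) ^ k).trace‖ ^ 2 ∂μ := by
  have h := integral_sum_mul_mul_conj_sum (μ := μ) (s := s)
    (f := fun k (U : unitaryGroup n ℂ) => a k * ((U : Matrix n n ℂ) ^ k).trace)
    (fun k _ => by fun_prop) (fun j _ k _ hjk => by
      beta_reduce
      simp only [map_mul, mul_mul_mul_comm (a j) _ (conj (a k)), integral_const_mul,
        integral_trace_pow_mul_conj_trace_pow hjk, mul_zero]) 1
  simp only [Pi.one_apply, Complex.ofReal_one, one_mul, Complex.mul_conj', norm_mul, mul_pow,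
    integral_const_mul, ← Complex.ofReal_pow, integral_complex_ofReal] at h
  exact_mod_cast h

lemma integral_sum_mul_trace_pow_sq_eq_zero {a : ℕ → ℂ} (ha : a 0 = 0) (s : Finset ℕ) :
    ∫ U : unitaryGroup n ℂ, (∑ k ∈ s, a k * ((U : Matrix n n ℂ) ^ k).trace) ^ 2 ∂μ = 0 := by
  simp only [pow_two, Finset.sum_mul_sum]
  rw [integral_finsetSum _ fun j _ => integrable_of_continuous (by fun_prop)]
  refine Finset.sum_eq_zero fun j _ => ?_
  rw [integral_finsetSum _ fun k _ => integrable_of_continuous (by fun_prop)]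
  refine Finset.sum_eq_zero fun k _ => ?_
  rcases eq_or_ne j 0 with rfl | hj
  · simp [ha]
  simp only [mul_mul_mul_comm (a j), integral_const_mul,
    integral_trace_pow_mul_trace_pow (show j + k ≠ 0 by omega), mul_zero]

lemma integral_im_sum_mul_trace_pow_sq {a : ℕ → ℂ} (ha : a 0 = 0) (s : Finset ℕ) :
    ∫ U : unitaryGroup n ℂ, (∑ k ∈ s, a k * ((U : Matrix n n ℂ) ^ k).trace).im ^ 2 ∂μ =
      (∑ k ∈ s, ‖a k‖ ^ 2 * ∫ U : unitaryGroup n ℂ, ‖((U : Matrix n n ℂ) ^ k).trace‖ ^ 2 ∂μ) /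
        2 := by
  have him (z : ℂ) : z.im ^ 2 = (‖z‖ ^ 2 - (z ^ 2).re) / 2 := by
    rw [← Complex.normSq_eq_norm_sq, Complex.normSq_apply, pow_two z, Complex.mul_re]
    ring
  have hre := integral_re (μ := μ) (𝕜 := ℂ)
    (f := fun U : unitaryGroup n ℂ => (∑ k ∈ s, a k * ((U : Matrix n n ℂ) ^ k).trace) ^ 2)
    (integrable_of_continuous (by fun_prop))
  rw [integral_sum_mul_trace_pow_sq_eq_zero ha s, map_zero] at hre
  simp only [RCLike.re_to_complex] at hre
  simp only [him]
  rw [integral_div, integral_sub (integrable_of_continuous (by fun_prop))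
    (integrable_of_continuous (by fun_prop)), hre, sub_zero, integral_norm_sum_mul_trace_pow_sq]

end

variable [IsProbabilityMeasure μ]

lemma sq_norm_arcCoeff_mul_integral_le (θ : ℝ) (m : ℕ) :
    ‖arcCoeff θ m‖ ^ 2 * ∫ U : unitaryGroup n ℂ, ‖((U : Matrix n n ℂ) ^ m).trace‖ ^ 2 ∂μ ≤
      4 * (Fintype.card n / (m * (|(Fintype.card n : ℝ) - m| + 1))) := by
  rcases eq_or_ne m 0 with rfl | hm
  · simp [arcCoeff_zero]
  have hint := integral_norm_trace_pow_sq_le (μ := μ) hm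
  rw [← le_div_iff₀' (by positivity)] at hint
  calc _ ≤ (2 / m : ℝ) ^ 2 * (m * Fintype.card n / (|(Fintype.card n : ℝ) - m| + 1)) := by
        gcongr
        exact norm_arcCoeff_le θ m
    _ = _ := by field_simp; ring

lemma integral_arcSum_im_div_pi_sq_le (θ : ℝ) (K : ℕ) :
    ∫ U : unitaryGroup n ℂ, ((arcSum θ K (U : Matrix n n ℂ)).im / π) ^ 2 ∂μ ≤
      harmonic (Fintype.card n) := by
  simp only [div_pow, integral_div]
  rw [div_le_iff₀ (by positivity)]
  calc _ = (∑ m ∈ Finset.range K, ‖arcCoeff θ m‖ ^ 2 *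
          ∫ U : unitaryGroup n ℂ, ‖((U : Matrix n n ℂ) ^ m).trace‖ ^ 2 ∂μ) / 2 :=
        integral_im_sum_mul_trace_pow_sq (arcCoeff_zero θ) _
    _ ≤ (∑ m ∈ Finset.range K,
          4 * (Fintype.card n / (m * (|(Fintype.card n : ℝ) - m| + 1)))) / 2 := by
        gcongr ?_ / 2
        exact Finset.sum_le_sum fun m _ => sq_norm_arcCoeff_mul_integral_le θ m
    _ ≤ harmonic (Fintype.card n) * 6 := by
        rw [← Finset.mul_sum]
        linarith [sum_div_mul_abs_sub_add_one_le_three_mul_harmonic (Fintype.card n) K]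
    _ ≤ harmonic (Fintype.card n) * π ^ 2 := by
        refine mul_le_mul_of_nonneg_left ?_ (cast_harmonic_nonneg _)
        nlinarith [Real.pi_gt_three]

end ArcSum

section LogSeries

open Topology

lemma norm_sum_range_pow_le {z : ℂ} (hz : ‖z‖ = 1) (hz1 : z ≠ 1) (K : ℕ) :
    ‖∑ m ∈ Finset.range K, z ^ m‖ ≤ 2 / ‖z - 1‖ := by
  rw [geom_sum_eq hz1, norm_div]
  gcongr
  calc ‖z ^ K - 1‖ ≤ ‖z ^ K‖ + ‖(1 : ℂ)‖ := norm_sub_le _ _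
    _ = 2 := by rw [norm_pow, hz, one_pow, norm_one, one_add_one_eq_two]

lemma exists_tendsto_sum_pow_div {z : ℂ} (hz : ‖z‖ = 1) (hz1 : z ≠ 1) :
    ∃ l, Tendsto (fun K => ∑ m ∈ Finset.range K, z ^ m / m) atTop (𝓝 l) := by
  have hanti : Antitone fun n : ℕ => 1 / ((n : ℝ) + 1) := fun a b hab => by
    beta_reduce
    gcongr
  have hbound (K : ℕ) : ‖∑ m ∈ Finset.range K, z ^ (m + 1)‖ ≤ 2 / ‖z - 1‖ := by
    simpa only [pow_succ, ← Finset.sum_mul, norm_mul, hz, mul_one]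
      using norm_sum_range_pow_le hz hz1 K
  obtain ⟨l, hl⟩ := cauchySeq_tendsto_of_complete
    (hanti.cauchySeq_series_mul_of_tendsto_zero_of_bounded
      tendsto_one_div_add_atTop_nhds_zero_nat hbound)
  refine ⟨l, (tendsto_add_atTop_iff_nat 1).mp (hl.congr fun K => ?_)⟩
  rw [Finset.sum_range_succ', Nat.cast_zero, div_zero, add_zero]
  refine Finset.sum_congr rfl fun m _ => ?_
  rw [Complex.real_smul]
  push_cast
  ring

open scoped ComplexOrder in
lemma one_sub_mem_slitPlane {z : ℂ} (hz : ‖z‖ = 1) (hz1 : z ≠ 1) : 1 - z ∈ Complex.slitPlane := by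
  refine Complex.mem_slitPlane_iff_not_le_zero.mpr fun hle => hz1 ?_
  rw [Complex.eq_coe_norm_of_nonneg (zero_le_one.trans (sub_nonpos.mp hle)), hz,
    Complex.ofReal_one]

lemma tendsto_sum_pow_div {z : ℂ} (hz : ‖z‖ = 1) (hz1 : z ≠ 1) :
    Tendsto (fun K => ∑ m ∈ Finset.range K, z ^ m / m) atTop (𝓝 (-Complex.log (1 - z))) := by
  obtain ⟨l, hl⟩ := exists_tendsto_sum_pow_div hz hz1
  have habel : Tendsto (fun x : ℝ => ∑' m : ℕ, z ^ m / m * (x : ℂ) ^ m) (𝓝[<] 1) (𝓝 l) :=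
    tendsto_map'_iff.mp (Complex.tendsto_tsum_powerSeries_nhdsWithin_lt hl)
  have hlog : Tendsto (fun x : ℝ => -Complex.log (1 - z * x)) (𝓝[<] 1)
      (𝓝 (-Complex.log (1 - z))) := by
    have hcont : ContinuousAt (fun x : ℝ => -Complex.log (1 - z * x)) 1 :=
      (ContinuousAt.clog (by fun_prop) (by simpa using one_sub_mem_slitPlane hz hz1)).neg
    simpa using hcont.tendsto.mono_left nhdsWithin_le_nhds
  have heq : (fun x : ℝ => ∑' m : ℕ, z ^ m / m * (x : ℂ) ^ m) =ᶠ[𝓝[<] 1]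
      fun x => -Complex.log (1 - z * x) := by
    filter_upwards [Ioo_mem_nhdsLT (zero_lt_one' ℝ)] with x hx
    have hnorm : ‖z * x‖ < 1 := by
      rw [norm_mul, hz, one_mul, Complex.norm_of_nonneg hx.1.le]
      exact hx.2
    rw [← (Complex.hasSum_taylorSeries_neg_log hnorm).tsum_eq]
    exact tsum_congr fun m => by rw [mul_pow, mul_div_right_comm]
  rwa [← tendsto_nhds_unique (habel.congr' heq) hlog]

lemma one_sub_exp_mul_I (φ : ℝ) :
    1 - Complex.exp (φ * Complex.I) =
      (2 * Real.sin (φ / 2) : ℝ) * Complex.exp (((φ - π) / 2 : ℝ) * Complex.I) := by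
  have hquarter : Complex.exp (((φ - π) / 2 : ℝ) * Complex.I) =
      Complex.exp (φ / 2 * Complex.I) * -Complex.I := by
    rw [← Complex.exp_neg_pi_div_two_mul_I, ← Complex.exp_add]
    push_cast
    ring_nf
  have hdouble : Complex.exp (φ * Complex.I) = Complex.exp (φ / 2 * Complex.I) ^ 2 := by
    rw [← Complex.exp_nat_mul]
    push_cast
    ring_nf
  rw [hquarter, hdouble]
  push_cast
  rw [Complex.two_sin, neg_mul, Complex.exp_neg]
  linear_combination Complex.I ^ 2 * mul_inv_cancel₀ (Complex.exp_ne_zero (φ / 2 * Complex.I)) +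
    (1 - Complex.exp (φ / 2 * Complex.I) ^ 2) * Complex.I_sq

lemma sin_half_pos {φ : ℝ} (hφ : φ ∈ Set.Ioo 0 (2 * π)) : 0 < Real.sin (φ / 2) :=
  Real.sin_pos_of_pos_of_lt_pi (by linarith [hφ.1]) (by linarith [hφ.2])

lemma exp_mul_I_ne_one {φ : ℝ} (hφ : φ ∈ Set.Ioo 0 (2 * π)) :
    Complex.exp (φ * Complex.I) ≠ 1 := by
  rw [ne_comm, ← sub_ne_zero, one_sub_exp_mul_I]
  exact mul_ne_zero (Complex.ofReal_ne_zero.mpr (mul_pos two_pos (sin_half_pos hφ)).ne')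
    (Complex.exp_ne_zero _)

lemma im_log_one_sub_exp_mul_I {φ : ℝ} (hφ : φ ∈ Set.Ioo 0 (2 * π)) :
    (Complex.log (1 - Complex.exp (φ * Complex.I))).im = (φ - π) / 2 := by
  rw [Complex.log_im, one_sub_exp_mul_I, Complex.arg_real_mul _ (mul_pos two_pos (sin_half_pos hφ)),
    Complex.arg_exp_mul_I, toIocMod_eq_self]
  constructor <;> linarith [hφ.1, hφ.2, Real.pi_pos]

lemma tendsto_im_sum_exp_mul_I_pow_div {φ : ℝ} (hφ : φ ∈ Set.Ioo 0 (2 * π)) :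
    Tendsto (fun K => (∑ m ∈ Finset.range K, Complex.exp (φ * Complex.I) ^ m / m).im) atTop
      (𝓝 ((π - φ) / 2)) := by
  have h := (Complex.continuous_im.tendsto _).comp
    (tendsto_sum_pow_div (Complex.norm_exp_ofReal_mul_I φ) (exp_mul_I_ne_one hφ))
  rwa [Complex.neg_im, im_log_one_sub_exp_mul_I hφ, ← neg_div, neg_sub] at h

end LogSeries

section CountingFunction

open Topology Matrix

lemma arcCoeff_mul_exp_mul_I_pow (θ φ : ℝ) (m : ℕ) :
    arcCoeff θ m * Complex.exp (φ * Complex.I) ^ m =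
      Complex.exp (φ * Complex.I) ^ m / m - Complex.exp ((φ - θ : ℝ) * Complex.I) ^ m / m := by
  rw [arcCoeff, div_mul_eq_mul_div, ← sub_div, sub_mul, one_mul, ← Complex.exp_nat_mul,
    ← Complex.exp_nat_mul, ← Complex.exp_add]
  push_cast
  ring_nf

lemma exp_add_two_pi_mul_I (φ : ℝ) :
    Complex.exp ((φ + 2 * π : ℝ) * Complex.I) = Complex.exp (φ * Complex.I) := by
  push_cast
  rw [add_mul, Complex.exp_periodic]

lemma tendsto_im_sum_arcCoeff_mul_pow {θ φ : ℝ} (hθ : θ ∈ Set.Icc 0 (2 * π))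
    (hφ : φ ∈ Set.Ioo 0 (2 * π)) (hne : φ ≠ θ) :
    Tendsto (fun K => (∑ m ∈ Finset.range K, arcCoeff θ m * Complex.exp (φ * Complex.I) ^ m).im / π)
      atTop (𝓝 ((Set.Icc 0 θ).indicator 1 φ - θ / (2 * π))) := by
  simp only [arcCoeff_mul_exp_mul_I_pow, Finset.sum_sub_distrib, Complex.sub_im]
  rcases hne.lt_or_gt with h | h
  · have hmem : φ - θ + 2 * π ∈ Set.Ioo 0 (2 * π) := by
      constructor <;> linarith [hθ.2, hφ.1]
    rw [← exp_add_two_pi_mul_I (φ - θ), Set.indicator_of_mem (Set.mem_Icc.mpr ⟨hφ.1.le, h.le⟩)]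
    convert ((tendsto_im_sum_exp_mul_I_pow_div hφ).sub
      (tendsto_im_sum_exp_mul_I_pow_div hmem)).div_const π using 2
    rw [Pi.one_apply]
    field_simp
    ring
  · have hmem : φ - θ ∈ Set.Ioo 0 (2 * π) := by
      constructor <;> linarith [hθ.1, hφ.2]
    rw [Set.indicator_of_notMem fun hmem' => hmem'.2.not_gt h]
    convert ((tendsto_im_sum_exp_mul_I_pow_div hφ).sub
      (tendsto_im_sum_exp_mul_I_pow_div hmem)).div_const π using 2
    field_simp
    ring

/-- The argument of `z` in `[0, 2 * π)`; `eigenAngles` maps it over the eigenvalues. -/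
def circleAngle (z : ℂ) : ℝ :=
  if 0 ≤ Complex.arg z then Complex.arg z else Complex.arg z + 2 * π

lemma circleAngle_mem_Ico (z : ℂ) : circleAngle z ∈ Set.Ico 0 (2 * π) := by
  rw [circleAngle]
  split_ifs <;> constructor <;> linarith [Complex.neg_pi_lt_arg z, Complex.arg_le_pi z, Real.pi_pos]

lemma exp_circleAngle_mul_I {z : ℂ} (hz : ‖z‖ = 1) :
    Complex.exp (circleAngle z * Complex.I) = z := by
  have harg : Complex.exp (Complex.arg z * Complex.I) = z := by
    simpa [hz] using Complex.norm_mul_exp_arg_mul_I z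
  rw [circleAngle]
  split_ifs
  · exact harg
  · rw [exp_add_two_pi_mul_I, harg]

lemma tendsto_im_sum_arcCoeff_mul_pow_circleAngle {θ : ℝ} (hθ : θ ∈ Set.Icc 0 (2 * π)) {z : ℂ}
    (hz : ‖z‖ = 1) (hz1 : z ≠ 1) (hzθ : z ≠ Complex.exp (θ * Complex.I)) :
    Tendsto (fun K => (∑ m ∈ Finset.range K, arcCoeff θ m * z ^ m).im / π) atTop
      (𝓝 ((Set.Icc 0 θ).indicator 1 (circleAngle z) - θ / (2 * π))) := by
  have hexp := exp_circleAngle_mul_I hz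
  have hpos : circleAngle z ≠ 0 := fun h => hz1 (by simpa [h] using hexp.symm)
  have hmem : circleAngle z ∈ Set.Ioo 0 (2 * π) :=
    ⟨(circleAngle_mem_Ico z).1.lt_of_ne' hpos, (circleAngle_mem_Ico z).2⟩
  simpa only [hexp] using
    tendsto_im_sum_arcCoeff_mul_pow hθ hmem fun h => hzθ (by rw [← hexp, h])

variable {n : Type*} [Fintype n] [DecidableEq n]

open scoped Matrix.Norms.L2Operator in
lemma norm_eq_one_of_mem_roots_charpoly {U : Matrix n n ℂ} (hU : U ∈ unitaryGroup n ℂ) {z : ℂ}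
    (hz : z ∈ U.charpoly.roots) : ‖z‖ = 1 :=
  spectrum.norm_eq_one_of_unitary hU
    (Matrix.mem_spectrum_of_isRoot_charpoly (Polynomial.isRoot_of_mem_roots hz))

lemma arcSum_eq_sum_roots (θ : ℝ) (K : ℕ) (M : Matrix n n ℂ) :
    arcSum θ K M =
      (M.charpoly.roots.map fun z => ∑ m ∈ Finset.range K, arcCoeff θ m * z ^ m).sum := by
  simp only [arcSum, trace_pow_eq_sum_roots, ← Multiset.sum_map_mul_left]
  exact Multiset.sum_map_sum_map _ _

lemma countP_mem_eq_sum_indicator {α : Type*} (s : Multiset α) (A : Set α)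
    [DecidablePred (· ∈ A)] : (s.countP (· ∈ A) : ℝ) = (s.map (A.indicator 1)).sum := by
  induction s using Multiset.induction_on with
  | empty => simp
  | cons a s ih =>
    rw [Multiset.countP_cons, Multiset.map_cons, Multiset.sum_cons, Nat.cast_add, ih, add_comm,
      Set.indicator_apply]
    simp

lemma countFun_eq_sum_roots (N : ℕ) (U : unitaryGroup (Fin N) ℂ) (θ : ℝ) :
    (countFun N U θ : ℝ) = ((U : Matrix (Fin N) (Fin N) ℂ).charpoly.roots.map fun z =>
      (Set.Icc 0 θ).indicator 1 (circleAngle z)).sum := by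
  rw [countFun, countAngles, ← Multiset.countP_eq_card_filter, countP_mem_eq_sum_indicator,
    eigenAngles, Multiset.map_map]
  rfl

lemma tendsto_im_arcSum_div_pi {N : ℕ} {U : unitaryGroup (Fin N) ℂ} {θ : ℝ}
    (hθ : θ ∈ Set.Icc 0 (2 * π))
    (h1 : 1 ∉ (U : Matrix (Fin N) (Fin N) ℂ).charpoly.roots)
    (hexp : Complex.exp (θ * Complex.I) ∉ (U : Matrix (Fin N) (Fin N) ℂ).charpoly.roots) :
    Tendsto (fun K => (arcSum θ K (U : Matrix (Fin N) (Fin N) ℂ)).im / π) atTop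
      (𝓝 (countFun N U θ - N * (θ / (2 * π)))) := by
  have hsum := tendsto_multiset_sum (U : Matrix (Fin N) (Fin N) ℂ).charpoly.roots fun z hz =>
    tendsto_im_sum_arcCoeff_mul_pow_circleAngle hθ (norm_eq_one_of_mem_roots_charpoly U.2 hz)
      (ne_of_mem_of_not_mem hz h1) (ne_of_mem_of_not_mem hz hexp)
  have him (K : ℕ) : (arcSum θ K (U : Matrix (Fin N) (Fin N) ℂ)).im / π =
      ((U : Matrix (Fin N) (Fin N) ℂ).charpoly.roots.map fun z =>
        (∑ m ∈ Finset.range K, arcCoeff θ m * z ^ m).im / π).sum := by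
    rw [arcSum_eq_sum_roots, Multiset.sum_map_div, ← Complex.coe_imAddGroupHom, map_multiset_sum,
      Multiset.map_map]
    rfl
  simp only [him]
  rwa [Multiset.sum_map_sub, ← countFun_eq_sum_roots, Multiset.map_const', Multiset.sum_replicate,
    card_roots_charpoly, Fintype.card_fin, nsmul_eq_mul] at hsum

end CountingFunction

section EigenvalueNull

open Matrix

variable {n : Type*} [Fintype n] [DecidableEq n]

lemma isClosed_setOf_mem_roots_charpoly (ω : ℂ) :
    IsClosed {U : unitaryGroup n ℂ | ω ∈ (U : Matrix n n ℂ).charpoly.roots} := by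
  simp only [Polynomial.mem_roots (charpoly_monic _).ne_zero, Polynomial.IsRoot.def, eval_charpoly]
  exact isClosed_eq (by fun_prop) continuous_const

lemma mem_roots_charpoly_smul {ω : ℂ} (hω : ω ≠ 0) (M : Matrix n n ℂ) :
    ω ∈ (ω • M).charpoly.roots ↔ 1 ∈ M.charpoly.roots := by
  have hdet : (scalar n ω - ω • M).det = ω ^ Fintype.card n * (scalar n 1 - M).det := by
    rw [← det_smul, smul_sub, map_one, scalar_apply, smul_one_eq_diagonal]
  simp only [Polynomial.mem_roots (charpoly_monic _).ne_zero, Polynomial.IsRoot.def, eval_charpoly,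
    hdet, mul_eq_zero, pow_ne_zero _ hω, false_or]

variable [MeasurableSpace (unitaryGroup n ℂ)] [BorelSpace (unitaryGroup n ℂ)]
  {μ : Measure (unitaryGroup n ℂ)} [μ.IsMulLeftInvariant]

lemma measure_setOf_mem_roots_charpoly_eq (ω : Circle) :
    μ {U | (ω : ℂ) ∈ (U : Matrix n n ℂ).charpoly.roots} =
      μ {U | 1 ∈ (U : Matrix n n ℂ).charpoly.roots} := by
  have hmem : (ω : ℂ) • (1 : Matrix n n ℂ) ∈ unitaryGroup n ℂ := by
    rw [mem_unitaryGroup_iff, star_smul, star_one, smul_mul_smul_comm, mul_one, Complex.star_def,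
      Complex.mul_conj', Circle.norm_coe]
    simp
  rw [← measure_preimage_mul μ ⟨(ω : ℂ) • 1, hmem⟩]
  congr 1
  ext U
  simpa using mem_roots_charpoly_smul ω.coe_ne_zero (U : Matrix n n ℂ)

lemma infinite_circle : Infinite Circle :=
  have := (Set.Ioc_infinite (neg_lt_self Real.pi_pos)).to_subtype
  Circle.argEquiv.infinite_iff.mpr this

lemma measure_setOf_mem_roots_charpoly_eq_zero [IsFiniteMeasure μ] (ω : Circle) :
    μ {U | (ω : ℂ) ∈ (U : Matrix n n ℂ).charpoly.roots} = 0 := by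
  have := infinite_circle
  let e := Infinite.natEmbedding Circle
  have hfinite (U : unitaryGroup n ℂ) :
      {k | (e k : ℂ) ∈ (U : Matrix n n ℂ).charpoly.roots}.Finite :=
    ((U : Matrix n n ℂ).charpoly.roots.finite_toSet).preimage
      (Circle.coe_injective.comp e.injective).injOn
  have hlim := tendsto_measure_of_tendsto_indicator_of_isFiniteMeasure (A := ∅) atTop μ
    (As := fun k => {U : unitaryGroup n ℂ | (e k : ℂ) ∈ (U : Matrix n n ℂ).charpoly.roots})
    (fun k => (isClosed_setOf_mem_roots_charpoly _).measurableSet) fun U => by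
      simpa [← Nat.cofinite_eq_atTop] using (hfinite U).eventually_cofinite_notMem
  simp only [measure_setOf_mem_roots_charpoly_eq, measure_empty] at hlim ⊢
  exact tendsto_nhds_unique tendsto_const_nhds hlim

lemma ae_notMem_roots_charpoly [IsFiniteMeasure μ] {ω : ℂ} (hω : ‖ω‖ = 1) :
    ∀ᵐ U : unitaryGroup n ℂ ∂μ, ω ∉ (U : Matrix n n ℂ).charpoly.roots :=
  measure_eq_zero_iff_ae_notMem.mp
    (measure_setOf_mem_roots_charpoly_eq_zero ⟨ω, mem_sphere_zero_iff_norm.mpr hω⟩)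

end EigenvalueNull

section Variance

open Topology ProbabilityTheory

variable {Ω : Type*} {mΩ : MeasurableSpace Ω} {P : Measure Ω}

lemma integral_sq_le_of_ae_tendsto {X : Ω → ℝ} {Y : ℕ → Ω → ℝ} {C : ℝ}
    (hY : ∀ k, MemLp (Y k) 2 P) (hXY : ∀ᵐ ω ∂P, Tendsto (Y · ω) atTop (𝓝 (X ω)))
    (hC : ∀ k, ∫ ω, Y k ω ^ 2 ∂P ≤ C) : ∫ ω, X ω ^ 2 ∂P ≤ C := by
  have hX : AEStronglyMeasurable X P :=
    aestronglyMeasurable_of_tendsto_ae atTop (fun k => (hY k).aestronglyMeasurable) hXY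
  have hC0 : 0 ≤ C := (integral_nonneg fun ω => sq_nonneg _).trans (hC 0)
  rw [integral_eq_lintegral_of_nonneg_ae (ae_of_all _ fun ω => sq_nonneg _) (hX.pow 2)]
  refine ENNReal.toReal_le_of_le_ofReal hC0 ?_
  calc ∫⁻ ω, ENNReal.ofReal (X ω ^ 2) ∂P
      = ∫⁻ ω, liminf (fun k => ENNReal.ofReal (Y k ω ^ 2)) atTop ∂P :=
        lintegral_congr_ae (hXY.mono fun ω hω =>
          (ENNReal.tendsto_ofReal (hω.pow 2)).liminf_eq.symm)
    _ ≤ liminf (fun k => ∫⁻ ω, ENNReal.ofReal (Y k ω ^ 2) ∂P) atTop :=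
        lintegral_liminf_le' fun k => ((hY k).aemeasurable.pow_const 2).ennreal_ofReal
    _ ≤ ENNReal.ofReal C := by
        refine liminf_le_of_frequently_le' (Frequently.of_forall fun k => ?_)
        rw [← ofReal_integral_eq_lintegral_ofReal (hY k).integrable_sq
          (ae_of_all _ fun ω => sq_nonneg _)]
        exact ENNReal.ofReal_le_ofReal (hC k)

lemma variance_le_of_ae_tendsto_sub_const [IsProbabilityMeasure P] {X : Ω → ℝ} {Y : ℕ → Ω → ℝ}
    {c C : ℝ} (hY : ∀ k, MemLp (Y k) 2 P) (hXY : ∀ᵐ ω ∂P, Tendsto (Y · ω) atTop (𝓝 (X ω - c)))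
    (hC : ∀ k, ∫ ω, Y k ω ^ 2 ∂P ≤ C) : Var[X; P] ≤ C := by
  have hXc : AEStronglyMeasurable (fun ω => X ω - c) P :=
    aestronglyMeasurable_of_tendsto_ae atTop (fun k => (hY k).aestronglyMeasurable) hXY
  have hX : AEStronglyMeasurable X P := by
    simpa using hXc.add_const c
  rw [← variance_sub_const hX c]
  exact (variance_le_expectation_sq hXc).trans (integral_sq_le_of_ae_tendsto hY hXY hC)

open Matrix in
lemma variance_countFun_le_harmonic {N : ℕ} {μ : Measure (unitaryGroup (Fin N) ℂ)}
    [IsProbabilityMeasure μ] [μ.IsMulLeftInvariant] {θ : ℝ} (hθ : θ ∈ Set.Icc 0 (2 * π)) :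
    Var[fun U : unitaryGroup (Fin N) ℂ => (countFun N U θ : ℝ); μ] ≤ harmonic N := by
  refine variance_le_of_ae_tendsto_sub_const (P := μ) (c := N * (θ / (2 * π)))
    (Y := fun K U => (arcSum θ K (U : Matrix (Fin N) (Fin N) ℂ)).im / π)
    (fun K => ?_) ?_ (fun K => ?_)
  · exact Continuous.memLp_of_hasCompactSupport (by unfold arcSum; fun_prop)
      (HasCompactSupport.of_compactSpace _)
  · filter_upwards [ae_notMem_roots_charpoly norm_one,
      ae_notMem_roots_charpoly (Complex.norm_exp_ofReal_mul_I θ)] with U h1 hexp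
    exact tendsto_im_arcSum_div_pi hθ h1 hexp
  · simpa using integral_arcSum_im_div_pi_sq_le (μ := μ) θ K

end Variance

end

/-- For a Haar-distributed `N × N` unitary matrix and `θ ∈ [0, 2π]`, `Var 𝒩_θ ≤ log(eN)`. -/
theorem variance_counting_function_le
    (N : ℕ) (hN : 1 ≤ N) (ℙ : Measure (Matrix.unitaryGroup (Fin N) ℂ))
    (hprob : IsProbabilityMeasure ℙ) (hhaar : ℙ.IsHaarMeasure)
    (θ : ℝ) (hθ : θ ∈ Set.Icc 0 (2 * π)) :
    ProbabilityTheory.variance (fun U => (countFun N U θ : ℝ)) ℙ ≤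
      Real.log (Real.exp 1 * N) := by
  calc _ ≤ (harmonic N : ℝ) := variance_countFun_le_harmonic hθ
    _ ≤ 1 + Real.log N := harmonic_le_one_add_log N
    _ = Real.log (Real.exp 1 * N) := by
        rw [Real.log_mul (Real.exp_ne_zero 1) (by positivity), Real.log_exp]
end

section
/- Let U be an N × N random unitary matrix distributed according to Haar measure on U(N). If 3π/(2N) ≤ θ ≤ π/2, then the variance of the eigenvalue counting function satisfies (1/(3π²)) · log(2Nθ/(3π)) ≤ Var(𝒩_θ) ≤ (1/2) · log(e^{3/2} N θ). -/
open MeasureTheory Real Filter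

/-!
Loop (Schwinger–Dyson) equations: left invariance makes the integral of every derivative along
`exp (i t X) U` vanish. Applied to `conj p_k e_r h_m`, where `p_k = tr U ^ k` and `e_r`, `h_m` are
the elementary and complete symmetric functions of the eigenvalues, they close up on the moments
`E[conj p_k e_r h_{k-r}]` and determine them, because `e_r = 0` for `r > N`. Since
`∑ r e_r h_{k-r}` is `p_k` up to sign, this gives `E |tr U ^ k| ^ 2 = min k N`.

Invariance under scalars makes distinct powers orthogonal, so the variance of `∑ g (θ_j)` is
`∑ min |k| N |ĝ k| ^ 2`. For the indicator of the arc from `0` to `θ` this reads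
`π ^ 2 Var 𝒩_θ = ∑_{k ≥ 1} min k N (1 - cos (k θ)) / k ^ 2`, and a comparison with the harmonic
series between the frequencies of order `1 / θ` and `N` produces the logarithm.
-/

namespace UnitaryCounting

section RootsOfCharpoly

open Polynomial

variable {K n : Type*} [Field K] [IsAlgClosed K] [Fintype n] [DecidableEq n]

lemma card_roots_charpoly (M : Matrix n n K) :
    Multiset.card M.charpoly.roots = Fintype.card n := by
  rw [← (IsAlgClosed.splits M.charpoly).natDegree_eq_card_roots, M.charpoly_natDegree_eq_dim]

lemma det_aeval_X_sub_C (M : Matrix n n K) (a : K) :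
    (aeval M (X - C a)).det = (M.charpoly.roots.map fun z => z - a).prod := by
  have haeval : aeval M (X - C a) = -(Matrix.scalar n a - M) := by
    simp [Algebra.algebraMap_eq_smul_one, Matrix.smul_one_eq_diagonal]
  have heval : M.charpoly.eval a = (M.charpoly.roots.map fun z => a - z).prod := by
    conv_lhs => rw [(IsAlgClosed.splits M.charpoly).eq_prod_roots_of_monic M.charpoly_monic]
    simp [eval_multiset_prod, Multiset.map_map]
  have hneg : (fun z => z - a) = fun z => -1 * (a - z) := by ext; ring
  rw [haeval, Matrix.det_neg, ← M.eval_charpoly, heval, hneg, Multiset.prod_map_mul]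
  simp [card_roots_charpoly]

lemma det_aeval_eq_prod_roots_charpoly (M : Matrix n n K) (q : K[X]) :
    (aeval M q).det = (M.charpoly.roots.map fun z => q.eval z).prod := by
  have hdet_prod (s : Multiset K[X]) :
      (aeval M s.prod).det = (s.map fun f => (aeval M f).det).prod :=
    map_multiset_prod (Matrix.detMonoidHom.comp (aeval M : K[X] →ₐ[K] _).toMonoidHom) s
  have heval (z : K) : q.eval z = q.leadingCoeff * (q.roots.map fun a => z - a).prod := by
    conv_lhs => rw [(IsAlgClosed.splits q).eq_prod_roots]
    simp [eval_multiset_prod, Multiset.map_map]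
  have hconst : (aeval M (C q.leadingCoeff)).det = q.leadingCoeff ^ Fintype.card n := by
    simp [Algebra.algebraMap_eq_smul_one]
  conv_lhs => rw [(IsAlgClosed.splits q).eq_prod_roots]
  simp_rw [heval]
  rw [map_mul, Matrix.det_mul, hconst, hdet_prod, Multiset.map_map, Multiset.prod_map_mul,
    Multiset.prod_map_prod_map, Multiset.map_const', Multiset.prod_replicate, card_roots_charpoly]
  exact congrArg _ (congrArg _ (Multiset.map_congr rfl fun a _ => det_aeval_X_sub_C M a))

lemma trace_pow_eq_sum_roots_charpoly (M : Matrix n n K) (k : ℕ) :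
    (M ^ k).trace = (M.charpoly.roots.map fun z => z ^ k).sum := by
  suffices (M ^ k).charpoly = ((M.charpoly.roots.map (· ^ k)).map fun a => X - C a).prod by
    rw [Matrix.trace_eq_sum_roots_charpoly, this, roots_multiset_prod_X_sub_C]
  refine Polynomial.funext fun a => ?_
  have haeval : Matrix.scalar n a - M ^ k = aeval M (C a - X ^ k) := by
    simp [Algebra.algebraMap_eq_smul_one, Matrix.smul_one_eq_diagonal]
  rw [Matrix.eval_charpoly, haeval, det_aeval_eq_prod_roots_charpoly, eval_multiset_prod,
    Multiset.map_map, Multiset.map_map]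
  simp

end RootsOfCharpoly

lemma sum_range_sum_range_sub_succ {M : Type*} [AddCommMonoid M] (f : ℕ → ℕ → M) (r : ℕ) :
    ∑ j ∈ Finset.range r, ∑ n ∈ Finset.range (r - (j + 1)), f j n =
      ∑ s ∈ Finset.range (r - 1), ∑ j ∈ Finset.range (s + 1), f j (s - j) := by
  rcases r with _ | r
  · simp
  simp [Finset.sum_range_diag_flip, Finset.sum_range_succ _ r]

section NewtonCoeff

variable {K : Type*} [Field K]

/-- The coefficients `e_r` determined from a sequence `p` of power sums by Newton's recursion
`r e_r = -∑_{i < r} e_{r-1-i} p_{i+1}`, `e_0 = 1`. For the power sums of `z₁, …, z_N` they are the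
coefficients of `∏ (1 - z_i X)`, that is, the signed elementary symmetric functions, and
`newtonCoeff (-p)` are the complete homogeneous ones. -/
def newtonCoeff (p : ℕ → K) : ℕ → K
  | 0 => 1
  | r + 1 => -(r + 1 : K)⁻¹ * ∑ i : Fin (r + 1), newtonCoeff p (r - i) * p (i + 1)

@[simp] lemma newtonCoeff_zero (p : ℕ → K) : newtonCoeff p 0 = 1 := by rw [newtonCoeff]

@[fun_prop]
lemma continuous_newtonCoeff [TopologicalSpace K] [IsTopologicalRing K] {α : Type*}
    [TopologicalSpace α] {p : α → ℕ → K} (hp : ∀ k, Continuous fun x => p x k) (r : ℕ) :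
    Continuous fun x => newtonCoeff (p x) r := by
  induction r using Nat.strong_induction_on with
  | _ r ih =>
    cases r with
    | zero => simpa using continuous_const
    | succ r =>
      unfold newtonCoeff
      exact continuous_const.mul
        (continuous_finsetSum _ fun i _ => (ih _ (by omega)).mul (hp _))

lemma sum_sum_newtonCoeff_mul (p : ℕ → K) (r : ℕ) :
    ∑ j ∈ Finset.range (r + 1), ∑ n ∈ Finset.range (r + 1 - (j + 1)),
        newtonCoeff p (r + 1 - (j + 1) - (n + 1)) * p (j + n + 2) =
      ∑ s ∈ Finset.range (r + 1), s * (newtonCoeff p (r - s) * p (s + 1)) := by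
  rw [sum_range_sum_range_sub_succ, Finset.sum_range_succ' _ r, Nat.cast_zero, zero_mul, add_zero]
  refine Finset.sum_congr rfl fun s _ => ?_
  rw [Finset.sum_congr rfl (g := fun _ => newtonCoeff p (r - (s + 1)) * p (s + 2))]
  · simp
  · intro j hj
    have hjs : j < s + 1 := Finset.mem_range.mp hj
    rw [show r + 1 - (j + 1) - (s - j + 1) = r - (s + 1) by omega,
      show j + (s - j) + 2 = s + 2 by omega]

variable [CharZero K]

lemma mul_newtonCoeff (p : ℕ → K) (r : ℕ) :
    r * newtonCoeff p r =
      -∑ i ∈ Finset.range r, newtonCoeff p (r - (i + 1)) * p (i + 1) := by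
  cases r with
  | zero => simp
  | succ r =>
    have : (r + 1 : K) ≠ 0 := Nat.cast_add_one_ne_zero r
    rw [newtonCoeff, Fin.sum_univ_eq_sum_range fun i => newtonCoeff p (r - i) * p (i + 1)]
    push_cast
    field_simp

lemma newtonCoeff_sum_pow {σ : Type*} [Fintype σ] (z : σ → K) (r : ℕ) :
    newtonCoeff (fun k => ∑ i, z i ^ k) r =
      (-1) ^ r * MvPolynomial.aeval z (MvPolynomial.esymm σ K r) := by
  induction r using Nat.strong_induction_on with
  | _ r ih =>
    rcases r with _ | r
    · simp
    refine mul_left_cancel₀ (Nat.cast_ne_zero.mpr r.succ_ne_zero) ?_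
    have hnewton := congrArg (MvPolynomial.aeval z) (MvPolynomial.mul_esymm_eq_sum σ K (r + 1))
    simp only [Finset.sum_filter, Finset.Nat.sum_antidiagonal_eq_sum_range_succ_mk, map_mul,
      map_pow, map_neg, map_one, map_natCast, map_sum, apply_ite (MvPolynomial.aeval z), map_zero,
      Finset.sum_range_succ _ (r + 1), lt_irrefl, if_false, add_zero, MvPolynomial.psum,
      MvPolynomial.aeval_X] at hnewton
    have hsign : (-1 : K) ^ (r + 1) * (-1) ^ (r + 1 + 1) = -1 := by
      rw [← pow_add]
      exact Odd.neg_one_pow ⟨r + 1, by ring⟩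
    rw [mul_newtonCoeff, mul_left_comm, hnewton, ← mul_assoc, hsign, neg_one_mul,
      ← Finset.sum_range_reflect]
    refine congrArg _ (Finset.sum_congr rfl fun i hi => ?_)
    have hir : i < r + 1 := Finset.mem_range.mp hi
    rw [if_pos hir, ← ih i hir, show r + 1 - 1 - i + 1 = r + 1 - i by omega,
      show r + 1 - (r + 1 - i) = i by omega]

lemma newtonCoeff_eq_zero_of_card_lt (s : Multiset K) {r : ℕ} (hr : Multiset.card s < r) :
    newtonCoeff (fun k => (s.map (· ^ k)).sum) r = 0 := by
  classical
  have hsum (k : ℕ) : (s.map (· ^ k)).sum = ∑ i : s.ToType, (i : K) ^ k :=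
    congrArg Multiset.sum (s.map_univ_comp_coe fun z : K => z ^ k).symm
  have hesymm : MvPolynomial.esymm s.ToType K r = 0 := by
    rw [MvPolynomial.esymm, Finset.powersetCard_eq_empty.mpr (by simpa using hr), Finset.sum_empty]
  simp_rw [hsum, newtonCoeff_sum_pow, hesymm, map_zero, mul_zero]

open PowerSeries in
lemma derivative_mk_newtonCoeff (p : ℕ → K) :
    derivative K (mk (newtonCoeff p)) = -((mk fun n => p (n + 1)) * mk (newtonCoeff p)) := by
  ext n
  have hrec := mul_newtonCoeff p (n + 1)
  simp only [Nat.add_sub_add_right, Nat.cast_add, Nat.cast_one, mul_comm] at hrec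
  simpa [coeff_derivative, mul_comm (newtonCoeff p (n + 1)), coeff_mul,
    Finset.Nat.sum_antidiagonal_eq_sum_range_succ_mk] using hrec

open PowerSeries in
lemma mk_newtonCoeff_mul_mk_newtonCoeff_neg (p : ℕ → K) :
    mk (newtonCoeff p) * mk (newtonCoeff (-p)) = 1 := by
  refine derivative.ext ?_ ?_
  · have hneg : (mk fun n => (-p) (n + 1)) = -mk fun n => p (n + 1) := by ext; simp
    simp only [Derivation.leibniz, derivative_mk_newtonCoeff, smul_eq_mul, hneg,
      Derivation.map_one_eq_zero]
    ring
  · simp [← coeff_zero_eq_constantCoeff_apply, -coeff_zero_eq_constantCoeff, coeff_mul]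

lemma sum_newtonCoeff_mul_newtonCoeff_neg (p : ℕ → K) {k : ℕ} (hk : k ≠ 0) :
    ∑ r ∈ Finset.range (k + 1), newtonCoeff p r * newtonCoeff (-p) (k - r) = 0 := by
  have h := congrArg (PowerSeries.coeff k) (mk_newtonCoeff_mul_mk_newtonCoeff_neg p)
  simpa [PowerSeries.coeff_mul, Finset.Nat.sum_antidiagonal_eq_sum_range_succ_mk,
    PowerSeries.coeff_one, hk] using h

open PowerSeries in
lemma sum_mul_newtonCoeff_mul_newtonCoeff_neg (p : ℕ → K) {k : ℕ} (hk : k ≠ 0) :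
    ∑ r ∈ Finset.range (k + 1), r * (newtonCoeff p r * newtonCoeff (-p) (k - r)) = -p k := by
  obtain ⟨k, rfl⟩ := Nat.exists_eq_succ_of_ne_zero hk
  have hlog : derivative K (mk (newtonCoeff p)) * mk (newtonCoeff (-p)) =
      -mk fun n => p (n + 1) := by
    linear_combination mk (newtonCoeff (-p)) * derivative_mk_newtonCoeff p -
      (mk fun n => p (n + 1)) * mk_newtonCoeff_mul_mk_newtonCoeff_neg p
  have hcoeff := congrArg (coeff k) hlog
  simp only [coeff_mul, Finset.Nat.sum_antidiagonal_eq_sum_range_succ_mk, coeff_derivative,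
    coeff_mk, map_neg] at hcoeff
  rw [Finset.sum_range_succ', Nat.succ_eq_add_one, ← hcoeff]
  simp [mul_comm, mul_assoc]

lemma sum_newtonCoeff_mul_sum_mul (p : ℕ → K) (r : ℕ) :
    ∑ j ∈ Finset.range (r + 1),
        newtonCoeff p (r - j) * ∑ l ∈ Finset.range j, p (j - l) * p (l + 1) =
      -∑ l ∈ Finset.range (r + 1), ((r - l : ℕ) : K) * newtonCoeff p (r - l) * p (l + 1) := by
  rw [Finset.sum_range_succ', Finset.sum_range_succ _ r]
  simp only [Finset.sum_range_zero, mul_zero, add_zero, tsub_self, Nat.cast_zero, zero_mul,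
    mul_newtonCoeff, neg_mul, Finset.sum_neg_distrib, neg_neg, Finset.sum_mul, Finset.mul_sum]
  rw [← Finset.sum_range_diag_flip r fun l i =>
    newtonCoeff p (r - l - (i + 1)) * p (i + 1) * p (l + 1)]
  refine Finset.sum_congr rfl fun s _ => Finset.sum_congr rfl fun l hl => ?_
  have hls : l < s + 1 := Finset.mem_range.mp hl
  rw [mul_assoc, show s + 1 - l = s - l + 1 by omega,
    show r - l - (s - l + 1) = r - (s + 1) by omega]

lemma sum_newtonCoeff_mul_loop (p : ℕ → K) (r : ℕ) :
    ∑ j ∈ Finset.range r,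
      (newtonCoeff p (r - (j + 1)) * ∑ l ∈ Finset.range (j + 1), p (j + 1 - l) * p l -
        ∑ n ∈ Finset.range (r - (j + 1)),
          newtonCoeff p (r - (j + 1) - (n + 1)) * p (j + n + 2)) =
      -((p 0 + 1 - r) * r * newtonCoeff p r) := by
  rcases r with _ | r
  · simp
  have hcombine : ∑ s ∈ Finset.range (r + 1), s * (newtonCoeff p (r - s) * p (s + 1)) +
        ∑ l ∈ Finset.range (r + 1), ((r - l : ℕ) : K) * newtonCoeff p (r - l) * p (l + 1) =
      r * ∑ i ∈ Finset.range (r + 1), newtonCoeff p (r - i) * p (i + 1) := by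
    rw [← Finset.sum_add_distrib, Finset.mul_sum]
    refine Finset.sum_congr rfl fun s hs => ?_
    rw [Nat.cast_sub (Finset.mem_range_succ_iff.mp hs)]
    ring
  have hloop (j : ℕ) : ∑ l ∈ Finset.range (j + 1), p (j + 1 - l) * p l =
      ∑ l ∈ Finset.range j, p (j - l) * p (l + 1) + p (j + 1) * p 0 := by
    simp [Finset.sum_range_succ']
  have hzero : ∑ j ∈ Finset.range (r + 1), newtonCoeff p (r - j) * (p (j + 1) * p 0) =
      (∑ j ∈ Finset.range (r + 1), newtonCoeff p (r - j) * p (j + 1)) * p 0 := by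
    simp only [Finset.sum_mul, mul_assoc]
  have hrec := mul_newtonCoeff p (r + 1)
  have hdouble := sum_sum_newtonCoeff_mul p r
  simp only [Nat.add_sub_add_right, Nat.cast_add, Nat.cast_one] at hrec hdouble
  simp only [Finset.sum_sub_distrib, Nat.add_sub_add_right, Nat.cast_add, Nat.cast_one, hdouble,
    hloop, mul_add, Finset.sum_add_distrib, hzero, sum_newtonCoeff_mul_sum_mul]
  linear_combination -hcombine + (p 0 - r) * hrec

/-- The sum produced by pairing the gradients of the Newton coefficients of `p` and `-p`. -/
def newtonCross (p : ℕ → K) (r m : ℕ) : K :=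
  ∑ j ∈ Finset.range r, ∑ n ∈ Finset.range m,
    newtonCoeff p (r - (j + 1)) * (newtonCoeff (-p) (m - (n + 1)) * p (j + n + 2))

lemma newtonCross_succ_left (p : ℕ → K) (r m : ℕ) :
    newtonCross p (r + 1) m = newtonCross p r (m + 1) +
      (r + 1) * newtonCoeff p (r + 1) * newtonCoeff (-p) m +
      (m + 1) * newtonCoeff p r * newtonCoeff (-p) (m + 1) := by
  have hr := mul_newtonCoeff p (r + 1)
  have hm := mul_newtonCoeff (-p) (m + 1)
  simp only [Nat.cast_add, Nat.cast_one, Finset.sum_range_succ' _ r, Finset.sum_range_succ' _ m,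
    Nat.add_sub_add_right, Nat.sub_zero, zero_add, Pi.neg_apply, mul_neg,
    Finset.sum_neg_distrib] at hr hm
  have hshift (j n : ℕ) : j + (n + 1) + 2 = j + 1 + n + 2 := by omega
  simp only [newtonCross, Finset.sum_range_succ' _ r, Finset.sum_range_succ' _ m,
    Finset.sum_add_distrib, Nat.add_sub_add_right, Nat.sub_zero, zero_add, add_zero, hshift,
    ← Finset.mul_sum, mul_left_comm (newtonCoeff p _) (newtonCoeff (-p) m)]
  linear_combination -newtonCoeff (-p) m * hr - newtonCoeff p r * hm

lemma newtonCross_eq (p : ℕ → K) (r m : ℕ) :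
    newtonCross p r m = r * newtonCoeff p r * newtonCoeff (-p) m +
      (r + m) * ∑ j ∈ Finset.range r, newtonCoeff p j * newtonCoeff (-p) (r + m - j) := by
  induction r generalizing m with
  | zero => simp [newtonCross]
  | succ r ih =>
    rw [newtonCross_succ_left, ih, Finset.sum_range_succ, add_right_comm r 1 m, ← add_assoc,
      add_assoc r m 1, Nat.add_sub_cancel_left]
    push_cast
    ring

end NewtonCoeff

section MatrixUnits

variable {n R : Type*} [Fintype n] [DecidableEq n] [CommSemiring R]

lemma sum_trace_single_mul_mul_trace_single_mul (P Q : Matrix n n R) :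
    ∑ a, ∑ b, (Matrix.single b a 1 * P).trace * (Matrix.single a b 1 * Q).trace =
      (P * Q).trace := by
  simp only [Matrix.trace_single_mul]
  simp [Matrix.trace, Matrix.mul_apply]

lemma sum_trace_single_mul_mul_single_mul (P Q : Matrix n n R) :
    ∑ a, ∑ b, (Matrix.single a b 1 * (P * Matrix.single b a 1 * Q)).trace =
      P.trace * Q.trace := by
  simp only [← Matrix.mul_assoc, Matrix.single_mul_mul_single, Matrix.trace_single_mul]
  rw [Finset.sum_comm]
  simp [Matrix.trace, Finset.sum_mul_sum]

end MatrixUnits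

section UnitaryGroup

open Matrix selfAdjoint
open scoped Matrix.Norms.L2Operator

variable {n : Type*} [Fintype n] [DecidableEq n]

instance compactSpace_unitaryGroup : CompactSpace (unitaryGroup n ℂ) := by
  have := FiniteDimensional.proper ℂ (Matrix n n ℂ)
  refine isCompact_iff_compactSpace.mp
    (Metric.isCompact_of_isClosed_isBounded (isClosed_unitary (R := Matrix n n ℂ)) ?_)
  refine isBounded_iff_forall_norm_le.mpr ⟨1, fun U hU => ?_⟩
  cases subsingleton_or_nontrivial (Matrix n n ℂ)
  · simp [Subsingleton.elim U 0]
  · exact (CStarRing.norm_of_mem_unitary hU).le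

lemma integrable_of_continuous {X E : Type*} [TopologicalSpace X] [CompactSpace X]
    [MeasurableSpace X] [OpensMeasurableSpace X] [NormedAddCommGroup E]
    {μ : Measure X} [IsFiniteMeasureOnCompacts μ] {f : X → E} (hf : Continuous f) :
    Integrable f μ :=
  hf.integrable_of_hasCompactSupport (HasCompactSupport.of_compactSpace f)

lemma hasDerivAt_coe_expUnitary_smul (X : selfAdjoint (Matrix n n ℂ)) :
    HasDerivAt (fun t : ℝ => (expUnitary (t • X) : Matrix n n ℂ)) (Complex.I • X.1) 0 := by
  have h := hasDerivAt_exp_smul_const (Complex.I • X.1) (0 : ℝ)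
  rw [zero_smul, NormedSpace.exp_zero, one_mul] at h
  refine h.congr_of_eventuallyEq (Eventually.of_forall fun t => ?_)
  exact congrArg NormedSpace.exp (smul_comm Complex.I t X.1)

lemma expUnitary_add_smul (X : selfAdjoint (Matrix n n ℂ)) (s t : ℝ) :
    expUnitary ((s + t) • X) = expUnitary (s • X) * expUnitary (t • X) := by
  rw [add_smul]
  exact Commute.expUnitary_add (((Commute.refl X.1).smul_left s).smul_right t)

/-- `D` is the gradient of `F : U(n) → ℂ`, encoded as a matrix field: the derivative of `F` at `U`
along the left translations `exp (i t X) U` is `i tr (X D(U))`, for every Hermitian `X`. -/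
def HasUnitaryGradient (F : unitaryGroup n ℂ → ℂ) (D : unitaryGroup n ℂ → Matrix n n ℂ) : Prop :=
  ∀ (X : selfAdjoint (Matrix n n ℂ)) (U : unitaryGroup n ℂ),
    HasDerivAt (fun t : ℝ => F (expUnitary (t • X) * U)) (Complex.I * (X.1 * D U).trace) 0

namespace HasUnitaryGradient

variable {F F₁ F₂ : unitaryGroup n ℂ → ℂ} {D D₁ D₂ : unitaryGroup n ℂ → Matrix n n ℂ}

lemma const (c : ℂ) : HasUnitaryGradient (n := n) (fun _ => c) fun _ => 0 := fun X U => by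
  simpa using! hasDerivAt_const (0 : ℝ) c

lemma mul (h₁ : HasUnitaryGradient F₁ D₁) (h₂ : HasUnitaryGradient F₂ D₂) :
    HasUnitaryGradient (fun U => F₁ U * F₂ U) fun U => F₂ U • D₁ U + F₁ U • D₂ U := fun X U =>
  ((h₁ X U).mul (h₂ X U)).congr_deriv <| by
    simp only [zero_smul, expUnitary_zero, one_mul, Matrix.mul_add, Matrix.mul_smul,
      Matrix.trace_add, Matrix.trace_smul, smul_eq_mul]
    ring

lemma const_mul (c : ℂ) (h : HasUnitaryGradient F D) :
    HasUnitaryGradient (fun U => c * F U) fun U => c • D U := by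
  simpa using (const c).mul h

lemma sum {ι : Type*} (s : Finset ι) {F : ι → unitaryGroup n ℂ → ℂ}
    {D : ι → unitaryGroup n ℂ → Matrix n n ℂ} (h : ∀ i ∈ s, HasUnitaryGradient (F i) (D i)) :
    HasUnitaryGradient (fun U => ∑ i ∈ s, F i U) fun U => ∑ i ∈ s, D i U := fun X U => by
  simpa only [Matrix.mul_sum, Matrix.trace_sum, Finset.mul_sum]
    using HasDerivAt.fun_sum fun i hi => h i hi X U

lemma conj (h : HasUnitaryGradient F D) :
    HasUnitaryGradient (fun U => starRingEnd ℂ (F U)) fun U => -star (D U) := fun X U =>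
  (h X U).star.congr_deriv <| by
    have hX : X.1ᴴ = X.1 := X.2
    rw [star_mul', ← Matrix.trace_conjTranspose, Matrix.conjTranspose_mul, hX, Matrix.mul_neg,
      Matrix.trace_neg, Matrix.trace_mul_comm]
    simp [Matrix.star_eq_conjTranspose]

lemma trace_mul_pow (A : Matrix n n ℂ) (k : ℕ) :
    HasUnitaryGradient (fun U => (A * U.1 ^ k).trace)
      fun U => ∑ l ∈ Finset.range k, U.1 ^ (k - l) * A * U.1 ^ l := fun X U => by
  let L : Matrix n n ℂ →L[ℝ] ℂ :=
    (((Matrix.traceLinearMap n ℂ ℂ).comp (LinearMap.mulLeft ℂ A)).restrictScalars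
      ℝ).toContinuousLinearMap
  refine (L.hasFDerivAt.comp_hasDerivAt (0 : ℝ)
    (((hasDerivAt_coe_expUnitary_smul X).mul_const U.1).fun_pow' k)).congr_deriv ?_
  change (A * _).trace = _
  rw [Finset.mul_sum, Matrix.mul_sum, Matrix.trace_sum, Matrix.trace_sum, Finset.mul_sum,
    ← Finset.sum_range_reflect]
  refine Finset.sum_congr rfl fun l hl => ?_
  have hl' : l < k := Finset.mem_range.mp hl
  rw [zero_smul, expUnitary_zero, OneMemClass.coe_one, one_mul, Nat.pred_eq_sub_one,
    show k - 1 - (k - 1 - l) = l by omega, show k - l = k - 1 - l + 1 by omega, pow_succ']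
  simp only [Matrix.smul_mul, Matrix.mul_smul, Matrix.trace_smul, smul_eq_mul, Matrix.mul_assoc]
  rw [← Matrix.mul_assoc A, Matrix.trace_mul_comm]
  simp only [Matrix.mul_assoc]

lemma comp_expUnitary_smul_mul (h : HasUnitaryGradient F D) (X : selfAdjoint (Matrix n n ℂ))
    (U : unitaryGroup n ℂ) (t : ℝ) :
    HasDerivAt (fun s : ℝ => F (expUnitary (s • X) * U))
      (Complex.I * (X.1 * D (expUnitary (t • X) * U)).trace) t := by
  have hshift := h X (expUnitary (t • X) * U)
  rw [← sub_self t] at hshift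
  refine (hshift.comp_sub_const t t).congr_of_eventuallyEq (Eventually.of_forall fun s => ?_)
  simp only [← mul_assoc, ← expUnitary_add_smul, sub_add_cancel]

section Integral

variable [MeasurableSpace (unitaryGroup n ℂ)] [BorelSpace (unitaryGroup n ℂ)]
  {μ : Measure (unitaryGroup n ℂ)} [IsFiniteMeasure μ] [μ.IsMulLeftInvariant]

lemma integral_trace_selfAdjoint_mul (h : HasUnitaryGradient F D) (hF : Continuous F)
    (hD : Continuous D) (X : selfAdjoint (Matrix n n ℂ)) : ∫ U, (X.1 * D U).trace ∂μ = 0 := by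
  have hF' : Continuous fun U => Complex.I * (X.1 * D U).trace := by fun_prop
  obtain ⟨C, hC⟩ := isCompact_univ.exists_bound_of_continuousOn hF'.continuousOn
  have hderiv := (hasDerivAt_integral_of_dominated_loc_of_deriv_le (μ := μ) (bound := fun _ => C)
    (F := fun (t : ℝ) U => F (expUnitary (t • X) * U))
    (F' := fun t U => Complex.I * (X.1 * D (expUnitary (t • X) * U)).trace) (x₀ := 0)
    univ_mem (.of_forall fun t => (hF.comp (continuous_const_mul _)).aestronglyMeasurable)
    (integrable_of_continuous (hF.comp (continuous_const_mul _)))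
    (hF'.comp (continuous_const_mul _)).aestronglyMeasurable
    (.of_forall fun U t _ => hC _ (Set.mem_univ _)) (integrable_const C)
    (.of_forall fun U t _ => h.comp_expUnitary_smul_mul X U t)).2
  simp only [integral_mul_left_eq_self] at hderiv
  simpa [integral_const_mul] using hderiv.unique (hasDerivAt_const _ _)

lemma integral_trace_mul (h : HasUnitaryGradient F D) (hF : Continuous F) (hD : Continuous D)
    (A : Matrix n n ℂ) : ∫ U, (A * D U).trace ∂μ = 0 := by
  have hint (B : Matrix n n ℂ) : Integrable (fun U => (B * D U).trace) μ :=
    integrable_of_continuous (by fun_prop)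
  rw [← realPart_add_I_smul_imaginaryPart A]
  simp only [Matrix.add_mul, Matrix.smul_mul, Matrix.trace_add, Matrix.trace_smul, smul_eq_mul]
  rw [integral_add (hint _) ((hint _).const_mul _), integral_const_mul,
    h.integral_trace_selfAdjoint_mul hF hD, h.integral_trace_selfAdjoint_mul hF hD]
  simp

-- Integrate the derivatives of `F U * (U ^ j) a b` in the matrix unit directions and sum over
-- `a` and `b`.
lemma integral_trace_pow_mul_add (h : HasUnitaryGradient F D) (hF : Continuous F)
    (hD : Continuous D) (j : ℕ) :
    ∫ U, ((U.1 ^ j * D U).trace +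
      F U * ∑ l ∈ Finset.range j, (U.1 ^ (j - l)).trace * (U.1 ^ l).trace) ∂μ = 0 := by
  let E (a b : n) : Matrix n n ℂ := Matrix.single a b 1
  let G (a b : n) (U : unitaryGroup n ℂ) : Matrix n n ℂ :=
    (E b a * U.1 ^ j).trace • D U + F U • ∑ l ∈ Finset.range j, U.1 ^ (j - l) * E b a * U.1 ^ l
  have hG (a b : n) : HasUnitaryGradient (fun U => F U * (E b a * U.1 ^ j).trace) (G a b) :=
    h.mul (trace_mul_pow _ j)
  have hGc (a b : n) : Continuous (G a b) := by fun_prop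
  have hint (a b : n) : Integrable (fun U => (E a b * G a b U).trace) μ :=
    integrable_of_continuous (by fun_prop)
  have hsum (U : unitaryGroup n ℂ) : (U.1 ^ j * D U).trace +
      F U * ∑ l ∈ Finset.range j, (U.1 ^ (j - l)).trace * (U.1 ^ l).trace =
      ∑ a, ∑ b, (E a b * G a b U).trace := by
    simp only [G, Matrix.mul_add, Matrix.mul_smul, Matrix.trace_add, Matrix.trace_smul,
      smul_eq_mul, Finset.sum_add_distrib, Matrix.mul_sum, Matrix.trace_sum]
    rw [sum_trace_single_mul_mul_trace_single_mul]
    simp only [← Finset.mul_sum]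
    rw [Finset.sum_congr rfl fun a _ => Finset.sum_comm, Finset.sum_comm]
    simp only [E, sum_trace_single_mul_mul_single_mul]
  simp only [hsum]
  rw [integral_finsetSum _ fun a _ => integrable_finsetSum _ fun b _ => hint a b]
  refine Finset.sum_eq_zero fun a _ => ?_
  rw [integral_finsetSum _ fun b _ => hint a b]
  exact Finset.sum_eq_zero fun b _ => (hG a b).integral_trace_mul (by fun_prop) (hGc a b) _

end Integral

end HasUnitaryGradient

end UnitaryGroup

lemma sum_mul_newtonCoeff_smul_sub {K M : Type*} [Field K] [CharZero K] [AddCommGroup M]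
    [Module K M] (p : ℕ → K) (x : ℕ → M) (r : ℕ) :
    ∑ i ∈ Finset.range r, (((i + 1 : ℕ) * newtonCoeff p (r - (i + 1))) • x i -
      p (i + 1) • ∑ m ∈ Finset.range (r - (i + 1)), newtonCoeff p (r - (i + 1) - (m + 1)) • x m) =
      (r : K) • ∑ m ∈ Finset.range r, newtonCoeff p (r - (m + 1)) • x m := by
  simp only [Finset.sum_sub_distrib, Finset.smul_sum, smul_smul]
  rw [Finset.sum_comm' (t' := Finset.range r) (s' := fun m => Finset.range (r - (m + 1)))
    (by grind), ← Finset.sum_sub_distrib]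
  refine Finset.sum_congr rfl fun m hm => ?_
  rw [← Finset.sum_smul, ← sub_smul]
  congr 1
  have hr : ((r - (m + 1) : ℕ) : K) = r - (m + 1 : ℕ) := Nat.cast_sub (Finset.mem_range.mp hm)
  have h := mul_newtonCoeff p (r - (m + 1))
  rw [hr, ← neg_eq_iff_eq_neg] at h
  have hswap : ∑ i ∈ Finset.range (r - (m + 1)), p (i + 1) *
      newtonCoeff p (r - (i + 1) - (m + 1)) = ∑ i ∈ Finset.range (r - (m + 1)),
      newtonCoeff p (r - (m + 1) - (i + 1)) * p (i + 1) :=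
    Finset.sum_congr rfl fun i _ => by rw [Nat.sub_right_comm, mul_comm]
  linear_combination h - hswap

section PowerTraceMoments

open Matrix

variable {n : Type*} [Fintype n] [DecidableEq n]

/-- The power sum `p_k = tr U ^ k` of the eigenvalues of `U`. -/
def powerTrace (U : unitaryGroup n ℂ) (k : ℕ) : ℂ := (U.1 ^ k).trace

@[simp]
lemma powerTrace_zero (U : unitaryGroup n ℂ) : powerTrace U 0 = Fintype.card n := by
  simp [powerTrace]

@[fun_prop]
lemma continuous_powerTrace (k : ℕ) : Continuous fun U : unitaryGroup n ℂ => powerTrace U k := by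
  unfold powerTrace
  fun_prop

lemma trace_pow_mul_star_pow (U : unitaryGroup n ℂ) {j k : ℕ} (hjk : j ≤ k) :
    (U.1 ^ j * star (U.1 ^ k)).trace = starRingEnd ℂ (powerTrace U (k - j)) := by
  have h : (U ^ j * star (U ^ k)).1 = star (U.1 ^ (k - j)) := by
    rw [← Nat.sub_add_cancel hjk, pow_add, star_mul, Nat.add_sub_cancel, ← mul_assoc,
      Unitary.mul_star_self, one_mul]
    rfl
  calc (U.1 ^ j * star (U.1 ^ k)).trace = (star (U.1 ^ (k - j))).trace := congrArg _ h
    _ = _ := Matrix.trace_conjTranspose _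

lemma hasUnitaryGradient_powerTrace (k : ℕ) :
    HasUnitaryGradient (fun U : unitaryGroup n ℂ => powerTrace U k) fun U => (k : ℂ) • U.1 ^ k := by
  convert HasUnitaryGradient.trace_mul_pow (1 : Matrix n n ℂ) k using 2 with U U
  · rw [one_mul, powerTrace]
  · rw [Finset.sum_congr rfl fun l hl => by
      rw [mul_one, ← pow_add, Nat.sub_add_cancel (Finset.mem_range.mp hl).le]]
    simp [Nat.cast_smul_eq_nsmul]

lemma hasUnitaryGradient_newtonCoeff (c : ℂ) (r : ℕ) :
    HasUnitaryGradient (fun U : unitaryGroup n ℂ => newtonCoeff (c • powerTrace U) r) fun U =>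
      -c • ∑ m ∈ Finset.range r,
        newtonCoeff (c • powerTrace U) (r - (m + 1)) • U.1 ^ (m + 1) := by
  induction r using Nat.strong_induction_on with
  | _ r ih =>
  rcases eq_or_ne r 0 with rfl | hr
  · simpa using HasUnitaryGradient.const 1
  have hr' : (r : ℂ) ≠ 0 := Nat.cast_ne_zero.mpr hr
  convert (HasUnitaryGradient.sum (Finset.range r) fun i hi => (ih (r - (i + 1)) (by grind)).mul
    ((hasUnitaryGradient_powerTrace (i + 1)).const_mul c)).const_mul (-(r : ℂ)⁻¹) using 2 with U U
  · rw [← mul_right_inj' hr', mul_newtonCoeff, ← mul_assoc, mul_neg, mul_inv_cancel₀ hr',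
      neg_one_mul]
    rfl
  · rw [← inv_smul_smul₀ hr' (∑ m ∈ _, _),
      ← sum_mul_newtonCoeff_smul_sub (c • powerTrace U) (fun m => U.1 ^ (m + 1)) r]
    simp only [Finset.smul_sum]
    refine Finset.sum_congr rfl fun i _ => ?_
    simp only [Pi.smul_apply, smul_eq_mul, ← Finset.smul_sum]
    module

lemma newtonCoeff_powerTrace_eq_zero {r : ℕ} (hr : Fintype.card n < r) (U : unitaryGroup n ℂ) :
    newtonCoeff (powerTrace U) r = 0 := by
  have hp : powerTrace U = fun k => (U.1.charpoly.roots.map (· ^ k)).sum :=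
    funext fun k => trace_pow_eq_sum_roots_charpoly U.1 k
  rw [hp]
  exact newtonCoeff_eq_zero_of_card_lt _ (by rwa [card_roots_charpoly])

/-- The gradient of `newtonCoeff p a * newtonCoeff (-p) b`, where `p` are the power sums. -/
noncomputable def newtonGradient (U : unitaryGroup n ℂ) (a b : ℕ) : Matrix n n ℂ :=
  newtonCoeff (powerTrace U) a • ∑ i ∈ Finset.range b,
      newtonCoeff (-powerTrace U) (b - (i + 1)) • U.1 ^ (i + 1) -
    newtonCoeff (-powerTrace U) b • ∑ i ∈ Finset.range a,
      newtonCoeff (powerTrace U) (a - (i + 1)) • U.1 ^ (i + 1)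

@[fun_prop]
lemma continuous_newtonGradient (a b : ℕ) :
    Continuous fun U : unitaryGroup n ℂ => newtonGradient U a b := by
  unfold newtonGradient
  fun_prop

lemma hasUnitaryGradient_newtonCoeff_mul (a b : ℕ) :
    HasUnitaryGradient
      (fun U : unitaryGroup n ℂ => newtonCoeff (powerTrace U) a * newtonCoeff (-powerTrace U) b)
      fun U => newtonGradient U a b := by
  convert (hasUnitaryGradient_newtonCoeff 1 a).mul (hasUnitaryGradient_newtonCoeff (-1) b)
    using 2 <;> simp [newtonGradient]
  module

lemma trace_pow_mul_newtonGradient (U : unitaryGroup n ℂ) (j a b : ℕ) :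
    (U.1 ^ (j + 1) * newtonGradient U a b).trace =
      newtonCoeff (powerTrace U) a * ∑ i ∈ Finset.range b,
          newtonCoeff (-powerTrace U) (b - (i + 1)) * powerTrace U (j + i + 2) -
        newtonCoeff (-powerTrace U) b * ∑ i ∈ Finset.range a,
          newtonCoeff (powerTrace U) (a - (i + 1)) * powerTrace U (j + i + 2) := by
  simp only [newtonGradient, Matrix.mul_sub, Matrix.trace_sub, Matrix.mul_smul, Matrix.mul_sum,
    Matrix.trace_smul, Matrix.trace_sum, smul_eq_mul, ← pow_add, powerTrace,
    show ∀ i, j + 1 + (i + 1) = j + i + 2 by omega]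

lemma sum_newtonCoeff_mul_sum_add_trace (U : unitaryGroup n ℂ) (r m : ℕ) :
    ∑ j ∈ Finset.range r, (newtonCoeff (powerTrace U) (r - (j + 1)) *
        newtonCoeff (-powerTrace U) m * ∑ l ∈ Finset.range (j + 1),
          powerTrace U (j + 1 - l) * powerTrace U l +
        (U.1 ^ (j + 1) * newtonGradient U (r - (j + 1)) m).trace) =
      (r - Fintype.card n) * (r * (newtonCoeff (powerTrace U) r * newtonCoeff (-powerTrace U) m)) +
        (r + m) * ∑ j ∈ Finset.range r,
          newtonCoeff (powerTrace U) j * newtonCoeff (-powerTrace U) (r + m - j) := by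
  have hloop := sum_newtonCoeff_mul_loop (powerTrace U) r
  have hcross := newtonCross_eq (powerTrace U) r m
  rw [Finset.sum_sub_distrib, powerTrace_zero] at hloop
  simp only [newtonCross, ← Finset.mul_sum] at hcross
  simp only [trace_pow_mul_newtonGradient, Finset.sum_add_distrib, Finset.sum_sub_distrib,
    mul_right_comm _ (newtonCoeff (-powerTrace U) m), ← Finset.mul_sum, ← Finset.sum_mul]
  linear_combination newtonCoeff (-powerTrace U) m * hloop + hcross

/-- The mixed moment `E[conj p_{r+m} e_r h_m]` in which `e_r` and `h_m` are, up to the sign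
`(-1) ^ r`, the elementary and complete symmetric polynomials of the eigenvalues. -/
noncomputable def newtonMoment [MeasurableSpace (unitaryGroup n ℂ)]
    (μ : Measure (unitaryGroup n ℂ)) (r m : ℕ) : ℂ :=
  ∫ U, starRingEnd ℂ (powerTrace U (r + m)) *
    (newtonCoeff (powerTrace U) r * newtonCoeff (-powerTrace U) m) ∂μ

section Integral

variable [MeasurableSpace (unitaryGroup n ℂ)] {μ : Measure (unitaryGroup n ℂ)}

lemma newtonMoment_zero_zero [IsProbabilityMeasure μ] :
    newtonMoment μ 0 0 = Fintype.card n := by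
  simp [newtonMoment]

lemma newtonMoment_eq_zero {r : ℕ} (hr : Fintype.card n < r) (m : ℕ) :
    newtonMoment μ r m = 0 := by
  simp [newtonMoment, newtonCoeff_powerTrace_eq_zero hr]

variable [BorelSpace (unitaryGroup n ℂ)] [IsFiniteMeasure μ]

lemma sum_mul_newtonMoment_eq_integral (a : ℕ → ℂ) {s : Finset ℕ} {k : ℕ} (hs : ∀ r ∈ s, r ≤ k) :
    ∑ r ∈ s, a r * newtonMoment μ r (k - r) = ∫ U, starRingEnd ℂ (powerTrace U k) *
      ∑ r ∈ s, a r * (newtonCoeff (powerTrace U) r * newtonCoeff (-powerTrace U) (k - r)) ∂μ := by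
  simp only [newtonMoment, ← integral_const_mul, Finset.mul_sum]
  rw [integral_finsetSum _ fun r _ => integrable_of_continuous (by fun_prop)]
  refine Finset.sum_congr rfl fun r hr => ?_
  simp only [Nat.add_sub_cancel' (hs r hr), mul_left_comm]

lemma sum_newtonMoment {k : ℕ} (hk : k ≠ 0) :
    ∑ r ∈ Finset.range (k + 1), newtonMoment μ r (k - r) = 0 := by
  simpa [sum_newtonCoeff_mul_newtonCoeff_neg _ hk] using
    sum_mul_newtonMoment_eq_integral (μ := μ) 1 (k := k) fun _ => Finset.mem_range_succ_iff.mp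

lemma sum_mul_newtonMoment {k : ℕ} (hk : k ≠ 0) :
    ∑ r ∈ Finset.range (k + 1), r * newtonMoment μ r (k - r) =
      -∫ U, starRingEnd ℂ (powerTrace U k) * powerTrace U k ∂μ := by
  rw [sum_mul_newtonMoment_eq_integral _ fun _ => Finset.mem_range_succ_iff.mp, ← integral_neg]
  simp only [sum_mul_newtonCoeff_mul_newtonCoeff_neg _ hk, mul_neg]

variable [μ.IsMulLeftInvariant]

lemma HasUnitaryGradient.integral_conj_powerTrace_mul {f : unitaryGroup n ℂ → ℂ}
    {G : unitaryGroup n ℂ → Matrix n n ℂ} (h : HasUnitaryGradient f G) (hf : Continuous f)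
    (hG : Continuous G) {j k : ℕ} (hjk : j ≤ k) :
    ∫ U, starRingEnd ℂ (powerTrace U k) * (f U * ∑ l ∈ Finset.range j,
        powerTrace U (j - l) * powerTrace U l + (U.1 ^ j * G U).trace) ∂μ =
      k * ∫ U, starRingEnd ℂ (powerTrace U (k - j)) * f U ∂μ := by
  rw [← integral_const_mul, ← sub_eq_zero, ← integral_sub
    (integrable_of_continuous (by fun_prop)) (integrable_of_continuous (by fun_prop)),
    ← ((hasUnitaryGradient_powerTrace k).conj.mul h).integral_trace_pow_mul_add (μ := μ)
      (by fun_prop) (by fun_prop) j]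
  refine integral_congr_ae (.of_forall fun U => ?_)
  dsimp only
  rw [← trace_pow_mul_star_pow U hjk]
  simp only [star_smul, star_natCast, Matrix.mul_add, Matrix.mul_smul, Matrix.mul_neg,
    Matrix.trace_add, Matrix.trace_smul, Matrix.trace_neg, smul_eq_mul, powerTrace]
  ring

lemma newtonMoment_loop (r m : ℕ) :
    (Fintype.card n - r : ℂ) * r * newtonMoment μ r m = (r + m) *
      (∑ j ∈ Finset.range r, newtonMoment μ j (r + m - j) -
        ∑ j ∈ Finset.range r, newtonMoment μ j m) := by
  have hloop (j : ℕ) (hj : j ∈ Finset.range r) :=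
    (hasUnitaryGradient_newtonCoeff_mul (r - (j + 1)) m).integral_conj_powerTrace_mul (μ := μ)
      (by fun_prop) (by fun_prop) (j := j + 1) (k := r + m) (by grind)
  have hsum := Finset.sum_congr rfl hloop
  rw [← integral_finsetSum _ fun j _ => integrable_of_continuous (by fun_prop)] at hsum
  simp only [← Finset.mul_sum, sum_newtonCoeff_mul_sum_add_trace] at hsum
  have hreflect : ∑ j ∈ Finset.range r, ∫ U, starRingEnd ℂ (powerTrace U (r + m - (j + 1))) *
      (newtonCoeff (powerTrace U) (r - (j + 1)) * newtonCoeff (-powerTrace U) m) ∂μ =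
        ∑ j ∈ Finset.range r, newtonMoment μ j m := by
    rw [← Finset.sum_range_reflect]
    refine Finset.sum_congr rfl fun j hj => ?_
    have hjr : j < r := Finset.mem_range.mp hj
    rw [newtonMoment, show r - (r - 1 - j + 1) = j by omega,
      show r + m - (r - 1 - j + 1) = j + m by omega]
  have hsplit : ∫ U, starRingEnd ℂ (powerTrace U (r + m)) * ((r - Fintype.card n) *
        (r * (newtonCoeff (powerTrace U) r * newtonCoeff (-powerTrace U) m)) + (r + m) *
        ∑ j ∈ Finset.range r, newtonCoeff (powerTrace U) j *
          newtonCoeff (-powerTrace U) (r + m - j)) ∂μ =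
      (r - Fintype.card n) * r * newtonMoment μ r m + (r + m) *
        ∑ j ∈ Finset.range r, newtonMoment μ j (r + m - j) := by
    have hmoment := sum_mul_newtonMoment_eq_integral (μ := μ) 1 (s := Finset.range r) (k := r + m)
      fun j hj => by grind
    simp only [Pi.one_apply, one_mul] at hmoment
    rw [hmoment, newtonMoment, ← integral_const_mul, ← integral_const_mul,
      ← integral_add (integrable_of_continuous (by fun_prop))
        (integrable_of_continuous (by fun_prop))]
    refine integral_congr_ae (.of_forall fun U => ?_)
    dsimp only
    ring
  rw [hsplit, hreflect] at hsum
  push_cast at hsum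
  linear_combination -hsum

end Integral

end PowerTraceMoments

section LoopEquations

open Matrix

variable {K : Type*} [Field K]

lemma sum_range_eq_one_of_loop [CharZero K] {c : ℕ → K} {N k : ℕ} (hk : k ≠ 0)
    (hsum : ∑ j ∈ Finset.range (k + 1), c j = 0)
    (hloop : ∀ r, r ≠ 0 → r ≤ N → r < k →
      (N - r : K) * r * c r = k * (∑ j ∈ Finset.range r, c j - 1))
    (hloop_self : k ≤ N → (N - k : K) * k * c k = k * (∑ j ∈ Finset.range k, c j - (N - k + 1)))
    {r : ℕ} (hr : r ≠ 0) (hrmin : r ≤ min k N) : ∑ j ∈ Finset.range r, c j = 1 := by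
  have hk' : (k : K) ≠ 0 := Nat.cast_ne_zero.mpr hk
  revert hr
  induction hrmin using Nat.decreasingInduction with
  | self =>
    intro hmin
    rcases le_or_gt k N with hkN | hNk
    · have hpos : ((N - k : ℕ) + 1 : K) ≠ 0 := Nat.cast_add_one_ne_zero _
      rw [Nat.cast_sub hkN] at hpos
      rw [Finset.sum_range_succ] at hsum
      rw [min_eq_left hkN]
      refine mul_left_cancel₀ (mul_ne_zero hk' hpos) ?_
      linear_combination (N - k) * k * hsum - hloop_self hkN
    · rw [min_eq_right hNk.le] at hmin ⊢
      refine mul_left_cancel₀ hk' ?_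
      linear_combination -hloop N hmin le_rfl hNk
  | of_succ r hrlt ih =>
    intro hr
    have hrN : r ≤ N := hrlt.le.trans (min_le_right _ _)
    have hpos : (((N - r) * r + k : ℕ) : K) ≠ 0 := Nat.cast_ne_zero.mpr (by omega)
    push_cast [hrN] at hpos
    have hsucc := ih r.succ_ne_zero
    rw [Finset.sum_range_succ] at hsucc
    refine mul_left_cancel₀ hpos ?_
    linear_combination (N - r) * r * hsucc -
      hloop r hr hrN (hrlt.trans_le (min_le_left _ _))

lemma eq_sub_of_sum_range_eq_one {c : ℕ → K} {N k : ℕ} (hkN : min k N ≠ 0)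
    (hvanish : ∀ r, N < r → c r = 0) (hsum : ∑ j ∈ Finset.range (k + 1), c j = 0)
    (hone : ∀ r, r ≠ 0 → r ≤ min k N → ∑ j ∈ Finset.range r, c j = 1) {r : ℕ} (hrk : r ≤ k) :
    c r = (if r = 0 then 1 else 0) - if r = min k N then 1 else 0 := by
  rcases lt_trichotomy r (min k N) with hlt | rfl | hgt
  · have hsucc := hone _ r.succ_ne_zero hlt
    rw [Finset.sum_range_succ] at hsucc
    rw [if_neg hlt.ne, sub_zero]
    split_ifs with hr
    · simpa [hr] using hsucc
    · simpa [hone r hr hlt.le] using hsucc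
  · have htotal : ∑ j ∈ Finset.range (min k N + 1), c j = 0 := by
      rw [← hsum]
      exact Finset.sum_subset (by grind) fun j hj hj' => hvanish _ (by grind)
    rw [Finset.sum_range_succ, hone _ hkN le_rfl] at htotal
    rw [if_neg hkN, if_pos rfl, zero_sub]
    exact eq_neg_of_add_eq_zero_right htotal
  · rw [hvanish _ (by omega), if_neg (by omega), if_neg hgt.ne', sub_zero]

lemma eq_sub_of_loop [CharZero K] {c : ℕ → ℕ → K} {N : ℕ} (hN : N ≠ 0) (hzero : c 0 0 = N)
    (hvanish : ∀ r m, N < r → c r m = 0)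
    (hsum : ∀ k ≠ 0, ∑ j ∈ Finset.range (k + 1), c j (k - j) = 0)
    (hloop : ∀ r m : ℕ, (N - r : K) * r * c r m =
      (r + m) * (∑ j ∈ Finset.range r, c j (r + m - j) - ∑ j ∈ Finset.range r, c j m))
    {k : ℕ} (hk : k ≠ 0) {r : ℕ} (hrk : r ≤ k) :
    c r (k - r) = (if r = 0 then 1 else 0) - if r = min k N then 1 else 0 := by
  induction k using Nat.strong_induction_on generalizing r with
  | _ k ih =>
  refine eq_sub_of_sum_range_eq_one (c := fun j => c j (k - j)) (by omega)
    (fun r hr => hvanish r _ hr) (hsum k hk) (fun r => sum_range_eq_one_of_loop hk (hsum k hk)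
      (fun r hr hrN hrk => ?_) fun hkN => ?_) hrk
  · have hprev : ∑ j ∈ Finset.range r, c j (k - r) =
        ∑ j ∈ Finset.range r, if j = 0 then 1 else 0 := by
      refine Finset.sum_congr rfl fun j hj => ?_
      have hjr : j < r := Finset.mem_range.mp hj
      have h := ih (k - r + j) (by omega) (by omega) (r := j) (by omega)
      rwa [Nat.add_sub_cancel, if_neg (c := j = min _ N) (by omega), sub_zero] at h
    have h := hloop r (k - r)
    rwa [← Nat.cast_add, Nat.add_sub_cancel' hrk.le, hprev, Finset.sum_ite_eq',
      if_pos (by simpa using hr.bot_lt)] at h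
  · obtain ⟨l, rfl⟩ := Nat.exists_eq_succ_of_ne_zero hk
    have hprev : ∑ j ∈ Finset.range l, c (j + 1) 0 = -l := by
      rw [Finset.sum_congr rfl (g := fun _ => -1) fun j hj => ?_]
      · simp
      have hjl : j < l := Finset.mem_range.mp hj
      have h := ih (j + 1) (by omega) (by omega) le_rfl
      rwa [Nat.sub_self, if_neg j.succ_ne_zero, if_pos (by omega), zero_sub] at h
    have h := hloop (l + 1) 0
    rw [Finset.sum_range_succ' (fun j => c j 0), hprev, hzero] at h
    simp only [Nat.succ_eq_add_one, Nat.sub_self, add_zero, Nat.cast_zero] at h ⊢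
    rw [h]
    push_cast
    ring

variable {n : Type*} [Fintype n] [DecidableEq n] [Nonempty n] [MeasurableSpace (unitaryGroup n ℂ)]
  [BorelSpace (unitaryGroup n ℂ)] {μ : Measure (unitaryGroup n ℂ)} [IsProbabilityMeasure μ]
  [μ.IsMulLeftInvariant]

lemma newtonMoment_eq {k : ℕ} (hk : k ≠ 0) {r : ℕ} (hrk : r ≤ k) : newtonMoment μ r (k - r) =
    (if r = 0 then 1 else 0) - if r = min k (Fintype.card n) then 1 else 0 :=
  eq_sub_of_loop Fintype.card_ne_zero newtonMoment_zero_zero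
    (fun _ m hr => newtonMoment_eq_zero hr m) (fun _ => sum_newtonMoment) newtonMoment_loop hk hrk

theorem integral_conj_powerTrace_mul_self {k : ℕ} (hk : k ≠ 0) :
    ∫ U, starRingEnd ℂ (powerTrace U k) * powerTrace U k ∂μ = (min k (Fintype.card n) : ℕ) := by
  have hmoment (r : ℕ) (hr : r ∈ Finset.range (k + 1)) : r * newtonMoment μ r (k - r) =
      -if r = min k (Fintype.card n) then (r : ℂ) else 0 := by
    rw [newtonMoment_eq hk (Finset.mem_range_succ_iff.mp hr)]
    split_ifs <;> simp_all
  rw [← neg_inj, ← sum_mul_newtonMoment (μ := μ) hk, Finset.sum_congr rfl hmoment,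
    Finset.sum_neg_distrib, Finset.sum_ite_eq', if_pos (by simp)]

end LoopEquations

section Orthogonality

open Matrix (unitaryGroup)

variable {n : Type*} [Fintype n] [DecidableEq n]

@[fun_prop]
lemma continuous_trace_zpow (k : ℤ) :
    Continuous fun U : unitaryGroup n ℂ => (U ^ k).1.trace :=
  (continuous_subtype_val.comp (continuous_zpow k)).matrix_trace

lemma trace_inv_unitary (U : unitaryGroup n ℂ) : U⁻¹.1.trace = starRingEnd ℂ U.1.trace :=
  Matrix.trace_conjTranspose U.1

lemma trace_smul_zpow (c : unitary ℂ) (U : unitaryGroup n ℂ) (k : ℤ) :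
    ((c • U) ^ k).1.trace = (c ^ k).1 * (U ^ k).1.trace := by
  have : IsScalarTower (unitary ℂ) (unitaryGroup n ℂ) (unitaryGroup n ℂ) :=
    ⟨fun _ _ _ => Subtype.ext (Matrix.smul_mul _ _ _)⟩
  have : SMulCommClass (unitary ℂ) (unitaryGroup n ℂ) (unitaryGroup n ℂ) :=
    ⟨fun _ _ _ => Subtype.ext (Matrix.mul_smul _ _ _).symm⟩
  exact (congrArg (fun V : unitaryGroup n ℂ => V.1.trace) (smul_zpow c U k)).trans
    (Matrix.trace_smul _ _)

lemma exists_unitary_zpow_eq_neg_one {k : ℤ} (hk : k ≠ 0) : ∃ c : unitary ℂ, c ^ k = -1 := by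
  have hk' : (k : ℂ) ≠ 0 := Int.cast_ne_zero.mpr hk
  refine ⟨⟨Complex.exp (π / k * Complex.I), ?_⟩, Subtype.ext ?_⟩
  · simp [Unitary.mem_iff_self_mul_star, ← Complex.exp_conj, ← Complex.exp_add]
  · rw [Unitary.coe_zpow, ← Complex.exp_int_mul, ← mul_assoc, mul_div_cancel₀ _ hk',
      Complex.exp_pi_mul_I]
    rfl

variable [MeasurableSpace (unitaryGroup n ℂ)] [BorelSpace (unitaryGroup n ℂ)]
  {μ : Measure (unitaryGroup n ℂ)} [μ.IsMulLeftInvariant]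

lemma integral_conj_trace_zpow_mul_of_ne {k l : ℤ} (hkl : k ≠ l) :
    ∫ U, starRingEnd ℂ (U ^ k).1.trace * (U ^ l).1.trace ∂μ = 0 := by
  obtain ⟨c, hc⟩ := exists_unitary_zpow_eq_neg_one (sub_ne_zero.mpr hkl.symm)
  rw [← self_eq_neg, ← integral_neg, ← integral_mul_left_eq_self _ (c • 1)]
  refine integral_congr_ae (.of_forall fun U => ?_)
  have hsmul : (c • 1 : unitaryGroup n ℂ) * U = c • U := Subtype.ext (by simp)
  have hc' : star (c ^ k) * c ^ l = -1 := by
    rw [← hc, Unitary.star_eq_inv, zpow_sub, mul_comm]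
  have hinv : starRingEnd ℂ (c ^ k).1 * (c ^ l).1 = -1 := congrArg Subtype.val hc'
  dsimp only
  rw [hsmul, trace_smul_zpow, trace_smul_zpow, map_mul]
  linear_combination starRingEnd ℂ (U ^ k).1.trace * (U ^ l).1.trace * hinv

variable [Nonempty n]

lemma integral_trace_zpow {k : ℤ} (hk : k ≠ 0) : ∫ U, (U ^ k).1.trace ∂μ = 0 := by
  have h := integral_conj_trace_zpow_mul_of_ne (μ := μ) hk.symm
  simpa [integral_const_mul, Fintype.card_ne_zero] using h

variable [IsProbabilityMeasure μ]

lemma integral_norm_sq_trace_zpow (k : ℤ) :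
    ∫ U, ‖(U ^ k).1.trace‖ ^ 2 ∂μ =
      (if k = 0 then (Fintype.card n : ℝ) ^ 2 else 0) + (min k.natAbs (Fintype.card n) : ℕ) := by
  rcases eq_or_ne k 0 with rfl | hk
  · simp
  have hnorm (U : unitaryGroup n ℂ) : ‖(U ^ k).1.trace‖ = ‖powerTrace U k.natAbs‖ := by
    rcases Int.natAbs_eq k with h | h <;> conv_lhs => rw [h]
    · rw [zpow_natCast]
      rfl
    · rw [zpow_neg, zpow_natCast, trace_inv_unitary, Complex.norm_conj]
      rfl
  have h := integral_conj_powerTrace_mul_self (μ := μ) (Int.natAbs_ne_zero.mpr hk)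
  simp_rw [Complex.conj_mul', ← Complex.ofReal_pow, integral_complex_ofReal] at h
  simp_rw [hnorm, if_neg hk, zero_add]
  exact Complex.ofReal_injective (h.trans (Complex.ofReal_natCast _).symm)

end Orthogonality

section LinearStatistics

open Matrix (unitaryGroup)
open scoped Matrix.Norms.L2Operator

variable {N : ℕ}

/-- The linear eigenvalue statistic `∑ j, g (θ_j)` of a function `g` on the circle `ℝ / 2πℤ`. -/
noncomputable def linStat (g : AddCircle (2 * π) → ℂ) (U : unitaryGroup (Fin N) ℂ) : ℂ :=
  ((eigenAngles N U).map fun t : ℝ => g t).sum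

lemma card_eigenAngles (U : unitaryGroup (Fin N) ℂ) : Multiset.card (eigenAngles N U) = N := by
  simp [eigenAngles, card_roots_charpoly]

lemma mem_Ico_of_mem_eigenAngles {U : unitaryGroup (Fin N) ℂ} {t : ℝ}
    (ht : t ∈ eigenAngles N U) : t ∈ Set.Ico 0 (2 * π) := by
  obtain ⟨z, -, rfl⟩ := Multiset.mem_map.mp ht
  have := Complex.neg_pi_lt_arg z
  have := Complex.arg_le_pi z
  have := pi_pos
  split_ifs <;> constructor <;> linarith

lemma norm_eq_one_of_mem_roots_charpoly {U : unitaryGroup (Fin N) ℂ} {z : ℂ}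
    (hz : z ∈ U.1.charpoly.roots) : ‖z‖ = 1 := by
  have hroot := Polynomial.isRoot_of_mem_roots hz
  rw [← Matrix.mem_spectrum_iff_isRoot_charpoly] at hroot
  simpa using Unitary.spectrum_subset_circle U hroot

lemma map_exp_eigenAngles (U : unitaryGroup (Fin N) ℂ) :
    ((eigenAngles N U).map fun t : ℝ => Complex.exp (t * Complex.I)) = U.1.charpoly.roots := by
  rw [eigenAngles, Multiset.map_map]
  refine (Multiset.map_congr rfl fun z hz => ?_).trans (Multiset.map_id' _)
  have harg : Complex.exp (z.arg * Complex.I) = z := by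
    simpa [norm_eq_one_of_mem_roots_charpoly hz] using Complex.norm_mul_exp_arg_mul_I z
  dsimp only [Function.comp_apply]
  split_ifs
  · exact harg
  · push_cast
    rw [add_mul, Complex.exp_add, harg, Complex.exp_two_pi_mul_I, mul_one]

lemma linStat_fourier (k : ℤ) (U : unitaryGroup (Fin N) ℂ) :
    linStat (fourier k) U = (U ^ k).1.trace := by
  have hnat (m : ℕ) : linStat (fourier (m : ℤ)) U = (U ^ m).1.trace := by
    rw [SubmonoidClass.coe_pow, trace_pow_eq_sum_roots_charpoly, ← map_exp_eigenAngles,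
      Multiset.map_map, linStat]
    congr! 3 with t
    rw [fourier_coe_apply, Function.comp_apply, ← Complex.exp_nat_mul]
    congr 1
    push_cast
    field_simp
  obtain ⟨m, rfl | rfl⟩ := Int.eq_nat_or_neg k
  · rw [hnat, zpow_natCast]
  · rw [zpow_neg, zpow_natCast, trace_inv_unitary, ← hnat]
    simp only [linStat, fourier_neg, map_multiset_sum, Multiset.map_map, Function.comp_def]

lemma norm_linStat_le {g : AddCircle (2 * π) → ℂ} {C : ℝ} (hC : ∀ x, ‖g x‖ ≤ C)
    (U : unitaryGroup (Fin N) ℂ) : ‖linStat g U‖ ≤ N * C := by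
  have h := Multiset.sum_le_card_nsmul ((eigenAngles N U).map fun t : ℝ => ‖g t‖) C (by
    simp only [Multiset.mem_map]
    rintro _ ⟨t, -, rfl⟩
    exact hC t)
  rw [Multiset.card_map, card_eigenAngles, nsmul_eq_mul] at h
  refine le_trans ?_ h
  simpa [linStat, Multiset.map_map] using
    norm_multiset_sum_le ((eigenAngles N U).map fun t : ℝ => g t)

lemma tendsto_linStat {ι : Type*} {l : Filter ι} {g : ι → AddCircle (2 * π) → ℂ}
    {g' : AddCircle (2 * π) → ℂ} (hlim : ∀ x, Tendsto (g · x) l (nhds (g' x)))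
    (U : unitaryGroup (Fin N) ℂ) : Tendsto (fun i => linStat (g i) U) l (nhds (linStat g' U)) :=
  tendsto_multiset_sum _ fun _ _ => hlim _

lemma linStat_sum_smul {ι : Type*} (s : Finset ι) (a : ι → ℂ) (g : ι → AddCircle (2 * π) → ℂ)
    (U : unitaryGroup (Fin N) ℂ) :
    linStat (∑ i ∈ s, a i • g i) U = ∑ i ∈ s, a i * linStat (g i) U := by
  simp only [linStat, Finset.sum_apply, Pi.smul_apply, smul_eq_mul, ← Multiset.sum_map_mul_left]
  exact Multiset.sum_map_sum_map _ s.val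

end LinearStatistics

section FourierMoments

open AddCircle (haarAddCircle)
open Matrix (unitaryGroup)

lemma integral_norm_sq_sum_mul_of_orthogonal {α ι : Type*} [MeasurableSpace α] {μ : Measure α}
    {φ : ι → α → ℂ} (hφ : ∀ k l, Integrable (fun x => starRingEnd ℂ (φ k x) * φ l x) μ)
    (horth : Pairwise fun k l => ∫ x, starRingEnd ℂ (φ k x) * φ l x ∂μ = 0)
    (s : Finset ι) (a : ι → ℂ) :
    ∫ x, ‖∑ k ∈ s, a k * φ k x‖ ^ 2 ∂μ = ∑ k ∈ s, ‖a k‖ ^ 2 * ∫ x, ‖φ k x‖ ^ 2 ∂μ := by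
  apply Complex.ofReal_injective
  push_cast [← integral_complex_ofReal]
  simp_rw [← Complex.conj_mul', map_sum, map_mul, Finset.sum_mul_sum, mul_mul_mul_comm]
  have hint (k l : ι) : Integrable
      (fun x => starRingEnd ℂ (a k) * a l * (starRingEnd ℂ (φ k x) * φ l x)) μ :=
    (hφ k l).const_mul _
  rw [integral_finsetSum _ fun k _ => integrable_finsetSum _ fun l _ => hint k l]
  refine Finset.sum_congr rfl fun k hk => ?_
  rw [integral_finsetSum _ fun l _ => hint k l, Finset.sum_eq_single_of_mem k hk fun l _ hl => by
    rw [integral_const_mul, horth hl.symm, mul_zero], integral_const_mul]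

lemma tendsto_integral_norm_sq_of_bounded {α E : Type*} [MeasurableSpace α] {μ : Measure α}
    [IsFiniteMeasure μ] [NormedAddCommGroup E] {f : ℕ → α → E} {f' : α → E} {C : ℝ}
    (hf : ∀ i, StronglyMeasurable (f i)) (hC : ∀ i x, ‖f i x‖ ≤ C)
    (hlim : ∀ x, Tendsto (f · x) atTop (nhds (f' x))) :
    Tendsto (fun i => ∫ x, ‖f i x‖ ^ 2 ∂μ) atTop (nhds (∫ x, ‖f' x‖ ^ 2 ∂μ)) :=
  tendsto_integral_of_dominated_convergence (fun _ => C ^ 2)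
    (fun i => ((hf i).norm.pow 2).aestronglyMeasurable) (integrable_const _)
    (fun i => .of_forall fun x => by
      rw [norm_pow, norm_norm]
      exact pow_le_pow_left₀ (norm_nonneg _) (hC i x) 2)
    (.of_forall fun x => (hlim x).norm.pow 2)

section AddCircle

variable {T : ℝ} [Fact (0 < T)]

lemma tendsto_fourierCoeff_of_bounded {g : ℕ → AddCircle T → ℂ} {g' : AddCircle T → ℂ} {C : ℝ}
    (hg : ∀ i, AEStronglyMeasurable (g i) haarAddCircle) (hC : ∀ i x, ‖g i x‖ ≤ C)
    (hlim : ∀ x, Tendsto (g · x) atTop (nhds (g' x))) (k : ℤ) :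
    Tendsto (fun i => fourierCoeff (g i) k) atTop (nhds (fourierCoeff g' k)) := by
  unfold fourierCoeff
  refine tendsto_integral_of_dominated_convergence (fun _ => C) (fun i => ?_) (integrable_const _)
    (fun i => .of_forall fun x => ?_) (.of_forall fun x => (hlim x).const_smul _)
  · exact (map_continuous (fourier (-k))).aestronglyMeasurable.smul (hg i)
  · rw [norm_smul, fourier_apply, Circle.norm_coe, one_mul]
    exact hC i x

lemma fourierCoeff_sum_smul_fourier (a : ℤ →₀ ℂ) (k : ℤ) :
    fourierCoeff (∑ l ∈ a.support, a l • ⇑(fourier (T := T) l)) k = a k := by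
  rw [fourierCoeff.sum _ _ fun l _ => integrable_of_continuous (by fun_prop)]
  simp +contextual [fourierCoeff.const_smul, fourierCoeff_fourier, Pi.single_apply, eq_comm]

lemma integral_norm_sq_sum_smul_fourier (s : Finset ℤ) (a : ℤ → ℂ) :
    ∫ x, ‖(∑ l ∈ s, a l • ⇑(fourier (T := T) l)) x‖ ^ 2 ∂haarAddCircle =
      ∑ l ∈ s, ‖a l‖ ^ 2 := by
  have horth : Pairwise fun k l : ℤ =>
      ∫ x : AddCircle T, starRingEnd ℂ (fourier k x) * fourier l x ∂haarAddCircle = 0 := by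
    intro k l hkl
    simpa [fourierCoeff, ← fourier_neg, hkl] using
      congrFun (fourierCoeff_fourier (T := T) l) k
  have h := integral_norm_sq_sum_mul_of_orthogonal
    (fun _ _ => integrable_of_continuous (by fun_prop)) horth s a
  simpa [fourier_apply, Circle.norm_coe] using h

lemma hasSum_sq_fourierCoeff_of_memLp {g : AddCircle T → ℂ}
    (hg : MemLp g 2 haarAddCircle) :
    HasSum (fun k => ‖fourierCoeff g k‖ ^ 2) (∫ x, ‖g x‖ ^ 2 ∂haarAddCircle) := by
  have hae := hg.coeFn_toLp
  rw [← fourierCoeff_congr_ae hae,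
    ← integral_congr_ae (hae.mono fun x hx => congrArg (‖·‖ ^ 2) hx)]
  exact hasSum_sq_fourierCoeff hg.toLp

end AddCircle

lemma fact_two_pi_pos : Fact (0 < 2 * π) := ⟨two_pi_pos⟩

attribute [local instance] fact_two_pi_pos

variable {N : ℕ} {μ : Measure (unitaryGroup (Fin N) ℂ)}

/-- `HasFourierMoments μ g` says that the first two moments of `linStat g` under `μ` are given by
the Fourier coefficients of `g` in the way they are for Haar measure. The second moment is written
with the weights `N - min |k| N`, supported on `|k| < N`, so that the sum is finite and passes to
pointwise limits of bounded sequences. -/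
structure HasFourierMoments (μ : Measure (unitaryGroup (Fin N) ℂ))
    (g : AddCircle (2 * π) → ℂ) : Prop where
  stronglyMeasurable : StronglyMeasurable g
  stronglyMeasurable_linStat : StronglyMeasurable (linStat (N := N) g)
  integral_linStat : ∫ U, linStat g U ∂μ = N * fourierCoeff g 0
  integral_norm_sq_linStat : ∫ U, ‖linStat g U‖ ^ 2 ∂μ =
    N ^ 2 * ‖fourierCoeff g 0‖ ^ 2 + N * ∫ x, ‖g x‖ ^ 2 ∂haarAddCircle -
      ∑ k ∈ Finset.Ioo (-N : ℤ) N, (N - (min k.natAbs N : ℕ)) * ‖fourierCoeff g k‖ ^ 2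

lemma HasFourierMoments.of_tendsto [IsFiniteMeasure μ] {g : ℕ → AddCircle (2 * π) → ℂ}
    {g' : AddCircle (2 * π) → ℂ} {C : ℝ} (h : ∀ i, HasFourierMoments μ (g i))
    (hC : ∀ i x, ‖g i x‖ ≤ C) (hlim : ∀ x, Tendsto (g · x) atTop (nhds (g' x))) :
    HasFourierMoments μ g' := by
  have hmeas := fun i => (h i).stronglyMeasurable
  have hmeas' := fun i => (h i).stronglyMeasurable_linStat
  have hlim' := tendsto_linStat (N := N) hlim
  have hcoeff :=
    tendsto_fourierCoeff_of_bounded (fun i => (hmeas i).aestronglyMeasurable) hC hlim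
  refine ⟨stronglyMeasurable_of_tendsto atTop hmeas (tendsto_pi_nhds.mpr hlim),
    stronglyMeasurable_of_tendsto atTop hmeas' (tendsto_pi_nhds.mpr hlim'), ?_, ?_⟩
  · refine tendsto_nhds_unique (tendsto_integral_of_dominated_convergence (fun _ => N * C)
      (fun i => (hmeas' i).aestronglyMeasurable) (integrable_const _)
      (fun i => .of_forall (norm_linStat_le (hC i))) (.of_forall hlim')) ?_
    simp_rw [(h _).integral_linStat]
    exact (hcoeff 0).const_mul _
  · refine tendsto_nhds_unique (tendsto_integral_norm_sq_of_bounded hmeas'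
      (fun i => norm_linStat_le (hC i)) hlim') ?_
    simp_rw [(h _).integral_norm_sq_linStat]
    exact ((((hcoeff 0).norm.pow 2).const_mul _).add
      ((tendsto_integral_norm_sq_of_bounded hmeas hC hlim).const_mul _)).sub
      (tendsto_finsetSum _ fun k _ => ((hcoeff k).norm.pow 2).const_mul _)

lemma HasFourierMoments.trigPolynomial [NeZero N] [IsProbabilityMeasure μ]
    [μ.IsMulLeftInvariant] (a : ℤ →₀ ℂ) :
    HasFourierMoments μ (∑ k ∈ a.support, a k • ⇑(fourier (T := 2 * π) k)) := by
  have hlin : linStat (∑ k ∈ a.support, a k • ⇑(fourier (T := 2 * π) k)) =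
      fun U : unitaryGroup (Fin N) ℂ => ∑ k ∈ a.support, a k * (U ^ k).1.trace := by
    ext U
    simp only [linStat_sum_smul, linStat_fourier]
  refine ⟨Finset.stronglyMeasurable_sum _ fun k _ =>
    ((map_continuous (fourier k)).const_smul _).stronglyMeasurable, ?_, ?_, ?_⟩
  · rw [hlin]
    exact Continuous.stronglyMeasurable (by fun_prop)
  · rw [hlin, integral_finsetSum _ fun k _ => integrable_of_continuous (by fun_prop),
      fourierCoeff_sum_smul_fourier]
    simp_rw [integral_const_mul]
    rw [Finset.sum_eq_single 0 (fun k _ hk => by rw [integral_trace_zpow hk, mul_zero])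
      fun h0 => by simp [Finsupp.notMem_support_iff.mp h0]]
    simp [mul_comm]
  · have hint (k l : ℤ) : Integrable
        (fun U : unitaryGroup (Fin N) ℂ => starRingEnd ℂ (U ^ k).1.trace * (U ^ l).1.trace) μ :=
      integrable_of_continuous (by fun_prop)
    simp_rw [hlin, integral_norm_sq_sum_smul_fourier, fourierCoeff_sum_smul_fourier,
      integral_norm_sq_sum_mul_of_orthogonal hint fun _ _ => integral_conj_trace_zpow_mul_of_ne,
      integral_norm_sq_trace_zpow, Fintype.card_fin]
    have hzero : ∑ k ∈ a.support, ‖a k‖ ^ 2 * (if k = 0 then (N : ℝ) ^ 2 else 0) =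
        N ^ 2 * ‖a 0‖ ^ 2 := by
      by_cases h0 : a 0 = 0 <;> simp [h0, mul_comm]
    rw [Finset.sum_congr_of_eq_on_inter (s₁ := Finset.Ioo (-N : ℤ) N) (s₂ := a.support)
      (fun k _ hk => by simp [Finsupp.notMem_support_iff.mp hk])
      (fun k _ hk => by
        rw [Finset.mem_Ioo] at hk
        rw [min_eq_right (by omega), sub_self, zero_mul])
      fun _ _ _ => rfl]
    simp only [mul_add, sub_mul, Finset.sum_add_distrib, Finset.sum_sub_distrib, hzero,
      ← Finset.mul_sum]
    simp only [mul_comm (‖a _‖ ^ 2)]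
    ring

variable [IsProbabilityMeasure μ]

theorem HasFourierMoments.hasSum_variance {g : AddCircle (2 * π) → ℂ}
    (h : HasFourierMoments μ g) {C : ℝ} (hC : ∀ x, ‖g x‖ ≤ C) {X : unitaryGroup (Fin N) ℂ → ℝ}
    (hX : ∀ U, linStat g U = X U) :
    HasSum (fun k : ℤ => (min k.natAbs N : ℕ) * ‖fourierCoeff g k‖ ^ 2)
      (ProbabilityTheory.variance X μ) := by
  have hmean : ∫ U, X U ∂μ = N * fourierCoeff g 0 := by
    rw [← h.integral_linStat, ← integral_complex_ofReal]
    simp_rw [hX]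
  have hsq : ∫ U, X U ^ 2 ∂μ = ∫ U, ‖linStat g U‖ ^ 2 ∂μ := by simp [hX]
  have hmeas : AEStronglyMeasurable X μ := by
    convert (Complex.continuous_re.comp_stronglyMeasurable
      h.stronglyMeasurable_linStat).aestronglyMeasurable using 2
    simp [hX]
  have hmem : MemLp X 2 μ := .of_bound hmeas (N * C) <| .of_forall fun U => by
    simpa [hX] using norm_linStat_le hC U
  have hnorm := congrArg (‖·‖ ^ 2) hmean
  simp only [norm_mul, mul_pow, Complex.norm_real, norm_eq_abs, sq_abs,
    RCLike.norm_natCast] at hnorm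
  have hparseval := hasSum_sq_fourierCoeff_of_memLp
    (.of_bound h.stronglyMeasurable.aestronglyMeasurable C (.of_forall hC))
  have hfinite : HasSum (fun k : ℤ => (N - (min k.natAbs N : ℕ)) * ‖fourierCoeff g k‖ ^ 2)
      (∑ k ∈ Finset.Ioo (-N : ℤ) N, (N - (min k.natAbs N : ℕ)) * ‖fourierCoeff g k‖ ^ 2) :=
    hasSum_sum_of_ne_finset_zero fun k hk => by
      rw [Finset.mem_Ioo] at hk
      rw [min_eq_right (by omega), sub_self, zero_mul]
  have hvar : ProbabilityTheory.variance X μ = N * ∫ x, ‖g x‖ ^ 2 ∂haarAddCircle -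
      ∑ k ∈ Finset.Ioo (-N : ℤ) N, (N - (min k.natAbs N : ℕ)) * ‖fourierCoeff g k‖ ^ 2 := by
    rw [ProbabilityTheory.variance_eq_sub hmem, hnorm]
    simp only [Pi.pow_apply, hsq, h.integral_norm_sq_linStat]
    ring
  rw [hvar]
  refine ((hparseval.mul_left (N : ℝ)).sub hfinite).congr_fun fun k => ?_
  ring

variable [NeZero N] [μ.IsMulLeftInvariant]

lemma HasFourierMoments.of_continuous (g : C(AddCircle (2 * π), ℂ)) :
    HasFourierMoments μ g := by
  have hg : g ∈ closure (Submodule.span ℂ (Set.range (fourier (T := 2 * π))) : Set _) := by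
    rw [← Submodule.topologicalClosure_coe, span_fourier_closure_eq_top]
    trivial
  obtain ⟨u, hu, hlim⟩ := mem_closure_iff_seq_limit.mp hg
  obtain ⟨C, hC⟩ := (Metric.isBounded_range_of_tendsto u hlim).exists_norm_le
  refine .of_tendsto (g := fun i => u i) (fun i => ?_)
    (fun i x => ((u i).norm_coe_le_norm x).trans (hC _ ⟨i, rfl⟩))
    fun x => ((continuous_eval_const x).tendsto g).comp hlim
  obtain ⟨a, ha⟩ := Finsupp.mem_span_range_iff_exists_finsupp.mp (hu i)
  rw [← ha, Finsupp.sum, ContinuousMap.coe_sum]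
  exact .trigPolynomial a

lemma HasFourierMoments.indicator_of_isClosed {K : Set (AddCircle (2 * π))} (hK : IsClosed K) :
    HasFourierMoments μ (K.indicator 1) := by
  have hpos (i : ℕ) : 0 < 1 / ((i : ℝ) + 1) := by positivity
  have hlim := thickenedIndicator_tendsto_indicator_closure hpos
    tendsto_one_div_add_atTop_nhds_zero_nat K
  rw [hK.closure_eq, tendsto_pi_nhds] at hlim
  let u (i : ℕ) : C(AddCircle (2 * π), ℂ) :=
    ⟨fun x => (thickenedIndicator (hpos i) K x : ℝ), by fun_prop⟩
  refine .of_tendsto (g := fun i => u i) (C := 1) (fun i => .of_continuous (u i))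
    (fun i x => ?_) fun x => ?_
  · simpa [u] using thickenedIndicator_le_one (hpos i) K x
  · have hcoe : Continuous fun r : NNReal => ((r : ℝ) : ℂ) := by fun_prop
    have hind : K.indicator (1 : AddCircle (2 * π) → ℂ) x =
        ((K.indicator (fun _ => 1) x : NNReal) : ℝ) := by
      by_cases hx : x ∈ K <;> simp [hx]
    rw [hind]
    exact (hcoe.tendsto _).comp (hlim x)

end FourierMoments

section Arc

open AddCircle (haarAddCircle)
open Matrix (unitaryGroup)
attribute [local instance] fact_two_pi_pos

/-- The closed arc of the circle `ℝ / 2πℤ` swept counterclockwise from `0` to `θ`. -/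
def arc (θ : ℝ) : Set (AddCircle (2 * π)) := (fun t : ℝ => (t : AddCircle (2 * π))) '' Set.Icc 0 θ

lemma isClosed_arc (θ : ℝ) : IsClosed (arc θ) :=
  (isCompact_Icc.image (AddCircle.continuous_mk' _)).isClosed

variable {θ : ℝ}

lemma coe_mem_arc_iff (hθ : θ < 2 * π) {t : ℝ} (ht : t ∈ Set.Ico 0 (2 * π)) :
    (t : AddCircle (2 * π)) ∈ arc θ ↔ t ∈ Set.Icc 0 θ := by
  refine ⟨?_, fun h => ⟨t, h, rfl⟩⟩
  rintro ⟨s, hs, hst⟩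
  rwa [← (AddCircle.coe_eq_coe_iff_of_mem_Ico (p := 2 * π) (a := 0)
    ⟨hs.1, by linarith [hs.2]⟩ (by rwa [zero_add])).mp hst]

lemma linStat_indicator_arc (hθ : θ < 2 * π) {N : ℕ} (U : unitaryGroup (Fin N) ℂ) :
    linStat ((arc θ).indicator 1) U = (countFun N U θ : ℝ) := by
  classical
  have hind : ∀ t ∈ eigenAngles N U, (arc θ).indicator (1 : AddCircle (2 * π) → ℂ) t =
      if t ∈ Set.Icc 0 θ then 1 else 0 := fun t ht =>
    if_congr (coe_mem_arc_iff hθ (mem_Ico_of_mem_eigenAngles ht)) rfl rfl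
  rw [linStat, Multiset.map_congr rfl hind, countFun, countAngles]
  induction eigenAngles N U using Multiset.induction_on with
  | empty => simp
  | cons t s ih =>
    rw [Multiset.map_cons, Multiset.sum_cons, ih]
    by_cases ht : t ∈ Set.Icc 0 θ
    · simp only [ht, Multiset.filter_cons_of_pos, if_true, Multiset.card_cons]
      push_cast
      ring
    · simp only [ht, Multiset.filter_cons_of_neg, if_false, zero_add, not_false_eq_true]

lemma norm_exp_I_mul_sub_one_sq (x : ℝ) :
    ‖Complex.exp (Complex.I * x) - 1‖ ^ 2 = 2 * (1 - cos x) := by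
  rw [Complex.norm_exp_I_mul_ofReal_sub_one, norm_mul, mul_pow, norm_eq_abs (sin _), sq_abs,
    sin_sq_eq_half_sub, mul_div_cancel₀ x two_ne_zero]
  norm_num
  ring

lemma fourierCoeff_indicator_arc (hθ₀ : 0 ≤ θ) (hθ : θ < 2 * π) (k : ℤ) :
    fourierCoeff ((arc θ).indicator (1 : AddCircle (2 * π) → ℂ)) k =
      (1 / (2 * π) : ℝ) • ∫ t in (0 : ℝ)..θ, Complex.exp (-k * Complex.I * t) := by
  rw [fourierCoeff_eq_intervalIntegral _ _ 0, zero_add,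
    ← intervalIntegral.integral_indicator (a₂ := θ) ⟨hθ₀, hθ.le⟩]
  congr 1
  refine intervalIntegral.integral_congr_Ioo_of_le two_pi_pos.le fun t ht => ?_
  have harc := coe_mem_arc_iff hθ (Set.Ioo_subset_Ico_self ht)
  have hexp : fourier (-k) (t : AddCircle (2 * π)) = Complex.exp (-k * Complex.I * t) := by
    rw [fourier_coe_apply]
    congr 1
    push_cast
    field_simp
  by_cases htθ : t ≤ θ
  · rw [hexp, Set.indicator_of_mem (harc.mpr ⟨ht.1.le, htθ⟩),
      Set.indicator_of_mem (s := {x | x ≤ θ}) htθ, Pi.one_apply, smul_eq_mul, mul_one]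
  · rw [Set.indicator_of_notMem (mt harc.mp fun h => htθ h.2),
      Set.indicator_of_notMem (s := {x | x ≤ θ}) htθ, smul_zero]

lemma norm_fourierCoeff_indicator_arc_sq (hθ₀ : 0 ≤ θ) (hθ : θ < 2 * π) {k : ℤ} (hk : k ≠ 0) :
    ‖fourierCoeff ((arc θ).indicator (1 : AddCircle (2 * π) → ℂ)) k‖ ^ 2 =
      (1 - cos (k * θ)) / (2 * π ^ 2 * k ^ 2) := by
  have hk' : (k : ℂ) ≠ 0 := Int.cast_ne_zero.mpr hk
  have harg : -k * Complex.I * θ = Complex.I * (-(k * θ) : ℝ) := by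
    push_cast
    ring
  rw [fourierCoeff_indicator_arc hθ₀ hθ, integral_exp_mul_complex (by simp [hk']), harg, norm_smul,
    norm_div, norm_div (_ - _), mul_pow, div_pow, div_pow, Complex.ofReal_zero, mul_zero,
    Complex.exp_zero, norm_exp_I_mul_sub_one_sq, cos_neg]
  simp only [norm_mul, norm_neg, Complex.norm_I, Complex.norm_intCast, norm_eq_abs,
    mul_one, mul_pow, sq_abs]
  field_simp

theorem hasSum_variance_countFun {N : ℕ} [NeZero N] {μ : Measure (unitaryGroup (Fin N) ℂ)}
    [IsProbabilityMeasure μ] [μ.IsMulLeftInvariant] (hθ₀ : 0 ≤ θ) (hθ : θ < 2 * π) :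
    HasSum (fun k : ℕ => (min k N : ℕ) * (1 - cos (k * θ)) / k ^ 2)
      (π ^ 2 * ProbabilityTheory.variance (fun U => (countFun N U θ : ℝ)) μ) := by
  have h := ((HasFourierMoments.indicator_of_isClosed (μ := μ) (isClosed_arc θ)).hasSum_variance
    (C := 1) (fun x => ?_) (linStat_indicator_arc hθ)).nat_add_neg.mul_left (π ^ 2)
  · simp only [Int.natAbs_neg, Int.natAbs_natCast, Int.natAbs_zero, zero_min, Nat.cast_zero,
      zero_mul, add_zero] at h
    refine h.congr_fun fun k => ?_
    rcases eq_or_ne k 0 with rfl | hk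
    · simp
    rw [norm_fourierCoeff_indicator_arc_sq hθ₀ hθ (Int.natCast_ne_zero.mpr hk),
      norm_fourierCoeff_indicator_arc_sq hθ₀ hθ (neg_ne_zero.mpr (Int.natCast_ne_zero.mpr hk))]
    push_cast
    rw [neg_mul, cos_neg]
    field_simp
    ring
  · by_cases hx : x ∈ arc θ <;> simp [hx]

end Arc

section SeriesBounds

open Finset (Ioc Ico)

lemma sum_Ioc_inv_eq_harmonic_sub {m n : ℕ} (hmn : m ≤ n) :
    ∑ k ∈ Ioc m n, (k : ℝ)⁻¹ = harmonic n - harmonic m := by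
  have hsum (l : ℕ) : (harmonic l : ℝ) = ∑ k ∈ Ioc 0 l, (k : ℝ)⁻¹ := by
    rw [harmonic_eq_sum_Icc, ← Finset.Icc_add_one_left_eq_Ioc]
    push_cast
    rfl
  rw [hsum, hsum, ← Finset.sum_Ioc_consecutive _ m.zero_le hmn, add_sub_cancel_left]

lemma sum_Ioc_inv_le_log_div {m n : ℕ} (hm : m ≠ 0) (hmn : m ≤ n) :
    ∑ k ∈ Ioc m n, (k : ℝ)⁻¹ ≤ log (n / m) := by
  have hn : n ≠ 0 := by lia
  have h := strictAnti_eulerMascheroniSeq'.antitone hmn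
  rw [eulerMascheroniSeq', eulerMascheroniSeq', if_neg hm, if_neg hn] at h
  rw [sum_Ioc_inv_eq_harmonic_sub hmn,
    log_div (Nat.cast_ne_zero.mpr hn) (Nat.cast_ne_zero.mpr hm)]
  linarith

lemma log_div_le_sum_Ioc_inv {m n : ℕ} (hmn : m ≤ n) :
    log ((n + 1) / (m + 1)) ≤ ∑ k ∈ Ioc m n, (k : ℝ)⁻¹ := by
  have h := strictMono_eulerMascheroniSeq.monotone hmn
  rw [eulerMascheroniSeq, eulerMascheroniSeq] at h
  rw [sum_Ioc_inv_eq_harmonic_sub hmn,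
    log_div (Nat.cast_add_one_ne_zero n) (Nat.cast_add_one_ne_zero m)]
  linarith

lemma sum_Ioc_zero_cast (n : ℕ) : ∑ k ∈ Ioc 0 n, (k : ℝ) = n * (n + 1) / 2 := by
  induction n with
  | zero => simp
  | succ n ih =>
    rw [Finset.sum_Ioc_succ_top n.zero_le, ih]
    push_cast
    ring

lemma sum_Ico_mul_sub_le {a s : ℕ → ℝ} {C : ℝ} (ha : Antitone a) (ha₀ : ∀ k, 0 ≤ a k)
    (hs : ∀ k, s k ≤ C) {m n : ℕ} (hmn : m ≤ n) :
    ∑ k ∈ Ico m n, a k * (s (k + 1) - s k) ≤ a m * (C - s m) := by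
  -- The boundary term of the summation by parts is what makes the induction go through.
  suffices h : ∑ k ∈ Ico m n, a k * (s (k + 1) - s k) ≤ a m * (C - s m) - a n * (C - s n) from
    h.trans (sub_le_self _ (mul_nonneg (ha₀ n) (sub_nonneg.mpr (hs n))))
  induction n, hmn using Nat.le_induction with
  | base => simp
  | succ n hmn ih =>
    rw [Finset.sum_Ico_succ_top hmn]
    have hstep := mul_le_mul_of_nonneg_right (ha n.le_succ) (sub_nonneg.mpr (hs (n + 1)))
    simp only [Nat.succ_eq_add_one] at hstep
    linarith

lemma two_mul_sin_half_mul_cos (x θ : ℝ) :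
    2 * sin (θ / 2) * cos (x * θ) = sin ((x + 1 / 2) * θ) - sin ((x - 1 / 2) * θ) := by
  rw [show (x + 1 / 2) * θ = x * θ + θ / 2 by ring, show (x - 1 / 2) * θ = x * θ - θ / 2 by ring,
    sin_add, sin_sub]
  ring

lemma sum_Ioc_cos_div_le {θ : ℝ} (hθ : 0 < sin (θ / 2)) {m n : ℕ} (hmn : m ≤ n) :
    ∑ k ∈ Ioc m n, cos (k * θ) / k ≤ 1 / ((m + 1) * sin (θ / 2)) := by
  have hanti : Antitone fun k : ℕ => ((k : ℝ) + 1)⁻¹ := fun i j hij => by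
    dsimp only
    gcongr
  have habel := sum_Ico_mul_sub_le (s := fun k => sin ((k + 1 / 2) * θ)) hanti
    (fun k => by positivity) (fun k => sin_le_one _) hmn
  have hcos (k : ℕ) : cos ((k + 1 : ℕ) * θ) / (k + 1 : ℕ) = ((k : ℝ) + 1)⁻¹ *
      (sin (((k + 1 : ℕ) + 1 / 2) * θ) - sin ((k + 1 / 2) * θ)) / (2 * sin (θ / 2)) := by
    have h := two_mul_sin_half_mul_cos (k + 1 : ℕ) θ
    rw [show ((k + 1 : ℕ) - 1 / 2 : ℝ) = k + 1 / 2 by push_cast; ring] at h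
    rw [← h]
    push_cast
    field_simp
  rw [← Finset.Ico_add_one_add_one_eq_Ioc, ← Finset.sum_Ico_add']
  simp only [hcos]
  rw [← Finset.sum_div, div_le_iff₀ (by positivity)]
  calc _ ≤ _ := habel
    _ ≤ ((m : ℝ) + 1)⁻¹ * 2 := by
      gcongr
      linarith [neg_one_le_sin ((m + 1 / 2) * θ)]
    _ = _ := by field_simp

variable {θ : ℝ}

lemma sum_Ioc_one_sub_cos_div_le (θ : ℝ) (n : ℕ) :
    ∑ k ∈ Ioc 0 n, (1 - cos (k * θ)) / k ≤ θ ^ 2 * (n * (n + 1)) / 4 :=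
  calc ∑ k ∈ Ioc 0 n, (1 - cos (k * θ)) / k
    _ ≤ ∑ k ∈ Ioc 0 n, θ ^ 2 / 2 * k := Finset.sum_le_sum fun k hk => by
      have hk : (0 : ℝ) < k := Nat.cast_pos.mpr (Finset.mem_Ioc.mp hk).1
      rw [div_le_iff₀ hk]
      linarith [one_sub_sq_div_two_le_cos (x := k * θ)]
    _ = θ ^ 2 * (n * (n + 1)) / 4 := by
      rw [← Finset.mul_sum, sum_Ioc_zero_cast]
      ring

lemma le_sum_Ioc_one_sub_cos_div (hθ : 0 ≤ θ) {n : ℕ} (hn : n * θ ≤ π) :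
    θ ^ 2 * (n * (n + 1)) / π ^ 2 ≤ ∑ k ∈ Ioc 0 n, (1 - cos (k * θ)) / k :=
  calc θ ^ 2 * (n * (n + 1)) / π ^ 2
    _ = ∑ k ∈ Ioc 0 n, 2 / π ^ 2 * θ ^ 2 * k := by
      rw [← Finset.mul_sum, sum_Ioc_zero_cast]
      ring
    _ ≤ ∑ k ∈ Ioc 0 n, (1 - cos (k * θ)) / k := Finset.sum_le_sum fun k hk => by
      obtain ⟨hk₀, hkn⟩ := Finset.mem_Ioc.mp hk
      have habs : |k * θ| ≤ π := by
        rw [abs_of_nonneg (by positivity)]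
        exact le_trans (by gcongr) hn
      rw [le_div_iff₀ (Nat.cast_pos.mpr hk₀)]
      linarith [cos_le_one_sub_mul_cos_sq habs]

lemma sum_Ioc_one_sub_cos_div_le_two_mul_log (θ : ℝ) {m n : ℕ} (hm : m ≠ 0) (hmn : m ≤ n) :
    ∑ k ∈ Ioc m n, (1 - cos (k * θ)) / k ≤ 2 * log (n / m) :=
  calc ∑ k ∈ Ioc m n, (1 - cos (k * θ)) / k
    _ ≤ ∑ k ∈ Ioc m n, 2 * (k : ℝ)⁻¹ := Finset.sum_le_sum fun k _ => by
      rw [div_eq_mul_inv]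
      gcongr
      linarith [neg_one_le_cos (k * θ)]
    _ ≤ 2 * log (n / m) := by
      rw [← Finset.mul_sum]
      gcongr
      exact sum_Ioc_inv_le_log_div hm hmn

lemma sum_Ioc_mul_one_sub_cos_div_sq_le (θ : ℝ) {N n : ℕ} (hN : N ≠ 0) (hNn : N ≤ n) :
    ∑ k ∈ Ioc N n, N * (1 - cos (k * θ)) / k ^ 2 ≤ 2 :=
  calc ∑ k ∈ Ioc N n, N * (1 - cos (k * θ)) / k ^ 2
    _ ≤ ∑ k ∈ Ioc N n, N * 2 * ((k : ℝ) ^ 2)⁻¹ := Finset.sum_le_sum fun k _ => by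
      rw [div_eq_mul_inv]
      gcongr
      linarith [neg_one_le_cos (k * θ)]
    _ ≤ N * 2 * ((N : ℝ)⁻¹ - (n : ℝ)⁻¹) := by
      rw [← Finset.mul_sum]
      gcongr
      exact sum_Ioc_inv_sq_le_sub hN hNn
    _ ≤ N * 2 * (N : ℝ)⁻¹ := by
      gcongr
      exact sub_le_self _ (by positivity)
    _ = 2 := by field_simp

lemma log_div_sub_one_le_sum_Ioc_one_sub_cos_div (hθ₀ : 0 < θ) (hθ : θ ≤ π) {m n : ℕ}
    (hm : π ≤ (m + 1) * θ) (hmn : m ≤ n) :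
    log ((n + 1) / (m + 1)) - 1 ≤ ∑ k ∈ Ioc m n, (1 - cos (k * θ)) / k := by
  have hjordan : θ / π ≤ sin (θ / 2) := by
    have h := mul_le_sin (x := θ / 2) (by positivity) (by linarith)
    rwa [show 2 / π * (θ / 2) = θ / π by ring] at h
  have hsin : 0 < sin (θ / 2) := (div_pos hθ₀ pi_pos).trans_le hjordan
  have hosc : ∑ k ∈ Ioc m n, cos (k * θ) / k ≤ 1 := by
    refine (sum_Ioc_cos_div_le hsin hmn).trans ((div_le_one (by positivity)).mpr ?_)
    calc (1 : ℝ) ≤ (m + 1) * (θ / π) := by rwa [← mul_div_assoc, one_le_div pi_pos]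
      _ ≤ (m + 1) * sin (θ / 2) := by gcongr
  simp only [sub_div, Finset.sum_sub_distrib, one_div (Nat.cast _)]
  exact sub_le_sub (log_div_le_sum_Ioc_inv hmn) hosc

lemma sum_Ioc_min_mul_one_sub_cos_div_sq (θ : ℝ) {N n : ℕ} (hn : n ≤ N) :
    ∑ k ∈ Ioc 0 n, (min k N : ℕ) * (1 - cos (k * θ)) / k ^ 2 =
      ∑ k ∈ Ioc 0 n, (1 - cos (k * θ)) / k := by
  refine Finset.sum_congr rfl fun k hk => ?_
  obtain ⟨hk₀, hkn⟩ := Finset.mem_Ioc.mp hk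
  rw [min_eq_left (hkn.trans hn)]
  field_simp

-- Below the frequency `1 / θ` the terms are controlled by `1 - cos x ≤ x ^ 2 / 2`, between
-- `1 / θ` and `N` by the harmonic series, and beyond `N` by the tail of `∑ 1 / k ^ 2`.
lemma sum_Ioc_min_mul_one_sub_cos_div_sq_le (hθ₀ : 0 < θ) (hθ : θ ≤ 2) {N n : ℕ} (hN : 1 < N * θ)
    (hNn : N ≤ n) :
    ∑ k ∈ Ioc 0 n, (min k N : ℕ) * (1 - cos (k * θ)) / k ^ 2 ≤ 19 / 4 + 2 * log (N * θ) := by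
  set K := ⌊1 / θ⌋₊
  have hKθ : K * θ ≤ 1 := (le_div_iff₀ hθ₀).mp (Nat.floor_le (by positivity))
  have hKθ' : 1 < (K + 1) * θ := (div_lt_iff₀ hθ₀).mp (Nat.lt_floor_add_one _)
  have hKN : K + 1 ≤ N := Nat.floor_lt (by positivity) |>.mpr ((div_lt_iff₀ hθ₀).mpr hN)
  have hlow : ∑ k ∈ Ioc 0 K, (1 - cos (k * θ)) / k ≤ 3 / 4 := by
    have hsq : (K * θ) * (K * θ) ≤ 1 * 1 := by gcongr
    have hmul : (K * θ) * θ ≤ 1 * 2 := by gcongr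
    linarith [sum_Ioc_one_sub_cos_div_le θ K]
  have hnext : (1 - cos ((K + 1 : ℕ) * θ)) / (K + 1 : ℕ) ≤ 2 := by
    refine (div_le_self (sub_nonneg.mpr (cos_le_one _)) (by simp)).trans ?_
    linarith [neg_one_le_cos ((K + 1 : ℕ) * θ)]
  have hmid : ∑ k ∈ Ioc (K + 1) N, (1 - cos (k * θ)) / k ≤ 2 * log (N * θ) := by
    refine (sum_Ioc_one_sub_cos_div_le_two_mul_log θ K.succ_ne_zero hKN).trans ?_
    gcongr
    · exact div_pos (Nat.cast_pos.mpr (by lia)) (by positivity)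
    · rw [div_le_iff₀ (by positivity)]
      push_cast
      linarith [mul_le_mul_of_nonneg_left hKθ'.le N.cast_nonneg]
  have hhead : ∑ k ∈ Ioc 0 N, (min k N : ℕ) * (1 - cos (k * θ)) / k ^ 2 =
      ∑ k ∈ Ioc 0 N, (1 - cos (k * θ)) / k := sum_Ioc_min_mul_one_sub_cos_div_sq θ le_rfl
  have htail : ∑ k ∈ Ioc N n, (min k N : ℕ) * (1 - cos (k * θ)) / k ^ 2 ≤ 2 := by
    refine le_trans (Finset.sum_congr rfl fun k hk => ?_).le
      (sum_Ioc_mul_one_sub_cos_div_sq_le θ (by lia : N ≠ 0) hNn)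
    rw [min_eq_right (Finset.mem_Ioc.mp hk).1.le]
  rw [← Finset.sum_Ioc_consecutive _ N.zero_le hNn, hhead,
    ← Finset.sum_Ioc_consecutive _ (K + 1).zero_le hKN, Finset.sum_Ioc_succ_top K.zero_le]
  linarith

lemma two_thirds_le_sum_Ioc_one_sub_cos_div (hθ₀ : 0 < θ) (hθ : θ ≤ π / 2) :
    2 / 3 ≤ ∑ k ∈ Ioc 0 ⌊π / θ⌋₊, (1 - cos (k * θ)) / k := by
  set K := ⌊π / θ⌋₊
  have hKθ : K * θ ≤ π := (le_div_iff₀ hθ₀).mp (Nat.floor_le (by positivity))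
  have hKθ' : π ≤ (K + 1) * θ := ((div_lt_iff₀ hθ₀).mp (Nat.lt_floor_add_one _)).le
  have hK : (2 : ℝ) ≤ K := by
    have h : 2 ≤ K := Nat.le_floor ((le_div_iff₀ hθ₀).mpr (by push_cast; linarith))
    exact_mod_cast h
  refine le_trans ?_ (le_sum_Ioc_one_sub_cos_div hθ₀.le hKθ)
  rw [le_div_iff₀ (by positivity)]
  calc 2 / 3 * π ^ 2
    _ ≤ 2 / 3 * ((K + 1) * θ) ^ 2 := by gcongr
    _ = θ ^ 2 * ((2 / 3 * (K + 1)) * (K + 1)) := by ring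
    _ ≤ θ ^ 2 * (K * (K + 1)) := by
      gcongr
      linarith

-- The cutoff frequency `π / θ` is the first minimum of `cos (k * θ)`.
lemma log_div_three_le_sum_Ioc_one_sub_cos_div (hθ₀ : 0 < θ) (hθ : θ ≤ π / 2) {N : ℕ}
    (hN : π ≤ N * θ) :
    log (2 * N * θ / (3 * π)) / 3 ≤ ∑ k ∈ Ioc 0 N, (1 - cos (k * θ)) / k := by
  set K := ⌊π / θ⌋₊
  have hKθ : K * θ ≤ π := (le_div_iff₀ hθ₀).mp (Nat.floor_le (by positivity))
  have hKθ' : π ≤ (K + 1) * θ := ((div_lt_iff₀ hθ₀).mp (Nat.lt_floor_add_one _)).le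
  have hKN : K ≤ N := Nat.floor_le_of_le ((div_le_iff₀ hθ₀).mpr hN)
  have hlog : log (2 * N * θ / (3 * π)) ≤ log ((N + 1) / (K + 1)) := by
    have hNθ : 0 < N * θ := pi_pos.trans_le hN
    refine log_le_log (by rw [mul_assoc]; positivity) ?_
    rw [div_le_div_iff₀ (by positivity) (by positivity)]
    calc 2 * N * θ * (K + 1) = N * (2 * (K * θ + θ)) := by ring
      _ ≤ (N + 1) * (3 * π) := by
        have hN' : (N : ℝ) ≤ N + 1 := by linarith
        exact mul_le_mul hN' (by linarith) (by positivity) (by positivity)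
  have hlow := two_thirds_le_sum_Ioc_one_sub_cos_div hθ₀ hθ
  have hhigh := log_div_sub_one_le_sum_Ioc_one_sub_cos_div hθ₀ (by linarith) hKθ' hKN
  have hhigh₀ : 0 ≤ ∑ k ∈ Ioc K N, (1 - cos (k * θ)) / k := Finset.sum_nonneg fun k _ =>
    div_nonneg (sub_nonneg.mpr (cos_le_one _)) k.cast_nonneg
  rw [← Finset.sum_Ioc_consecutive _ K.zero_le hKN]
  rcases le_total (log (2 * N * θ / (3 * π))) 2 <;> linarith

end SeriesBounds

section Variance

open Matrix (unitaryGroup)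

variable {N : ℕ} [NeZero N] {μ : Measure (unitaryGroup (Fin N) ℂ)} [IsProbabilityMeasure μ]
  [μ.IsMulLeftInvariant] {θ : ℝ}

theorem pi_sq_mul_variance_countFun_le (hθ₀ : 0 < θ) (hθ : θ ≤ 2) (hN : 1 < N * θ) :
    π ^ 2 * ProbabilityTheory.variance (fun U => (countFun N U θ : ℝ)) μ ≤
      19 / 4 + 2 * log (N * θ) := by
  have h := (hasSum_variance_countFun (μ := μ) hθ₀.le (by linarith [pi_gt_three])).tendsto_sum_nat
  refine le_of_tendsto (h.comp (tendsto_add_atTop_nat 1)) ?_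
  filter_upwards [eventually_ge_atTop N] with n hn
  refine le_trans (le_of_eq ?_) (sum_Ioc_min_mul_one_sub_cos_div_sq_le hθ₀ hθ hN hn)
  rw [Function.comp_apply, Finset.range_eq_Ico, Finset.sum_eq_sum_Ico_succ_bot n.succ_pos,
    Nat.succ_eq_add_one, Finset.Ico_add_one_add_one_eq_Ioc]
  simp

theorem log_div_three_le_pi_sq_mul_variance_countFun (hθ₀ : 0 < θ) (hθ : θ ≤ π / 2)
    (hN : π ≤ N * θ) :
    log (2 * N * θ / (3 * π)) / 3 ≤
      π ^ 2 * ProbabilityTheory.variance (fun U => (countFun N U θ : ℝ)) μ := by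
  refine (log_div_three_le_sum_Ioc_one_sub_cos_div hθ₀ hθ hN).trans ?_
  rw [← sum_Ioc_min_mul_one_sub_cos_div_sq θ le_rfl]
  refine sum_le_hasSum _ (fun k _ => ?_)
    (hasSum_variance_countFun hθ₀.le (by linarith [pi_pos]))
  have := sub_nonneg.mpr (cos_le_one (k * θ))
  positivity

end Variance

end UnitaryCounting

/-- For a Haar-distributed `N × N` unitary matrix and `3π/(2N) ≤ θ ≤ π/2`,
`(1/(3π²)) log(2Nθ/(3π)) ≤ Var 𝒩_θ ≤ (1/2) log(e^{3/2} N θ)`. -/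
theorem variance_counting_function_bounds
    (N : ℕ) (hN : 1 ≤ N) (ℙ : Measure (Matrix.unitaryGroup (Fin N) ℂ))
    (hprob : IsProbabilityMeasure ℙ) (hhaar : ℙ.IsHaarMeasure)
    (θ : ℝ) (hθ₁ : 3 * π / (2 * N) ≤ θ) (hθ₂ : θ ≤ π / 2) :
    (1 / (3 * π ^ 2)) * Real.log (2 * N * θ / (3 * π)) ≤
        ProbabilityTheory.variance (fun U => (countFun N U θ : ℝ)) ℙ ∧
      ProbabilityTheory.variance (fun U => (countFun N U θ : ℝ)) ℙ ≤
        (1 / 2) * Real.log (Real.exp (3 / 2) * N * θ) := by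
  have : NeZero N := ⟨by lia⟩
  have hπ := pi_gt_three
  have hN₀ : (0 : ℝ) < N := Nat.cast_pos.mpr hN
  have hθ₀ : 0 < θ := lt_of_lt_of_le (by positivity) hθ₁
  have hNθ : 3 * π / 2 ≤ N * θ := by
    rw [div_le_iff₀ (by positivity)] at hθ₁
    linarith
  constructor
  · have hlower : _ ≤ π ^ 2 * ProbabilityTheory.variance _ ℙ :=
      UnitaryCounting.log_div_three_le_pi_sq_mul_variance_countFun hθ₀ hθ₂ (by linarith)
    rw [one_div_mul_eq_div, div_le_iff₀ (by positivity)]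
    linarith
  · have hupper : π ^ 2 * ProbabilityTheory.variance _ ℙ ≤ _ :=
      UnitaryCounting.pi_sq_mul_variance_countFun_le hθ₀ (by linarith [pi_le_four]) (by linarith)
    have hlog : 0 ≤ log (N * θ) := log_nonneg (by linarith)
    rw [mul_assoc, log_mul (exp_ne_zero _) (by positivity), log_exp]
    refine le_of_mul_le_mul_left (hupper.trans ?_) (by positivity : 0 < π ^ 2)
    calc 19 / 4 + 2 * log (N * θ) ≤ 3 ^ 2 * (1 / 2 * (3 / 2 + log (N * θ))) := by linarith
      _ ≤ π ^ 2 * (1 / 2 * (3 / 2 + log (N * θ))) := by gcongr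
end
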